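/- Let n ≥ 4 and let V ∈ L^∞(ℝⁿ) be real-valued with |V(x)| ≤ C₀⟨x⟩^{-δ} for all x ∈ ℝⁿ, for some constants C₀ > 0 and δ > (n+2)/2. Fix 0 ≤ s ≤ n/2 and a sufficiently small ε > 0; let m ≥ 0 be the largest integer ≤ s and set μ = s − m. Define, for λ > 0, the bounded operator ℛ_s^±(λ) = λ ⟨x⟩^{-1/2-s-ε} R^±(λ) ⟨x⟩^{-1/2-s-ε} on L²(ℝⁿ). Then λ ↦ ℛ_s^±(λ) is m times continuously differentiable on (0,+∞) in operator norm, its m-th derivative is Hölder continuous of order μ, and for every λ₀ > 0 there exists C > 0 such that ‖∂_λ^j ℛ_s^±(λ)‖_{L²→L²} ≤ C for all λ ≥ λ₀ and 0 ≤ j ≤ m, and ‖∂_λ^m ℛ_s^±(λ₂) − ∂_λ^m ℛ_s^±(λ₁)‖_{L²→L²} ≤ C |λ₂ − λ₁|^μ for all λ₂ > λ₁ ≥ λ₀. -/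

import Mathlib

/-!
Write `R₀(z) = (-Δ - z)⁻¹`, `R(z) = (-Δ + V - z)⁻¹`, and let `z = λ² ± ie` with `e > 0` small.
Since `∂_z R(z) = R(z)²`, the derivatives of `λ ⟨x⟩^{-a} R(λ² ± i0) ⟨x⟩^{-a}` are combinations of
terms `λ^r ⟨x⟩^{-a} R(λ² ± i0)^q ⟨x⟩^{-a}` with `r ≤ q`. It therefore suffices to bound the weighted
`q`-th power by `O(λ^{-q})`, and to prove its Hölder continuity, uniformly up to the real axis.

* Free resolvent. For `b > 1/2` a Morawetz multiplier `X·∇ + ½ div X`, with `X` a radial vector field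
  whose Jacobian dominates a multiple of `⟨x⟩^{-2b}`, gives
  `‖⟨x⟩^{-b} R₀(z) ⟨x⟩^{-b}‖ = O(λ^{-1})` (`free_base`). Because `[x·∇, R₀^j]` equals
  `2j (R₀^j + z R₀^{j+1})`, a power `R₀^{j+1}` can be traded for `R₀^j` and one dilation
  derivative, which costs one more factor `⟨x⟩` on each side; this yields
  `‖⟨x⟩^{-b-j} R₀(z)^{j+1} ⟨x⟩^{-b-j}‖ = O(λ^{-j-1})` (`free_pow`, `free_N`).
* Hölder continuity. Two consecutive powers give a bound and a Lipschitz estimate in weights that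
  differ by `⟨x⟩^{-1}`; decomposing into dyadic shells in `|x|` interpolates between them (`interp`,
  `free_holder`), with a small loss that `ε` absorbs.
* Perturbation. `R = R₀ - R V R₀ = R₀ - R₀ V R` (`Rv_left`, `Rv_right`). For large `λ` the term
  with `V` is absorbed (`high_energy`). At a fixed energy the existence of the limit in the
  hypothesis is a bound, first improved to the weight `⟨x⟩^{-b}` (`N_bootstrap`), then propagated to
  nearby energies by the Hölder continuity of `R₀` (`local_bound`), and compactness makes it uniform
  on `[λ₀, ∞)` (`good_base`). Powers of `R` reduce to powers of `R₀` by the same identities,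
  the decay of `V` being split between its two neighbours (`good_pow`).
* Limits. The Hölder estimates make `R^q` and its derivatives converge uniformly as `e → 0`
  (`BV.tendsto`, `BV.hasDerivAt`), and the bounds pass to the limit (`BV.regularity`).
-/

open MeasureTheory Filter Topology Real Set

noncomputable section

abbrev Euc (n : ℕ) := EuclideanSpace ℝ (Fin n)

abbrev L2 (n : ℕ) := Lp ℂ 2 (volume : Measure (Euc n))

/-- Japanese bracket `⟨x⟩ = (1+|x|²)^{1/2}`. -/
def jb {n : ℕ} (x : Euc n) : ℝ := Real.sqrt (1 + ‖x‖ ^ 2)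

/-- `⟨r⟩ = (1+r²)^{1/2}` for a real number `r`. -/
def jbR (r : ℝ) : ℝ := Real.sqrt (1 + r ^ 2)

/-- The Euclidean Laplacian of a function. -/
def lapl {n : ℕ} (f : Euc n → ℂ) (x : Euc n) : ℂ :=
  ∑ i : Fin n,
    iteratedFDeriv ℝ 2 f x ![EuclideanSpace.single i (1 : ℝ), EuclideanSpace.single i (1 : ℝ)]

/-- `T` is the (unique) self-adjoint realization of the Schrödinger operator `-Δ + V`
on `L²(ℝⁿ)`: `T` is self-adjoint and acts as `-Δ + V` on Schwartz functions. -/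
structure IsSchrodingerOp {n : ℕ} (V : Euc n → ℝ) (T : L2 n →ₗ.[ℂ] L2 n) : Prop where
  selfAdjoint : IsSelfAdjoint T
  eq_on_schwartz : ∀ f : SchwartzMap (Euc n) ℂ,
    ∃ u : T.domain, ((u : L2 n) : Euc n → ℂ) =ᵐ[volume] ⇑f ∧
      ((T u : L2 n) : Euc n → ℂ) =ᵐ[volume] fun x => -lapl (⇑f) x + (V x : ℂ) * f x

/-- `fc` is the Borel functional calculus of the self-adjoint operator `T`:
a bounded-pointwise-continuous algebra homomorphism on bounded Borel functions
whose value on `(· - z)⁻¹` is the resolvent `(T - z)⁻¹`. -/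
structure IsBorelFunctionalCalculus {n : ℕ} (T : L2 n →ₗ.[ℂ] L2 n)
    (fc : (ℝ → ℂ) → (L2 n →L[ℂ] L2 n)) : Prop where
  map_one : fc (fun _ => 1) = ContinuousLinearMap.id ℂ (L2 n)
  map_add : ∀ f g : ℝ → ℂ, Measurable f → Measurable g → (∃ M, ∀ x, ‖f x‖ ≤ M) →
    (∃ M, ∀ x, ‖g x‖ ≤ M) → fc (fun x => f x + g x) = fc f + fc g
  map_mul : ∀ f g : ℝ → ℂ, Measurable f → Measurable g → (∃ M, ∀ x, ‖f x‖ ≤ M) →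
    (∃ M, ∀ x, ‖g x‖ ≤ M) → fc (fun x => f x * g x) = (fc f).comp (fc g)
  norm_le : ∀ (f : ℝ → ℂ) (M : ℝ), Measurable f → (∀ x, ‖f x‖ ≤ M) → ‖fc f‖ ≤ M
  tendsto_of_ptwise : ∀ (F : ℕ → ℝ → ℂ) (f : ℝ → ℂ) (M : ℝ),
    (∀ k, Measurable (F k)) → Measurable f → (∀ k x, ‖F k x‖ ≤ M) →
    (∀ x, Tendsto (fun k => F k x) atTop (𝓝 (f x))) →
    ∀ u : L2 n, Tendsto (fun k => fc (F k) u) atTop (𝓝 (fc f u))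
  resolvent : ∀ z : ℂ, z.im ≠ 0 → ∀ u : L2 n,
    ∃ v : T.domain, (v : L2 n) = fc (fun x => ((x : ℂ) - z)⁻¹) u ∧
      T v = z • (v : L2 n) + u

/-- A real-valued function of class `C₀^∞((0,+∞))`. -/
def IsCutoff (ψ : ℝ → ℝ) : Prop :=
  ContDiff ℝ (⊤ : ℕ∞) ψ ∧ HasCompactSupport ψ ∧ tsupport ψ ⊆ Set.Ioi 0

/-- A real-valued `C^∞(ℝ)` function supported in `[a,+∞)` which equals `1` on `[2a,+∞)`. -/
def IsChi (a : ℝ) (χ : ℝ → ℝ) : Prop :=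
  ContDiff ℝ (⊤ : ℕ∞) χ ∧ Function.support χ ⊆ Set.Ici a ∧ ∀ x, 2 * a ≤ x → χ x = 1

section Proof

variable {n : ℕ}

/-! ### Schwartz functions and the free resolvent -/

/-- Complex Schwartz functions on `ℝⁿ`. -/
abbrev Sch (n : ℕ) := SchwartzMap (Euc n) ℂ

/-- The inclusion of the Schwartz space into `L²`. -/
def toL {n : ℕ} : Sch n →L[ℂ] L2 n := SchwartzMap.toLpCLM ℂ ℂ 2 volume

/-- Multiplication of Schwartz functions by a real function of temperate growth. -/
def mulS {n : ℕ} (φ : Euc n → ℝ) : Sch n →ₗ[ℂ] Sch n :=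
  (SchwartzMap.smulLeftCLM ℂ (fun x => (φ x : ℂ))).toLinearMap

/-- The `i`-th partial derivative of a Schwartz function. -/
def dS {n : ℕ} (i : Fin n) : Sch n →ₗ[ℂ] Sch n :=
  (LineDeriv.lineDerivOpCLM ℂ (Sch n) (EuclideanSpace.single i (1 : ℝ))).toLinearMap

/-- The positive Laplacian `-Δ` on Schwartz functions. -/
def HS {n : ℕ} : Sch n →ₗ[ℂ] Sch n := -∑ i, dS i * dS i


lemma toL_ae (f : Sch n) : (toL f : Euc n → ℂ) =ᵐ[volume] f := SchwartzMap.coeFn_toLp f 2 volume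

lemma inner_toL (f g : Sch n) : inner ℂ (toL f) (toL g) = ∫ x, (starRingEnd ℂ) (f x) * g x := by
  have := SchwartzMap.inner_toL2_toL2_eq f g (volume : Measure (Euc n))
  rw [toL, SchwartzMap.toLpCLM_apply, SchwartzMap.toLpCLM_apply, this]
  simp [mul_comm]

lemma norm_toL_sq (f : Sch n) : ‖toL f‖ ^ 2 = ∫ x, ‖f x‖ ^ 2 := by
  have h := inner_self_eq_norm_sq_to_K (𝕜 := ℂ) (toL f)
  rw [inner_toL] at h
  have h2 : (∫ x, (starRingEnd ℂ) (f x) * f x) = ((∫ x, ‖f x‖ ^ 2 : ℝ) : ℂ) := by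
    rw [← integral_complex_ofReal]
    congr 1; ext x
    rw [mul_comm, Complex.mul_conj, Complex.normSq_eq_norm_sq]
  rw [h2] at h
  exact Complex.ofReal_injective (by rw [h]; simp)

lemma integrable_normSq (f : Sch n) : Integrable (fun x => ‖f x‖ ^ 2) :=
  (SchwartzMap.memLp f 2 volume).integrable_norm_pow (by norm_num)

lemma ofReal_temp {φ : Euc n → ℝ} (hφ : φ.HasTemperateGrowth) :
    (fun x => (φ x : ℂ)).HasTemperateGrowth := by fun_prop

lemma mulS_apply {φ : Euc n → ℝ} (hφ : φ.HasTemperateGrowth) (f : Sch n) (x : Euc n) :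
    mulS φ f x = φ x * f x := by
  simp [mulS, ofReal_temp hφ]

lemma dS_apply (i : Fin n) (f : Sch n) (x : Euc n) :
    dS i f x = fderiv ℝ f x (EuclideanSpace.single i 1) := by
  simp [dS, SchwartzMap.lineDerivOp_apply_eq_fderiv]

lemma mulS_mulS {φ ψ χ : Euc n → ℝ} (hφ : φ.HasTemperateGrowth) (hψ : ψ.HasTemperateGrowth)
    (h : ∀ x, φ x * ψ x = χ x) (f : Sch n) : mulS φ (mulS ψ f) = mulS χ f := by
  have hχ : χ.HasTemperateGrowth := by
    have : χ = φ * ψ := by ext x; simp [h]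
    rw [this]; exact hφ.mul hψ
  ext x
  rw [mulS_apply hφ, mulS_apply hψ, mulS_apply hχ, ← h]
  push_cast; ring

lemma mulS_one (f : Sch n) : mulS (fun _ => 1) f = f := by
  ext x
  rw [mulS_apply (by fun_prop)]; simp

lemma norm_mulS_le {φ ψ : Euc n → ℝ} (hφ : φ.HasTemperateGrowth) (hψ : ψ.HasTemperateGrowth)
    {C : ℝ} (h : ∀ x, |φ x| ≤ C * |ψ x|) (f : Sch n) :
    ‖toL (mulS φ f)‖ ≤ C * ‖toL (mulS ψ f)‖ := by
  refine Lp.norm_le_mul_norm_of_ae_le_mul ?_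
  filter_upwards [toL_ae (mulS φ f), toL_ae (mulS ψ f)] with x h1 h2
  rw [h1, h2, mulS_apply hφ, mulS_apply hψ, norm_mul, norm_mul, ← mul_assoc]
  gcongr
  simpa using h x

lemma norm_mulS_le' {φ : Euc n → ℝ} (hφ : φ.HasTemperateGrowth)
    {C : ℝ} (h : ∀ x, |φ x| ≤ C) (f : Sch n) :
    ‖toL (mulS φ f)‖ ≤ C * ‖toL f‖ := by
  have := norm_mulS_le hφ (ψ := fun _ => 1) (by fun_prop) (by simpa using h) f
  rwa [mulS_one] at this

lemma inner_mulS {φ : Euc n → ℝ} (hφ : φ.HasTemperateGrowth) (f g : Sch n) :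
    inner ℂ (toL (mulS φ f)) (toL g) = inner ℂ (toL f) (toL (mulS φ g)) := by
  rw [inner_toL, inner_toL]
  congr 1; ext x
  rw [mulS_apply hφ, mulS_apply hφ]; simp; ring

lemma inner_dS (i : Fin n) (f g : Sch n) :
    inner ℂ (toL (dS i f)) (toL g) = - inner ℂ (toL f) (toL (dS i g)) := by
  have h := SchwartzMap.integral_bilinear_lineDerivOp_right_eq_neg_left (μ := volume) f g
    ((ContinuousLinearMap.mul ℝ ℂ).comp (Complex.conjCLE : ℂ →L[ℝ] ℂ)) (EuclideanSpace.single i 1)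
  rw [inner_toL, inner_toL]
  simp only [ContinuousLinearMap.comp_apply, ContinuousLinearMap.mul_apply'] at h
  have h' := congrArg Neg.neg h
  rw [neg_neg] at h'
  exact h'.symm

lemma dS_mulS {φ φ' : Euc n → ℝ} (hφ : φ.HasTemperateGrowth) (hφ' : φ'.HasTemperateGrowth)
    (i : Fin n) (h : ∀ x, fderiv ℝ φ x (EuclideanSpace.single i 1) = φ' x) (f : Sch n) :
    dS i (mulS φ f) = mulS φ (dS i f) + mulS φ' f := by
  ext x
  have e : ((mulS φ f : Sch n) : Euc n → ℂ) = fun x => φ x • f x := by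
    ext y; rw [mulS_apply hφ]; simp
  rw [add_apply, dS_apply, mulS_apply hφ, mulS_apply hφ', dS_apply, e, ← h]
  rw [fderiv_fun_smul (hφ.1.differentiable (by simp) x) f.differentiableAt]
  simp

lemma dS_comm (i k : Fin n) (f : Sch n) : dS i (dS k f) = dS k (dS i f) := by
  ext x
  have e : ∀ l, ((dS l f : Sch n) : Euc n → ℂ) =
      fun x => fderiv ℝ f x (EuclideanSpace.single l 1) := by
    intro l; ext y; rw [dS_apply]
  rw [dS_apply, dS_apply, e, e]
  have hd : DifferentiableAt ℝ (fderiv ℝ f) x :=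
    ((f.smooth 2).fderiv_right (m := 1) (by norm_num)).differentiable (by norm_num) x
  rw [fderiv_clm_apply hd (by fun_prop), fderiv_clm_apply hd (by fun_prop)]
  simp only [fderiv_fun_const, add_apply, ContinuousLinearMap.comp_apply,
    ContinuousLinearMap.flip_apply, Pi.zero_apply, zero_apply, map_zero,
    zero_add]
  have hs : IsSymmSndFDerivAt ℝ f x := (f.smooth 2).contDiffAt.isSymmSndFDerivAt (by simp)
  exact hs.eq _ _

lemma HS_eq (f : Sch n) : HS f = -∑ i, dS i (dS i f) := by
  simp [HS]

lemma HS_apply (f : Sch n) (x : Euc n) : HS f x = -lapl f x := by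
  rw [HS_eq, lapl, neg_apply, sum_apply]
  congr 1
  refine Finset.sum_congr rfl fun i _ => ?_
  rw [← SchwartzMap.iteratedLineDerivOp_eq_iteratedFDeriv]
  rfl

lemma inner_HS (f g : Sch n) : inner ℂ (toL (HS f)) (toL g) =
    ∑ i, inner ℂ (toL (dS i f)) (toL (dS i g)) := by
  rw [HS_eq, map_neg, map_sum, inner_neg_left, sum_inner, ← Finset.sum_neg_distrib]
  refine Finset.sum_congr rfl fun i _ => ?_
  rw [inner_dS, neg_neg]

lemma inner_HS' (f g : Sch n) : inner ℂ (toL (HS f)) (toL g) = inner ℂ (toL f) (toL (HS g)) := by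
  rw [inner_HS, ← inner_conj_symm (toL f), inner_HS, map_sum]
  simp

lemma toL_injective : Function.Injective (toL : Sch n → L2 n) :=
  SchwartzMap.injective_toLp 2 volume

lemma toL_dense : DenseRange (toL : Sch n → L2 n) :=
  SchwartzMap.denseRange_toLpCLM (F := ℂ) (by norm_num)

/-- The symbol of the free resolvent. -/
def symb (n : ℕ) (z : ℂ) (ξ : Euc n) : ℂ := ((((2 * π) ^ 2 * ‖ξ‖ ^ 2 : ℝ) : ℂ) - z)⁻¹

lemma symb_temp {z : ℂ} (hz : z.im ≠ 0) : (symb n z).HasTemperateGrowth := by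
  have key : symb n z = fun ξ : Euc n => ((((1 + ‖((2 * π) ^ 2 * ‖ξ‖ ^ 2 - z.re) * z.im⁻¹‖ ^ 2) ^ (-1 : ℝ)
      * (z.im⁻¹) ^ 2 : ℝ)) : ℂ) * ((((2 * π) ^ 2 * ‖ξ‖ ^ 2 : ℝ) : ℂ) - (starRingEnd ℂ) z) := by
    ext ξ
    set a := (2 * π) ^ 2 * ‖ξ‖ ^ 2
    rw [symb, Complex.inv_def]
    have h1 : Complex.normSq ((a : ℂ) - z) = (a - z.re) ^ 2 + z.im ^ 2 := by
      rw [Complex.normSq_apply]; simp; ring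
    change _ * (((Complex.normSq ((a : ℂ) - z))⁻¹ : ℝ) : ℂ) = _
    rw [h1, mul_comm]
    congr 1
    · congr 1
      rw [Real.rpow_neg_one, norm_eq_abs, sq_abs]
      have : (a - z.re) ^ 2 + z.im ^ 2 ≠ 0 := by positivity
      field_simp
      rw [add_comm]
    · rw [map_sub, Complex.conj_ofReal]
  rw [key]
  have h2 : (fun ξ : Euc n => ((2 * π) ^ 2 * ‖ξ‖ ^ 2 - z.re) * z.im⁻¹).HasTemperateGrowth := by
    fun_prop
  have h3 := (Function.hasTemperateGrowth_one_add_norm_sq_rpow ℝ (-1)).comp h2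
  have h4 : (fun ξ : Euc n => ((1 + ‖((2 * π) ^ 2 * ‖ξ‖ ^ 2 - z.re) * z.im⁻¹‖ ^ 2) ^ (-1 : ℝ)
      * (z.im⁻¹) ^ 2 : ℝ)).HasTemperateGrowth := h3.mul (by fun_prop)
  have h5 : (fun ξ : Euc n => ((2 * π) ^ 2 * ‖ξ‖ ^ 2 : ℝ)).HasTemperateGrowth := by fun_prop
  refine (ofReal_temp h4).mul ((ofReal_temp h5).sub (by fun_prop))

/-- The free resolvent `(-Δ - z)⁻¹` on Schwartz functions. -/
def RS (z : ℂ) : Sch n →ₗ[ℂ] Sch n := (SchwartzMap.fourierMultiplierCLM ℂ (symb n z)).toLinearMap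

lemma HS_RS {z : ℂ} (hz : z.im ≠ 0) (f : Sch n) : HS (RS z f) - z • RS z f = f := by
  open Laplacian in
  have h1 : HS (RS z f) = - Δ (RS z f) := by
    rw [HS_eq, SchwartzMap.laplacian_eq_sum (EuclideanSpace.basisFun (Fin n) ℝ)]
    simp [dS]
  have hq : (fun ξ : Euc n => ‖ξ‖ ^ 2).HasTemperateGrowth := by fun_prop
  have hs := symb_temp (n := n) hz
  rw [h1, SchwartzMap.laplacian_eq_fourierMultiplierCLM,
    ← SchwartzMap.fourierMultiplierCLM_ofReal ℂ hq]
  simp only [RS, ContinuousLinearMap.coe_coe]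
  erw [SchwartzMap.fourierMultiplierCLM_fourierMultiplierCLM_apply (ofReal_temp hq) hs]
  have hf : f = FourierTransformInv.fourierInv (FourierTransform.fourier f) := by simp
  conv_rhs => rw [hf]
  simp only [SchwartzMap.fourierMultiplierCLM_apply]
  rw [neg_smul, neg_neg, ← FourierTransform.fourierInv_smul, ← FourierTransform.fourierInv_smul,
    sub_eq_iff_eq_add, ← FourierTransform.fourierInv_add]
  congr 1
  ext ξ
  simp only [add_apply, smul_apply, SchwartzMap.smulLeftCLM_apply_apply ((ofReal_temp hq).mul hs),
    SchwartzMap.smulLeftCLM_apply_apply hs, Pi.mul_apply, symb]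
  have hne : (((2 * π) ^ 2 * ‖ξ‖ ^ 2 : ℝ) : ℂ) - z ≠ 0 := by
    intro h
    have := congrArg Complex.im h
    simp only [Complex.sub_im, Complex.ofReal_im, zero_sub, Complex.zero_im, neg_eq_zero] at this
    exact hz this
  rw [Complex.real_smul]
  simp only [smul_eq_mul]
  push_cast at hne ⊢
  linear_combination (FourierTransform.fourier f : Sch n) ξ * mul_inv_cancel₀ hne

lemma inner_self_real (u : L2 n) : inner ℂ u u = ((‖u‖ ^ 2 : ℝ) : ℂ) := by
  rw [inner_self_eq_norm_sq_to_K]; simp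

/-- `-Δ - z` is bounded below by `|Im z|`. -/
lemma im_mul_norm_le (z : ℂ) (u : Sch n) :
    |z.im| * ‖toL u‖ ≤ ‖toL (HS u - z • u)‖ := by
  have h1 : inner ℂ (toL u) (toL (HS u)) = ((∑ i, ‖toL (dS i u)‖ ^ 2 : ℝ) : ℂ) := by
    rw [← inner_HS', inner_HS]
    push_cast
    refine Finset.sum_congr rfl fun i _ => ?_
    rw [inner_self_eq_norm_sq_to_K]; simp
  have h2 : (inner ℂ (toL u) (toL (HS u - z • u))).im = - z.im * ‖toL u‖ ^ 2 := by
    rw [map_sub, map_smul, inner_sub_right, inner_smul_right, h1, inner_self_real]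
    rw [Complex.sub_im, Complex.ofReal_im, Complex.mul_im, Complex.ofReal_im, Complex.ofReal_re]
    ring
  have h3 : |z.im| * ‖toL u‖ ^ 2 ≤ ‖toL u‖ * ‖toL (HS u - z • u)‖ := by
    calc |z.im| * ‖toL u‖ ^ 2 = |(inner ℂ (toL u) (toL (HS u - z • u))).im| := by
          rw [h2, abs_mul, abs_neg, abs_of_nonneg (sq_nonneg ‖toL u‖)]
      _ ≤ _ := (Complex.abs_im_le_norm _).trans (norm_inner_le_norm _ _)
  rcases eq_or_lt_of_le (norm_nonneg (toL u)) with h | h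
  · rw [← h]; simp
  · nlinarith

lemma RS_HS {z : ℂ} (hz : z.im ≠ 0) (u : Sch n) : RS z (HS u - z • u) = u := by
  have h := im_mul_norm_le z (RS z (HS u - z • u) - u)
  have e : HS (RS z (HS u - z • u) - u) - z • (RS z (HS u - z • u) - u) = 0 := by
    rw [map_sub, smul_sub, sub_sub_sub_comm, HS_RS hz, sub_self]
  rw [e, map_zero, norm_zero] at h
  have : ‖toL (RS z (HS u - z • u) - u)‖ = 0 := by
    have := abs_pos.2 hz
    nlinarith [norm_nonneg (toL (RS z (HS u - z • u) - u))]
  rw [norm_eq_zero] at this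
  exact sub_eq_zero.1 (toL_injective (by rw [this, map_zero]))

lemma norm_RS_le {z : ℂ} (hz : z.im ≠ 0) (f : Sch n) : ‖toL (RS z f)‖ ≤ |z.im|⁻¹ * ‖toL f‖ := by
  have h := im_mul_norm_le z (RS z f)
  rw [HS_RS hz] at h
  have := abs_pos.2 hz
  rw [inv_mul_eq_div, le_div_iff₀ this]; linarith

lemma inner_RS {z : ℂ} (hz : z.im ≠ 0) (f g : Sch n) :
    inner ℂ (toL (RS z f)) (toL g) = inner ℂ (toL f) (toL (RS (starRingEnd ℂ z) g)) := by
  have hz' : (starRingEnd ℂ z).im ≠ 0 := by simpa using hz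
  conv_lhs => rw [← HS_RS hz' g]
  conv_rhs => rw [← HS_RS hz f]
  rw [map_sub, map_sub, inner_sub_right, inner_sub_left, inner_HS', map_smul, map_smul,
    inner_smul_left, inner_smul_right]

/-! ### Weights and the energy identity -/

/-- The scaled weight `(1 + η²|x|²)^r`. -/
def Jw {n : ℕ} (η r : ℝ) (x : Euc n) : ℝ := (1 + η ^ 2 * ‖x‖ ^ 2) ^ r

lemma Jw_base (η : ℝ) (x : Euc n) : 1 ≤ 1 + η ^ 2 * ‖x‖ ^ 2 := by
  have : 0 ≤ η ^ 2 * ‖x‖ ^ 2 := by positivity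
  linarith

lemma Jw_pos (η r : ℝ) (x : Euc n) : 0 < Jw η r x :=
  Real.rpow_pos_of_pos (by linarith [Jw_base η x]) _

lemma Jw_add (η r s : ℝ) (x : Euc n) : Jw η r x * Jw η s x = Jw η (r + s) x :=
  (Real.rpow_add (by linarith [Jw_base η x]) _ _).symm

lemma Jw_mono {η r s : ℝ} (h : r ≤ s) (x : Euc n) : Jw η r x ≤ Jw η s x :=
  Real.rpow_le_rpow_of_exponent_le (Jw_base η x) h

lemma Jw_zero (η : ℝ) (x : Euc n) : Jw η 0 x = 1 := Real.rpow_zero _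

lemma Jw_one (η : ℝ) (x : Euc n) : Jw η 1 x = 1 + η ^ 2 * ‖x‖ ^ 2 := Real.rpow_one _

lemma Jw_le_one {η r : ℝ} (h : r ≤ 0) (x : Euc n) : Jw η r x ≤ 1 := by
  rw [← Jw_zero η x]; exact Jw_mono h x

lemma Jw_temp (η r : ℝ) : (Jw η r : Euc n → ℝ).HasTemperateGrowth := by
  have h3 := (Function.hasTemperateGrowth_one_add_norm_sq_rpow (Euc n) r).comp
    (f := fun x : Euc n => η • x) (by fun_prop)
  have e : (Jw η r : Euc n → ℝ) = (fun x => (1 + ‖x‖ ^ 2) ^ r) ∘ fun x => η • x := by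
    ext x
    simp [Jw, norm_smul, mul_pow]
  rw [e]; exact h3

lemma coord_temp (i : Fin n) : (fun x : Euc n => x i).HasTemperateGrowth :=
  (EuclideanSpace.proj i : Euc n →L[ℝ] ℝ).hasTemperateGrowth

lemma Jw_fderiv (η r : ℝ) (i : Fin n) (x : Euc n) :
    fderiv ℝ (Jw η r) x (EuclideanSpace.single i 1) = 2 * r * η ^ 2 * x i * Jw η (r - 1) x := by
  have h1 : HasFDerivAt (fun x : Euc n => 1 + η ^ 2 * ‖x‖ ^ 2)
      (η ^ 2 • (2 • innerSL ℝ x)) x :=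
    (((hasStrictFDerivAt_norm_sq x).hasFDerivAt).const_mul _).const_add _
  have h2 := h1.rpow_const (p := r) (Or.inl (by linarith [Jw_base η x]))
  have h3 : HasFDerivAt (Jw η r) _ x := h2
  rw [h3.fderiv]
  simp [Jw, EuclideanSpace.inner_single_right]
  ring

lemma abs_coord_le (η : ℝ) (i : Fin n) (x : Euc n) : η * |x i| ≤ Jw η (1 / 2) x := by
  have h1 : |x i| ≤ ‖x‖ := by simpa using PiLp.norm_apply_le x i
  rw [Jw, ← Real.sqrt_eq_rpow]
  apply Real.le_sqrt_of_sq_le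
  rw [mul_pow]
  have : |x i| ^ 2 ≤ ‖x‖ ^ 2 := by gcongr
  nlinarith [sq_nonneg η]

/-- Pairing bound for a multiplier dominated by the square of a weight. -/
lemma inner_mulS_le {w w' φ : Euc n → ℝ} (hw : w.HasTemperateGrowth) (hw' : w'.HasTemperateGrowth)
    (hφ : φ.HasTemperateGrowth) (hww : ∀ x, w x * w' x = 1) {C : ℝ}
    (h : ∀ x, |φ x| ≤ C * w x ^ 2) (u v : Sch n) :
    ‖inner ℂ (toL u) (toL (mulS φ v))‖ ≤ C * (‖toL (mulS w u)‖ * ‖toL (mulS w v)‖) := by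
  have hp : (fun x => w' x * φ x).HasTemperateGrowth := hw'.mul hφ
  have e : mulS φ v = mulS w (mulS (fun x => w' x * φ x) v) := by
    rw [mulS_mulS hw hp (χ := φ)]
    intro x; rw [← mul_assoc, hww, one_mul]
  rw [e, ← inner_mulS hw]
  refine (norm_inner_le_norm _ _).trans ?_
  have : ‖toL (mulS (fun x => w' x * φ x) v)‖ ≤ C * ‖toL (mulS w v)‖ := by
    apply norm_mulS_le hp hw
    intro x
    rw [abs_mul]
    have h1 : |w x| * |w' x| = 1 := by rw [← abs_mul, hww, abs_one]
    calc |w' x| * |φ x| ≤ |w' x| * (C * w x ^ 2) := by gcongr; exact h x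
      _ = C * |w x| * (|w x| * |w' x|) := by rw [← sq_abs]; ring
      _ = _ := by rw [h1, mul_one]
  calc _ ≤ ‖toL (mulS w u)‖ * (C * ‖toL (mulS w v)‖) := by gcongr
    _ = _ := by ring

/-- Partial derivatives of the weight. -/
lemma dS_mulS_Jw (η r : ℝ) (i : Fin n) (u : Sch n) :
    dS i (mulS (Jw η r) u) = mulS (Jw η r) (dS i u) +
      mulS (fun x => 2 * r * η ^ 2 * x i * Jw η (r - 1) x) u :=
  dS_mulS (Jw_temp η r) (by have := coord_temp i; have := Jw_temp (n := n) η (r - 1); fun_prop) i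
    (Jw_fderiv η r i) u

/-- The energy identity for `(-Δ - z) u = f` tested against `w² u`, `w = (1 + η²|x|²)^{-a/2}`. -/
lemma weight_est (η a : ℝ) (hη : 0 ≤ η) (z : ℂ) (u : Sch n) :
    |∑ i, ‖toL (mulS (Jw η (-a / 2)) (dS i u))‖ ^ 2 - z.re * ‖toL (mulS (Jw η (-a / 2)) u)‖ ^ 2| ≤
      2 * |a| * η * ∑ i, ‖toL (mulS (Jw η (-a / 2)) (dS i u))‖ * ‖toL (mulS (Jw η (-a / 2)) u)‖ +
      ‖inner ℂ (toL (HS u - z • u)) (toL (mulS (Jw η (-a)) u))‖ := by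
  have hsq : ∀ v : Sch n, inner ℂ (toL v) (toL (mulS (Jw η (-a)) v)) =
      ((‖toL (mulS (Jw η (-a / 2)) v)‖ ^ 2 : ℝ) : ℂ) := by
    intro v
    rw [← inner_self_real, inner_mulS (Jw_temp _ _),
      mulS_mulS (Jw_temp _ _) (Jw_temp _ _) (χ := Jw η (-a))]
    intro x; rw [Jw_add]; congr 1; ring
  have h1 : inner ℂ (toL (HS u)) (toL (mulS (Jw η (-a)) u)) =
      ((∑ i, ‖toL (mulS (Jw η (-a / 2)) (dS i u))‖ ^ 2 : ℝ) : ℂ) +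
      ∑ i, inner ℂ (toL (dS i u)) (toL (mulS (fun x => 2 * (-a) * η ^ 2 * x i * Jw η (-a - 1) x) u)) := by
    rw [inner_HS]
    push_cast
    rw [← Finset.sum_add_distrib]
    refine Finset.sum_congr rfl fun i _ => ?_
    rw [dS_mulS_Jw, map_add, inner_add_right, hsq]
    push_cast; rfl
  have h2 : inner ℂ (toL (HS u - z • u)) (toL (mulS (Jw η (-a)) u)) =
      inner ℂ (toL (HS u)) (toL (mulS (Jw η (-a)) u)) -
      (starRingEnd ℂ z) * ((‖toL (mulS (Jw η (-a / 2)) u)‖ ^ 2 : ℝ) : ℂ) := by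
    rw [map_sub, inner_sub_left, map_smul, inner_smul_left, hsq]
  set S := ∑ i, inner ℂ (toL (dS i u)) (toL (mulS (fun x => 2 * (-a) * η ^ 2 * x i * Jw η (-a - 1) x) u))
    with hS
  have h3 : ‖S‖ ≤ 2 * |a| * η *
      ∑ i, ‖toL (mulS (Jw η (-a / 2)) (dS i u))‖ * ‖toL (mulS (Jw η (-a / 2)) u)‖ := by
    rw [hS, Finset.mul_sum]
    refine (norm_sum_le _ _).trans (Finset.sum_le_sum fun i _ => ?_)
    refine inner_mulS_le (Jw_temp _ _) (Jw_temp η (a / 2))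
      (by have := coord_temp i; have := Jw_temp (n := n) η (-a - 1); fun_prop) ?_ ?_ _ _
    · intro x; rw [Jw_add, ← Jw_zero η x]; congr 1; ring
    · intro x
      have e : Jw η (-a / 2) x ^ 2 = Jw η (-a) x := by
        rw [sq, Jw_add]; congr 1; ring
      rw [e]
      simp only [abs_mul, abs_neg, abs_of_nonneg (sq_nonneg η), abs_two,
        abs_of_pos (Jw_pos η _ x)]
      calc 2 * |a| * η ^ 2 * |x i| * Jw η (-a - 1) x
          = 2 * |a| * η * (η * |x i|) * Jw η (-a - 1) x := by ring
        _ ≤ 2 * |a| * η * Jw η (1 / 2) x * Jw η (-a - 1) x := by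
            have := (Jw_pos η (-a - 1) x).le
            gcongr; exact abs_coord_le η i x
        _ = 2 * |a| * η * Jw η (1 / 2 + (-a - 1)) x := by rw [← Jw_add]; ring
        _ ≤ _ := by gcongr 2 * |a| * η * ?_; exact Jw_mono (by linarith) x
  have h4 := congrArg Complex.re (h2.trans (by rw [h1]))
  rw [Complex.sub_re, Complex.add_re, Complex.ofReal_re, Complex.mul_re, Complex.ofReal_re,
    Complex.ofReal_im, Complex.conj_re, mul_zero, sub_zero] at h4
  have h5 := (Complex.abs_re_le_norm (inner ℂ (toL (HS u - z • u)) (toL (mulS (Jw η (-a)) u))))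
  have h6 := (Complex.abs_re_le_norm S).trans h3
  rw [abs_le] at h5 h6 ⊢
  constructor <;> linarith

/-! ### The Morawetz vector field -/

/-- Radial profile of the Morawetz vector field `x ↦ h(x) x`. -/
def hM {n : ℕ} (η ε : ℝ) (x : Euc n) : ℝ := Jw η (-1/2) x - 1/2 * Jw η (-1/2 - ε) x

/-- The function with `∂ᵢ h = xᵢ g`. -/
def gM {n : ℕ} (η ε : ℝ) (x : Euc n) : ℝ :=
  η ^ 2 * (-Jw η (-3/2) x + (1/2 + ε) * Jw η (-3/2 - ε) x)

/-- Divergence of the Morawetz vector field. -/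
def dM {n : ℕ} (η ε : ℝ) (x : Euc n) : ℝ :=
  (n - 1) * Jw η (-1/2) x + (1/2 + ε - n / 2) * Jw η (-1/2 - ε) x + Jw η (-3/2) x
    - (1/2 + ε) * Jw η (-3/2 - ε) x

/-- Partial derivatives of the divergence. -/
def dMi {n : ℕ} (η ε : ℝ) (i : Fin n) (x : Euc n) : ℝ :=
  η ^ 2 * x i * (-(n - 1) * Jw η (-3/2) x + (1/2 + ε - n / 2) * (-1 - 2 * ε) * Jw η (-3/2 - ε) x
    - 3 * Jw η (-5/2) x + (1/2 + ε) * (3 + 2 * ε) * Jw η (-5/2 - ε) x)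

/-- Components of the Morawetz vector field. -/
def XM {n : ℕ} (η ε : ℝ) (k : Fin n) (x : Euc n) : ℝ := x k * hM η ε x

/-- Jacobian of the Morawetz vector field. -/
def MM {n : ℕ} (η ε : ℝ) (i k : Fin n) (x : Euc n) : ℝ :=
  (if i = k then hM η ε x else 0) + x i * x k * gM η ε x

@[fun_prop] lemma Jw_temp' (η r : ℝ) : (fun x : Euc n => Jw η r x).HasTemperateGrowth := Jw_temp η r

@[fun_prop] lemma coord_temp' (i : Fin n) : (fun x : Euc n => x i).HasTemperateGrowth :=
  coord_temp i

lemma hM_temp (η ε : ℝ) : (hM η ε : Euc n → ℝ).HasTemperateGrowth := by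
  unfold hM; fun_prop

lemma gM_temp (η ε : ℝ) : (gM η ε : Euc n → ℝ).HasTemperateGrowth := by
  unfold gM; fun_prop

lemma dM_temp (η ε : ℝ) : (dM η ε : Euc n → ℝ).HasTemperateGrowth := by
  unfold dM; fun_prop

lemma dMi_temp (η ε : ℝ) (i : Fin n) : (dMi η ε i : Euc n → ℝ).HasTemperateGrowth := by
  unfold dMi; fun_prop

lemma XM_temp (η ε : ℝ) (i : Fin n) : (XM η ε i : Euc n → ℝ).HasTemperateGrowth :=
  (coord_temp i).mul (hM_temp η ε)

lemma MM_temp (η ε : ℝ) (i k : Fin n) : (MM η ε i k : Euc n → ℝ).HasTemperateGrowth := by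
  have h2 : (fun x : Euc n => x i * x k * gM η ε x).HasTemperateGrowth :=
    ((coord_temp i).mul (coord_temp k)).mul (gM_temp η ε)
  by_cases h : i = k
  · have : (MM η ε i k : Euc n → ℝ) = hM η ε + fun x => x i * x k * gM η ε x := by
      ext x; simp [MM, h]
    rw [this]; exact (hM_temp η ε).add h2
  · have : (MM η ε i k : Euc n → ℝ) = fun x => x i * x k * gM η ε x := by
      ext x; simp [MM, h]
    rw [this]; exact h2

lemma Jw_hasFDerivAt (η r : ℝ) (x : Euc n) : HasFDerivAt (Jw η r) (fderiv ℝ (Jw η r) x) x :=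
  ((Jw_temp η r).1.differentiable (by simp) x).hasFDerivAt

lemma XM_fderiv (η ε : ℝ) (i k : Fin n) (x : Euc n) :
    fderiv ℝ (XM η ε k) x (EuclideanSpace.single i 1) = MM η ε i k x := by
  have h1 : HasFDerivAt (fun x : Euc n => x k) (EuclideanSpace.proj k : Euc n →L[ℝ] ℝ) x :=
    (EuclideanSpace.proj k : Euc n →L[ℝ] ℝ).hasFDerivAt
  have h2 := h1.mul ((Jw_hasFDerivAt η (-1/2) x).sub ((Jw_hasFDerivAt η (-1/2 - ε) x).const_mul (1/2)))
  have h3 : HasFDerivAt (XM η ε k) _ x := h2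
  rw [h3.fderiv]
  simp only [add_apply, smul_apply, sub_apply, Jw_fderiv, smul_eq_mul]
  rw [show (-1/2 - 1 : ℝ) = -3/2 by norm_num, show (-1/2 - ε - 1 : ℝ) = -3/2 - ε by ring]
  by_cases h : i = k
  · subst h; simp [MM, hM, gM]; ring
  · simp [MM, gM, h, Ne.symm h]; ring

lemma dM_fderiv (η ε : ℝ) (i : Fin n) (x : Euc n) :
    fderiv ℝ (dM η ε) x (EuclideanSpace.single i 1) = dMi η ε i x := by
  have h2 := ((((Jw_hasFDerivAt η (-1/2) x).const_mul ((n : ℝ) - 1)).add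
    ((Jw_hasFDerivAt η (-1/2 - ε) x).const_mul (1/2 + ε - n / 2))).add
    (Jw_hasFDerivAt η (-3/2) x)).sub ((Jw_hasFDerivAt η (-3/2 - ε) x).const_mul (1/2 + ε))
  have h3 : HasFDerivAt (dM η ε) _ x := h2
  rw [h3.fderiv]
  simp only [add_apply, smul_apply, sub_apply, Jw_fderiv, smul_eq_mul]
  rw [show (-1/2 - 1 : ℝ) = -3/2 by norm_num, show (-1/2 - ε - 1 : ℝ) = -3/2 - ε by ring,
    show (-3/2 - 1 : ℝ) = -5/2 by norm_num, show (-3/2 - ε - 1 : ℝ) = -5/2 - ε by ring]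
  simp only [dMi]; ring

lemma norm_sq_eq (x : Euc n) : ‖x‖ ^ 2 = ∑ k, x k ^ 2 := by
  rw [EuclideanSpace.norm_sq_eq]; simp

lemma Jw_shift (η r s : ℝ) (h : r + 1 = s) (x : Euc n) :
    η ^ 2 * ‖x‖ ^ 2 * Jw η r x = Jw η s x - Jw η r x := by
  rw [← h, ← Jw_add, Jw_one]; ring

lemma sum_MM (η ε : ℝ) (x : Euc n) : ∑ k, MM η ε k k x = dM η ε x := by
  have : ∑ k, MM η ε k k x = n * hM η ε x + ‖x‖ ^ 2 * gM η ε x := by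
    rw [norm_sq_eq, Finset.sum_mul]
    simp only [MM, if_true, Finset.sum_add_distrib, Finset.sum_const, Finset.card_univ,
      Fintype.card_fin, nsmul_eq_mul, sq]
  rw [this]
  have h1 := Jw_shift η (-3/2) (-1/2) (by norm_num) x
  have h2 := Jw_shift η (-3/2 - ε) (-1/2 - ε) (by ring) x
  simp only [gM, hM, dM]
  linear_combination -h1 + (1/2 + ε) * h2

lemma gM_nonpos {η ε : ℝ} (hε : 0 < ε) (hε' : ε ≤ 1/2) (x : Euc n) : gM η ε x ≤ 0 := by
  have h1 : Jw η (-3/2 - ε) x ≤ Jw η (-3/2) x := Jw_mono (by linarith) x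
  have h2 := Jw_pos η (-3/2 - ε) x
  have : -Jw η (-3/2) x + (1/2 + ε) * Jw η (-3/2 - ε) x ≤ 0 := by nlinarith
  exact mul_nonpos_of_nonneg_of_nonpos (sq_nonneg _) this

lemma hM_lower {η ε : ℝ} (hε : 0 < ε) (hε' : ε ≤ 1/2) (x : Euc n) :
    ε * Jw η (-1/2 - ε) x ≤ hM η ε x + ‖x‖ ^ 2 * gM η ε x := by
  have h1 := Jw_shift η (-3/2) (-1/2) (by norm_num) x
  have h2 := Jw_shift η (-3/2 - ε) (-1/2 - ε) (by ring) x
  have e : hM η ε x + ‖x‖ ^ 2 * gM η ε x = Jw η (-3/2) x + ε * Jw η (-1/2 - ε) x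
      - (1/2 + ε) * Jw η (-3/2 - ε) x := by
    simp only [gM, hM]
    linear_combination -h1 + (1/2 + ε) * h2
  have h1 : Jw η (-3/2 - ε) x ≤ Jw η (-3/2) x := Jw_mono (by linarith) x
  have h2 := Jw_pos η (-3/2 - ε) x
  rw [e]; nlinarith

/-- Pointwise positivity of the Jacobian of the vector field. -/
lemma MM_lower {η ε : ℝ} (hε : 0 < ε) (hε' : ε ≤ 1/2) (x : Euc n) (a : Fin n → ℂ) :
    ε * ∑ i, Jw η (-1/2 - ε) x * ‖a i‖ ^ 2 ≤
      ∑ i, ∑ k, MM η ε i k x * ((starRingEnd ℂ) (a i) * a k).re := by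
  have e1 : ∑ i, ∑ k, MM η ε i k x * ((starRingEnd ℂ) (a i) * a k).re =
      hM η ε x * ∑ i, ‖a i‖ ^ 2 + gM η ε x * ‖∑ k, (x k : ℂ) * a k‖ ^ 2 := by
    have e2 : ‖∑ k, (x k : ℂ) * a k‖ ^ 2 =
        ∑ i, ∑ k, x i * x k * ((starRingEnd ℂ) (a i) * a k).re := by
      have : ‖∑ k, (x k : ℂ) * a k‖ ^ 2 =
          ((starRingEnd ℂ) (∑ k, (x k : ℂ) * a k) * (∑ k, (x k : ℂ) * a k)).re := by
        rw [mul_comm, Complex.mul_conj, Complex.ofReal_re, Complex.normSq_eq_norm_sq]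
      rw [this, map_sum, Finset.sum_mul_sum, Complex.re_sum]
      refine Finset.sum_congr rfl fun i _ => ?_
      rw [Complex.re_sum]
      refine Finset.sum_congr rfl fun k _ => ?_
      rw [map_mul, Complex.conj_ofReal]
      have : (x i : ℂ) * (starRingEnd ℂ) (a i) * ((x k : ℂ) * a k) =
        ((x i * x k : ℝ) : ℂ) * ((starRingEnd ℂ) (a i) * a k) := by push_cast; ring
      rw [this, Complex.re_ofReal_mul]
    rw [e2, Finset.mul_sum, Finset.mul_sum, ← Finset.sum_add_distrib]
    refine Finset.sum_congr rfl fun i _ => ?_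
    have : hM η ε x * ‖a i‖ ^ 2 = ∑ k, (if i = k then hM η ε x else 0) *
        ((starRingEnd ℂ) (a i) * a k).re := by
      simp only [ite_mul, zero_mul, Finset.sum_ite_eq, Finset.mem_univ, if_true]
      rw [mul_comm ((starRingEnd ℂ) (a i)), Complex.mul_conj, Complex.ofReal_re,
        Complex.normSq_eq_norm_sq]
    rw [this, Finset.mul_sum, ← Finset.sum_add_distrib]
    refine Finset.sum_congr rfl fun k _ => ?_
    simp only [MM]; ring
  have cs : ‖∑ k, (x k : ℂ) * a k‖ ^ 2 ≤ ‖x‖ ^ 2 * ∑ i, ‖a i‖ ^ 2 := by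
    rw [norm_sq_eq]
    calc ‖∑ k, (x k : ℂ) * a k‖ ^ 2 ≤ (∑ k, |x k| * ‖a k‖) ^ 2 := by
          gcongr
          refine (norm_sum_le _ _).trans (le_of_eq ?_)
          simp
      _ ≤ (∑ k, |x k| ^ 2) * ∑ i, ‖a i‖ ^ 2 := Finset.sum_mul_sq_le_sq_mul_sq _ _ _
      _ = _ := by simp
  rw [e1, ← Finset.mul_sum]
  have h1 := hM_lower (η := η) hε hε' x
  have h2 := gM_nonpos (η := η) hε hε' x
  have h3 : 0 ≤ ∑ i, ‖a i‖ ^ 2 := by positivity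
  nlinarith

lemma integrable_conj_mul (f g : Sch n) : Integrable (fun x => (starRingEnd ℂ) (f x) * g x) := by
  refine (L2.integrable_inner (𝕜 := ℂ) (toL f) (toL g)).congr ?_
  filter_upwards [toL_ae f, toL_ae g] with x h1 h2
  rw [h1, h2]; simp [mul_comm]

lemma integrable_re (f g : Sch n) : Integrable (fun x => ((starRingEnd ℂ) (f x) * g x).re) :=
  (integrable_conj_mul f g).re

lemma re_inner_toL (f g : Sch n) :
    (inner ℂ (toL f) (toL g)).re = ∫ x, ((starRingEnd ℂ) (f x) * g x).re := by
  rw [inner_toL]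
  exact (integral_re (integrable_conj_mul f g)).symm

lemma quad_lower {η ε : ℝ} (hε : 0 < ε) (hε' : ε ≤ 1/2) (v : Fin n → Sch n) :
    ε * ∑ i, ‖toL (mulS (Jw η (-(1/2 + ε) / 2)) (v i))‖ ^ 2 ≤
      (∑ i, ∑ k, inner ℂ (toL (v i)) (toL (mulS (MM η ε i k) (v k)))).re := by
  have e1 : (∑ i, ∑ k, inner ℂ (toL (v i)) (toL (mulS (MM η ε i k) (v k)))).re =
      ∫ x, ∑ i, ∑ k, ((starRingEnd ℂ) (v i x) * (mulS (MM η ε i k) (v k)) x).re := by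
    rw [integral_finsetSum _ (fun i _ => integrable_finsetSum _ fun k _ =>
      integrable_re _ _), Complex.re_sum]
    refine Finset.sum_congr rfl fun i _ => ?_
    rw [integral_finsetSum _ (fun k _ => integrable_re _ _), Complex.re_sum]
    refine Finset.sum_congr rfl fun k _ => ?_
    exact re_inner_toL _ _
  have e2 : ε * ∑ i, ‖toL (mulS (Jw η (-(1/2 + ε) / 2)) (v i))‖ ^ 2 =
      ∫ x, ε * ∑ i, ‖mulS (Jw η (-(1/2 + ε) / 2)) (v i) x‖ ^ 2 := by
    rw [integral_const_mul, integral_finsetSum _ (fun i _ => integrable_normSq _)]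
    simp only [norm_toL_sq]
  rw [e1, e2]
  refine integral_mono ((integrable_finsetSum _ fun i _ => integrable_normSq _).const_mul _)
    (integrable_finsetSum _ fun i _ => integrable_finsetSum _ fun k _ =>
      integrable_re _ _) ?_
  intro x
  have := MM_lower (η := η) hε hε' x (fun i => v i x)
  refine le_trans (le_of_eq ?_) (this.trans (le_of_eq ?_))
  · dsimp only
    congr 1
    refine Finset.sum_congr rfl fun i _ => ?_
    rw [mulS_apply (Jw_temp _ _), norm_mul, mul_pow]
    congr 1
    rw [Complex.norm_real, norm_eq_abs, sq_abs, sq, Jw_add]; congr 1; ring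
  · refine Finset.sum_congr rfl fun i _ => Finset.sum_congr rfl fun k _ => Eq.symm ?_
    rw [mulS_apply (MM_temp _ _ _ _), mul_left_comm, Complex.re_ofReal_mul]

/-! ### The commutator with the Laplacian -/

/-- The antisymmetric first-order operator `X·∇ + ½ div X`. -/
def AM {n : ℕ} (η ε : ℝ) (u : Sch n) : Sch n :=
  ∑ k, mulS (XM η ε k) (dS k u) + mulS (fun x => 1/2 * dM η ε x) u

lemma half_temp {φ : Euc n → ℝ} (h : φ.HasTemperateGrowth) :
    (fun x => 1/2 * φ x).HasTemperateGrowth := by fun_prop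

lemma AM_anti (η ε : ℝ) (u v : Sch n) :
    inner ℂ (toL (AM η ε u)) (toL v) = - inner ℂ (toL u) (toL (AM η ε v)) := by
  have h1 : ∀ k, inner ℂ (toL (mulS (XM η ε k) (dS k u))) (toL v) =
      - inner ℂ (toL u) (toL (mulS (XM η ε k) (dS k v))) -
        inner ℂ (toL u) (toL (mulS (MM η ε k k) v)) := by
    intro k
    rw [inner_mulS (XM_temp _ _ _), inner_dS, dS_mulS (XM_temp _ _ _) (MM_temp _ _ _ _) k
      (XM_fderiv η ε k k), map_add, inner_add_right]
    ring
  have h2 : ∑ k, inner ℂ (toL u) (toL (mulS (MM η ε k k) v)) =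
      2 * inner ℂ (toL u) (toL (mulS (fun x => 1/2 * dM η ε x) v)) := by
    rw [← inner_sum, ← map_sum, ← inner_smul_right, ← map_smul]
    congr 2
    ext x
    rw [sum_apply, smul_apply, mulS_apply (half_temp (dM_temp _ _)), ← sum_MM]
    simp only [mulS_apply (MM_temp _ _ _ _)]
    rw [← Finset.sum_mul]
    push_cast; simp only [smul_eq_mul]; ring
  simp only [AM]
  rw [map_add, map_add, inner_add_left, inner_add_right, map_sum, map_sum, sum_inner, inner_sum,
    Finset.sum_congr rfl fun k _ => h1 k, Finset.sum_sub_distrib, h2,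
    inner_mulS (half_temp (dM_temp _ _)), Finset.sum_neg_distrib]
  ring

lemma dS_AM (η ε : ℝ) (i : Fin n) (u : Sch n) :
    dS i (AM η ε u) = AM η ε (dS i u) + ∑ k, mulS (MM η ε i k) (dS k u) +
      mulS (fun x => 1/2 * dMi η ε i x) u := by
  have hd : ∀ x : Euc n, fderiv ℝ (fun x => 1/2 * dM η ε x) x (EuclideanSpace.single i 1) =
      1/2 * dMi η ε i x := by
    intro x
    rw [fderiv_const_mul ((dM_temp η ε).1.differentiable (by simp) x)]
    simp [dM_fderiv]
  simp only [AM]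
  rw [map_add, map_sum, dS_mulS (half_temp (dM_temp _ _)) (half_temp (dMi_temp _ _ _)) i hd,
    Finset.sum_congr rfl fun k _ => dS_mulS (XM_temp _ _ _) (MM_temp η ε i k) i (XM_fderiv η ε i k) _,
    Finset.sum_add_distrib]
  simp only [dS_comm i]
  abel

lemma re_inner_AM (η ε : ℝ) (u : Sch n) : (inner ℂ (toL u) (toL (AM η ε u))).re = 0 := by
  have h := AM_anti η ε u u
  rw [← inner_conj_symm] at h
  have := congrArg Complex.re h
  rw [Complex.conj_re, Complex.neg_re] at this
  linarith

/-- The Morawetz commutator identity: since the multiplier is antisymmetric, only its commutator with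
the gradient survives, namely the Jacobian of the vector field as a quadratic form in the gradient
and a lower-order term with the derivatives of the divergence. -/
lemma re_HS_AM (η ε : ℝ) (u : Sch n) : (inner ℂ (toL (HS u)) (toL (AM η ε u))).re =
    (∑ i, ∑ k, inner ℂ (toL (dS i u)) (toL (mulS (MM η ε i k) (dS k u)))).re +
    (∑ i, inner ℂ (toL (dS i u)) (toL (mulS (fun x => 1/2 * dMi η ε i x) u))).re := by
  rw [inner_HS, Complex.re_sum, Complex.re_sum, Complex.re_sum, ← Finset.sum_add_distrib]
  refine Finset.sum_congr rfl fun i _ => ?_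
  rw [dS_AM, map_add, map_add, inner_add_right, inner_add_right, Complex.add_re, Complex.add_re,
    re_inner_AM, map_sum, inner_sum, zero_add]

lemma mulS_mul_le {w φ : Euc n → ℝ} (hw : w.HasTemperateGrowth) (hφ : φ.HasTemperateGrowth)
    {C : ℝ} (h : ∀ x, |φ x| ≤ C) (v : Sch n) :
    ‖toL (mulS w (mulS φ v))‖ ≤ C * ‖toL (mulS w v)‖ := by
  have hp : (fun x => w x * φ x).HasTemperateGrowth := hw.mul hφ
  rw [mulS_mulS hw hφ (χ := fun x => w x * φ x) fun _ => rfl]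
  refine norm_mulS_le hp hw (fun x => ?_) v
  rw [abs_mul, mul_comm]
  gcongr; exact h x

lemma XM_le {η ε : ℝ} (hη : 0 < η) (hε : 0 < ε) (k : Fin n) (x : Euc n) : |XM η ε k x| ≤ 1 / η := by
  have h1 : Jw η (-1/2 - ε) x ≤ Jw η (-1/2) x := Jw_mono (by linarith) x
  have h2 := Jw_pos η (-1/2 - ε) x
  have h3 : |hM η ε x| ≤ Jw η (-1/2) x := by
    rw [abs_le]; simp only [hM]; constructor <;> linarith
  rw [XM, abs_mul, le_div_iff₀ hη]
  calc |x k| * |hM η ε x| * η = (η * |x k|) * |hM η ε x| := by ring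
    _ ≤ Jw η (1/2) x * Jw η (-1/2) x := by
        gcongr
        · exact (Jw_pos _ _ _).le
        · exact abs_coord_le η k x
    _ = 1 := by rw [Jw_add, ← Jw_zero η x]; congr 1; ring

lemma four_le {a b c d A B C D : ℝ} (ha : |a| ≤ A) (hb : |b| ≤ B) (hc : |c| ≤ C) (hd : |d| ≤ D)
    {p q r s t : ℝ} (hp : 0 ≤ p ∧ p ≤ t) (hq : 0 ≤ q ∧ q ≤ t) (hr : 0 ≤ r ∧ r ≤ t)
    (hs : 0 ≤ s ∧ s ≤ t) : |a * p + b * q + c * r + d * s| ≤ (A + B + C + D) * t := by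
  have f : ∀ {a A p : ℝ}, |a| ≤ A → 0 ≤ p ∧ p ≤ t → |a * p| ≤ A * t := by
    intro a A p h1 h2
    rw [abs_mul, abs_of_nonneg h2.1]
    exact mul_le_mul h1 h2.2 h2.1 ((abs_nonneg _).trans h1)
  have := abs_add_le (a * p + b * q + c * r) (d * s)
  have := abs_add_le (a * p + b * q) (c * r)
  have := abs_add_le (a * p) (b * q)
  linarith [f ha hp, f hb hq, f hc hr, f hd hs]

lemma dM_le {η ε : ℝ} (hε : 0 < ε) (hε' : ε ≤ 1/2) (x : Euc n) :
    |1/2 * dM η ε x| ≤ 2 * n + 10 := by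
  have hn : (0:ℝ) ≤ n := n.cast_nonneg
  have J : ∀ r ≤ (0:ℝ), 0 ≤ Jw η r x ∧ Jw η r x ≤ 1 := fun r hr => ⟨(Jw_pos _ _ _).le, Jw_le_one hr x⟩
  have h := four_le (a := (n:ℝ) - 1) (A := n + 1) (b := 1/2 + ε - n/2) (B := n + 1) (c := 1) (C := 1)
    (d := -(1/2 + ε)) (D := 1) (by rw [abs_le]; constructor <;> linarith)
    (by rw [abs_le]; constructor <;> linarith) (by simp) (by rw [abs_le]; constructor <;> linarith)
    (J (-1/2) (by norm_num)) (J (-1/2 - ε) (by linarith)) (J (-3/2) (by norm_num))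
    (J (-3/2 - ε) (by linarith))
  have e : dM η ε x = ((n:ℝ) - 1) * Jw η (-1/2) x + (1/2 + ε - n/2) * Jw η (-1/2 - ε) x +
    1 * Jw η (-3/2) x + -(1/2 + ε) * Jw η (-3/2 - ε) x := by simp only [dM]; ring
  rw [abs_mul, e, abs_of_pos (by norm_num : (0:ℝ) < 1/2)]
  linarith

lemma dMi_le {η ε : ℝ} (hη : 0 < η) (hε : 0 < ε) (hε' : ε ≤ 1/2) (i : Fin n) (x : Euc n) :
    |1/2 * dMi η ε i x| ≤ (2 * n + 10) * η * Jw η (-(1/2 + ε) / 2) x ^ 2 := by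
  have hn : (0:ℝ) ≤ n := n.cast_nonneg
  have J : ∀ r ≤ (-3/2:ℝ), 0 ≤ Jw η r x ∧ Jw η r x ≤ Jw η (-3/2) x :=
    fun r hr => ⟨(Jw_pos _ _ _).le, Jw_mono hr x⟩
  have h := four_le (a := -((n:ℝ) - 1)) (A := n + 1) (b := (1/2 + ε - n/2) * (-1 - 2 * ε)) (B := n + 2)
    (c := -3) (C := 3)
    (d := (1/2 + ε) * (3 + 2 * ε)) (D := 4) (by rw [abs_le]; constructor <;> linarith)
    (by
      rw [abs_mul]
      have h1 : |1/2 + ε - n/2| ≤ n/2 + 1 := by rw [abs_le]; constructor <;> linarith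
      have h2 : |-1 - 2 * ε| ≤ 2 := by rw [abs_le]; constructor <;> linarith
      nlinarith [abs_nonneg (1/2 + ε - (n:ℝ)/2), abs_nonneg (-1 - 2 * ε)]) (by norm_num)
    (by rw [abs_le]; constructor <;> nlinarith)
    (J (-3/2) (by norm_num)) (J (-3/2 - ε) (by linarith)) (J (-5/2) (by norm_num))
    (J (-5/2 - ε) (by linarith))
  have e : dMi η ε i x = η * (η * x i) * (-((n:ℝ) - 1) * Jw η (-3/2) x +
    (1/2 + ε - n/2) * (-1 - 2 * ε) * Jw η (-3/2 - ε) x +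
    -3 * Jw η (-5/2) x + (1/2 + ε) * (3 + 2 * ε) * Jw η (-5/2 - ε) x) := by simp only [dMi]; ring
  have e2 : Jw η (-(1/2 + ε) / 2) x ^ 2 = Jw η (-(1/2 + ε)) x := by
    rw [sq, Jw_add]; congr 1; ring
  rw [abs_mul, e, abs_of_pos (by norm_num : (0:ℝ) < 1/2), e2, abs_mul, abs_mul, abs_mul, abs_of_pos hη]
  have h3 := abs_coord_le η i x
  calc _ ≤ 1/2 * (η * Jw η (1/2) x * ((n + 1 + (n + 2) + 3 + 4) * Jw η (-3/2) x)) := by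
        gcongr
        exact mul_nonneg hη.le (Jw_pos _ _ _).le
    _ = (n + 5) * η * (Jw η (1/2) x * Jw η (-3/2) x) := by ring
    _ ≤ (2 * n + 10) * η * (Jw η (1/2) x * Jw η (-3/2) x) := by
        have := (Jw_pos η (1/2) x).le
        have := (Jw_pos η (-3/2) x).le
        gcongr ?_ * η * _; linarith
    _ ≤ _ := by
        rw [Jw_add]
        gcongr (2 * n + 10) * η * ?_
        exact Jw_mono (by linarith) x

/-! ### The free weighted estimate -/

set_option maxHeartbeats 1000000 in
/-- The absorption argument behind the Morawetz estimate, as an inequality between numbers. -/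
lemma absorb {ε l0 K N : ℝ} (hε : 0 < ε) (hε' : ε ≤ 1/2) (hl : 0 < l0) (hK : 0 ≤ K) (hN : 0 ≤ N) :
    ∃ η : ℝ, 0 < η ∧ η ≤ 1 ∧ ∃ C : ℝ, 0 < C ∧ ∀ l P Q F : ℝ, l0 ≤ l → 0 ≤ P → 0 ≤ Q → 0 ≤ F →
      ε * P ^ 2 ≤ K * η * (N * P) * Q + F * (N * P / η + K * Q) + N * ((l + 1) * (F * Q)) / η
        + K * (F * Q) →
      l ^ 2 * Q ^ 2 ≤ P ^ 2 + 2 * η * (N * P) * Q + F * Q →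
      l * Q ≤ C * F := by
  set η := min 1 (ε * l0 / (4 * ((K + 1) * N + 1))) with hηdef
  have hη : 0 < η := lt_min one_pos (by positivity)
  have hηt : (K + 1) * N * η ≤ ε / 4 * l0 := by
    have h1 : η ≤ ε * l0 / (4 * ((K + 1) * N + 1)) := min_le_right _ _
    rw [le_div_iff₀ (by positivity)] at h1
    nlinarith
  have hη1 : η ≤ 1 := min_le_left _ _
  clear_value η
  set K2 := N / η + 2 * K / l0 + N * (1 + 1 / l0) / η + 1 / l0 with hK2
  have hK2p : 0 < K2 := by positivity
  refine ⟨η, hη, hη1, 16 * K2 / ε, by positivity, ?_⟩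
  intro l P Q F hl0 hP hQ hF h1 h2
  have hlp : 0 < l := hl.trans_le hl0
  set L := l * Q with hL
  have hLn : 0 ≤ L := by positivity
  have hQL : Q ≤ L / l0 := by rw [le_div_iff₀ hl]; nlinarith
  have a1 : K * η * (N * P) * Q + ε * (η * (N * P) * Q) ≤ ε / 4 * (P * L) := by
    have : K * η * (N * P) * Q + ε * (η * (N * P) * Q) ≤ ((K + 1) * N * η) * P * Q := by
      have : 0 ≤ η * (N * P) * Q := by positivity
      nlinarith
    calc _ ≤ ((K + 1) * N * η) * P * Q := this
      _ ≤ (ε / 4 * l0) * P * Q := by gcongr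
      _ ≤ (ε / 4 * l0) * P * (L / l0) := by gcongr
      _ = _ := by field_simp
  have a2 : F * (N * P / η + K * Q) + N * ((l + 1) * (F * Q)) / η + K * (F * Q) + F * Q
      ≤ K2 * F * (P + L) := by
    have e1 : (l + 1) * (F * Q) ≤ F * ((1 + 1 / l0) * L) := by
      have : (l + 1) * (F * Q) = F * (L + Q) := by rw [hL]; ring
      rw [this]; gcongr
      calc L + Q ≤ L + L / l0 := by linarith
        _ = _ := by ring
    calc _ ≤ F * (N * P / η + K * (L / l0)) + N * (F * ((1 + 1 / l0) * L)) / η + K * (F * (L / l0))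
          + F * (L / l0) := by gcongr
      _ = F * (N / η * P + (2 * K / l0 + N * (1 + 1 / l0) / η + 1 / l0) * L) := by ring
      _ ≤ F * (K2 * P + K2 * L) := by
          gcongr
          · rw [hK2]
            have : 0 ≤ 2 * K / l0 + N * (1 + 1 / l0) / η + 1 / l0 := by positivity
            linarith
          · rw [hK2]
            have : 0 ≤ N / η := by positivity
            linarith
      _ = _ := by ring
  have h3 : ε / 2 * L ^ 2 ≤ ε / 2 * P ^ 2 + ε * (η * (N * P) * Q) + F * Q := by
    have : L ^ 2 = l ^ 2 * Q ^ 2 := by rw [hL]; ring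
    rw [this]
    have : 0 ≤ F * Q := by positivity
    nlinarith
  have h4 : ε / 8 * (P + L) ^ 2 ≤ K2 * F * (P + L) := by
    nlinarith [sq_nonneg (P - L), mul_nonneg hP hLn]
  have h5 : ε / 8 * (P + L) ≤ K2 * F := by
    rcases eq_or_lt_of_le (add_nonneg hP hLn) with h | h
    · rw [← h]; have : 0 ≤ K2 * F := by positivity
      simpa using this
    · nlinarith
  rw [div_mul_eq_mul_div, le_div_iff₀ hε]
  nlinarith [mul_nonneg hK2p.le hF]

lemma sq_le_sum_sq (p : Fin n → ℝ) (i : Fin n) : p i ^ 2 ≤ ∑ i, p i ^ 2 :=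
  Finset.single_le_sum (f := fun i => p i ^ 2) (fun _ _ => sq_nonneg _) (Finset.mem_univ i)

lemma le_sqrt_sum_sq (p : Fin n → ℝ) (i : Fin n) : p i ≤ Real.sqrt (∑ i, p i ^ 2) :=
  Real.le_sqrt_of_sq_le (sq_le_sum_sq p i)

lemma weight_aux {b η S T Q : ℝ} (hb1 : b ≤ 1) (hη : 0 ≤ η) (hQ : 0 ≤ Q)
    (hS : 0 ≤ S) (hST : S ≤ T) : 2 * b * η * (S * Q) ≤ 2 * η * T * Q := by
  calc 2 * b * η * (S * Q) ≤ 2 * 1 * η * (T * Q) := by gcongr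
    _ = _ := by ring

set_option maxHeartbeats 1000000 in
/-- Weighted a priori estimate for the free Helmholtz operator, uniform up to the spectrum. -/
theorem free_base {ε l0 : ℝ} (hε : 0 < ε) (hε' : ε ≤ 1/2) (hl : 0 < l0) :
    ∃ C : ℝ, 0 < C ∧ ∀ (l : ℝ) (z : ℂ), l0 ≤ l → z.re = l ^ 2 → |z.im| ≤ 1 → ∀ u : Sch n,
      l * ‖toL (mulS (Jw 1 (-(1/2 + ε) / 2)) u)‖ ≤
        C * ‖toL (mulS (Jw 1 ((1/2 + ε) / 2)) (HS u - z • u))‖ := by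
  set K : ℝ := 2 * n + 10 with hK
  have hK0 : 0 ≤ K := by positivity
  obtain ⟨η, hη, hη1, C, hC, habs⟩ := absorb (N := n) hε hε' hl hK0 n.cast_nonneg
  refine ⟨C, hC, ?_⟩
  intro l z hl0 hzre hzim u
  have hlp : 0 < l := hl.trans_le hl0
  set b : ℝ := 1/2 + ε with hb
  set f := HS u - z • u with hf
  set w : Euc n → ℝ := Jw η (-b / 2) with hw
  set w' : Euc n → ℝ := Jw η (b / 2) with hw'
  have tw : w.HasTemperateGrowth := Jw_temp _ _
  have tw' : w'.HasTemperateGrowth := Jw_temp _ _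
  have hww : ∀ x, w' x * w x = 1 := by
    intro x; rw [hw, hw', Jw_add, ← Jw_zero η x]; congr 1; ring
  set F := ‖toL (mulS w' f)‖ with hF
  set Q := ‖toL (mulS w u)‖ with hQ
  set p : Fin n → ℝ := fun i => ‖toL (mulS w (dS i u))‖ with hp
  set P := Real.sqrt (∑ i, p i ^ 2) with hP
  have hP2 : P ^ 2 = ∑ i, p i ^ 2 := Real.sq_sqrt (Finset.sum_nonneg fun i _ => sq_nonneg _)
  have hPp : ∀ i, p i ≤ P := le_sqrt_sum_sq p
  have hS1 : ∑ i, p i ≤ n * P := by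
    calc _ ≤ ∑ i : Fin n, P := Finset.sum_le_sum fun i _ => hPp i
      _ = _ := by simp
  have hpair : ∀ v : Sch n, ‖inner ℂ (toL f) (toL v)‖ ≤ F * ‖toL (mulS w v)‖ := by
    intro v
    have : v = mulS w' (mulS w v) := by
      rw [mulS_mulS tw' tw (χ := fun _ => 1) hww, mulS_one]
    conv_lhs => rw [this, ← inner_mulS tw']
    exact norm_inner_le_norm _ _
  set q := ‖inner ℂ (toL f) (toL u)‖ with hq
  have hqF : q ≤ F * Q := hpair u
  set U := ‖toL u‖ with hU
  -- the two energy bounds obtained by testing with `u`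
  have hfu : inner ℂ (toL f) (toL u) = ((∑ i, ‖toL (dS i u)‖ ^ 2 : ℝ) : ℂ) -
      (starRingEnd ℂ z) * ((U ^ 2 : ℝ) : ℂ) := by
    rw [hf, map_sub, inner_sub_left, map_smul, inner_smul_left, inner_self_real, inner_HS]
    push_cast
    congr 1
    refine Finset.sum_congr rfl fun i _ => ?_
    rw [inner_self_real]; push_cast; rfl
  have hE1 : |z.im| * U ^ 2 ≤ q := by
    have h := Complex.abs_im_le_norm (inner ℂ (toL f) (toL u))
    rw [hfu, Complex.sub_im, Complex.ofReal_im, Complex.mul_im, Complex.ofReal_im, Complex.ofReal_re,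
      Complex.conj_im, mul_zero, zero_add, zero_sub, neg_mul, neg_neg, abs_mul,
      abs_of_nonneg (sq_nonneg U), ← hfu] at h
    exact h
  have hE2 : ∑ i, ‖toL (dS i u)‖ ^ 2 ≤ l ^ 2 * U ^ 2 + q := by
    have h := Complex.abs_re_le_norm (inner ℂ (toL f) (toL u))
    rw [hfu, Complex.sub_re, Complex.ofReal_re, Complex.mul_re, Complex.ofReal_im, Complex.ofReal_re,
      Complex.conj_re, mul_zero, sub_zero, hzre, ← hfu] at h
    linarith [le_abs_self (∑ i, ‖toL (dS i u)‖ ^ 2 - l ^ 2 * U ^ 2)]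
  have hq0 : 0 ≤ q := norm_nonneg _
  have hE3 : ∀ i, |z.im| * U * ‖toL (dS i u)‖ ≤ (l + 1) * q := by
    intro i
    have hD : ‖toL (dS i u)‖ ^ 2 ≤ l ^ 2 * U ^ 2 + q :=
      (sq_le_sum_sq (fun i => ‖toL (dS i u)‖) i).trans hE2
    have h0 := abs_nonneg z.im
    refine abs_le_of_sq_le_sq' ?_ (by positivity) |>.2
    calc (|z.im| * U * ‖toL (dS i u)‖) ^ 2 = (|z.im| * U ^ 2) * (|z.im| * ‖toL (dS i u)‖ ^ 2) := by ring
      _ ≤ q * (|z.im| * (l ^ 2 * U ^ 2 + q)) := by gcongr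
      _ = q * (l ^ 2 * (|z.im| * U ^ 2) + |z.im| * q) := by ring
      _ ≤ q * (l ^ 2 * q + 1 * q) := by gcongr
      _ ≤ ((l + 1) * q) ^ 2 := by nlinarith [mul_nonneg hlp.le (sq_nonneg q)]
  -- the Morawetz inequality
  have hwA : ‖toL (mulS w (AM η ε u))‖ ≤ n * P / η + K * Q := by
    rw [AM, map_add, map_add, map_sum, map_sum]
    refine (norm_add_le _ _).trans (add_le_add ?_ (mulS_mul_le tw (half_temp (dM_temp _ _)) (dM_le hε hε') u))
    refine (norm_sum_le _ _).trans ?_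
    calc _ ≤ ∑ k, 1 / η * p k := Finset.sum_le_sum fun k _ =>
          mulS_mul_le tw (XM_temp _ _ _) (XM_le hη hε k) _
      _ = 1 / η * ∑ k, p k := by rw [Finset.mul_sum]
      _ ≤ 1 / η * (n * P) := by gcongr
      _ = _ := by ring
  have hzA : |z.im| * ‖inner ℂ (toL u) (toL (AM η ε u))‖ ≤ n * ((l + 1) * (F * Q)) / η + K * (F * Q) := by
    have hA : ‖toL (AM η ε u)‖ ≤ 1 / η * ∑ k, ‖toL (dS k u)‖ + K * U := by
      rw [AM, map_add, map_sum, Finset.mul_sum]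
      refine (norm_add_le _ _).trans (add_le_add ?_ (norm_mulS_le' (half_temp (dM_temp _ _)) (dM_le hε hε') u))
      exact (norm_sum_le _ _).trans (Finset.sum_le_sum fun k _ =>
          norm_mulS_le' (XM_temp _ _ _) (XM_le hη hε k) _)
    calc _ ≤ |z.im| * (U * (1 / η * ∑ k, ‖toL (dS k u)‖ + K * U)) := by
          gcongr
          exact (norm_inner_le_norm _ _).trans (by gcongr)
      _ = 1 / η * ∑ k, (|z.im| * U * ‖toL (dS k u)‖) + K * (|z.im| * U ^ 2) := by
          rw [← Finset.mul_sum]; ring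
      _ ≤ 1 / η * ∑ k : Fin n, ((l + 1) * (F * Q)) + K * (F * Q) := by
          refine add_le_add (mul_le_mul_of_nonneg_left (Finset.sum_le_sum fun k _ => ?_)
            (by positivity)) (mul_le_mul_of_nonneg_left (hE1.trans hqF) hK0)
          exact (hE3 k).trans (mul_le_mul_of_nonneg_left hqF (by positivity))
      _ = _ := by simp; ring
  have herr : |(∑ i, inner ℂ (toL (dS i u)) (toL (mulS (fun x => 1/2 * dMi η ε i x) u))).re|
      ≤ K * η * (n * P) * Q := by
    refine (Complex.abs_re_le_norm _).trans ((norm_sum_le _ _).trans ?_)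
    calc _ ≤ ∑ i, K * η * (p i * Q) := Finset.sum_le_sum fun i _ =>
          inner_mulS_le tw tw' (half_temp (dMi_temp _ _ _)) (fun x => by rw [mul_comm, hww])
            (dMi_le hη hε hε' i) _ _
      _ = K * η * (∑ i, p i) * Q := by
          rw [← Finset.mul_sum, ← Finset.sum_mul]; ring
      _ ≤ _ := by gcongr
  have hmor : ε * P ^ 2 ≤ K * η * (n * P) * Q + F * (n * P / η + K * Q) +
      n * ((l + 1) * (F * Q)) / η + K * (F * Q) := by
    have h1 := quad_lower (η := η) hε hε' (fun i => dS i u)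
    have h2 := re_HS_AM η ε u
    have h3 : inner ℂ (toL (HS u)) (toL (AM η ε u)) = inner ℂ (toL f) (toL (AM η ε u)) +
        (starRingEnd ℂ z) * inner ℂ (toL u) (toL (AM η ε u)) := by
      rw [hf, map_sub, inner_sub_left, map_smul, inner_smul_left]; ring
    have h4 := congrArg Complex.re h3
    rw [Complex.add_re, Complex.mul_re, re_inner_AM, mul_zero, zero_sub, Complex.conj_im] at h4
    have h5 : (inner ℂ (toL f) (toL (AM η ε u))).re ≤ F * (n * P / η + K * Q) :=
      (Complex.re_le_norm _).trans ((hpair _).trans (by gcongr))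
    have h6 : -(-z.im * (inner ℂ (toL u) (toL (AM η ε u))).im) ≤
        n * ((l + 1) * (F * Q)) / η + K * (F * Q) := by
      refine le_trans (le_abs_self _) (le_trans ?_ hzA)
      rw [neg_mul, neg_neg, abs_mul]
      gcongr; exact Complex.abs_im_le_norm _
    have h7 := (abs_le.1 herr).1
    rw [hP2]
    linarith
  have hwt : l ^ 2 * Q ^ 2 ≤ P ^ 2 + 2 * η * (n * P) * Q + F * Q := by
    have h := weight_est η b hη.le z u
    have h1 : ‖inner ℂ (toL f) (toL (mulS (Jw η (-b)) u))‖ ≤ F * Q := by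
      refine (hpair _).trans ?_
      have := mulS_mul_le tw (Jw_temp η (-b)) (C := 1) (fun x => by
        rw [abs_of_pos (Jw_pos _ _ _)]; exact Jw_le_one (by linarith) x) u
      rw [one_mul] at this
      gcongr
    have h2 : 2 * |b| * η * ∑ i, p i * Q ≤ 2 * η * (n * P) * Q := by
      rw [← Finset.sum_mul, abs_of_pos (by linarith : 0 < b)]
      exact weight_aux (by linarith) hη.le (norm_nonneg _)
        (Finset.sum_nonneg fun i _ => norm_nonneg _) hS1
    have h3 := (abs_le.1 h).1
    rw [hzre] at h3
    rw [hP2]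
    linarith
  have hfin := habs l P Q F hl0 (Real.sqrt_nonneg _) (norm_nonneg _) (norm_nonneg _) hmor hwt
  -- comparison of the scaled weights with the unscaled ones
  have hη2 : η ^ 2 ≤ 1 := by nlinarith
  have hbase : ∀ x : Euc n, 1 + η ^ 2 * ‖x‖ ^ 2 ≤ 1 + 1 ^ 2 * ‖x‖ ^ 2 := by
    intro x; nlinarith [sq_nonneg ‖x‖]
  have c1 : ‖toL (mulS (Jw 1 (-b / 2)) u)‖ ≤ 1 * Q := by
    refine norm_mulS_le (Jw_temp _ _) tw (fun x => ?_) u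
    rw [one_mul, abs_of_pos (Jw_pos _ _ _), hw, abs_of_pos (Jw_pos _ _ _)]
    exact Real.rpow_le_rpow_of_nonpos (by linarith [Jw_base η x]) (hbase x) (by linarith)
  have c2 : F ≤ 1 * ‖toL (mulS (Jw 1 (b / 2)) f)‖ := by
    refine norm_mulS_le tw' (Jw_temp _ _) (fun x => ?_) f
    rw [one_mul, abs_of_pos (Jw_pos _ _ _), abs_of_pos (Jw_pos _ _ _)]
    exact Real.rpow_le_rpow (by linarith [Jw_base η x]) (hbase x) (by linarith)
  rw [one_mul] at c1 c2
  calc _ ≤ l * Q := by gcongr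
    _ ≤ C * F := hfin
    _ ≤ _ := by gcongr

/-! ### Dilations and powers of the free resolvent -/

lemma Jw_inv {η r s : ℝ} (h : r + s = 0) (x : Euc n) : Jw η r x * Jw η s x = 1 := by
  rw [Jw_add, h, Jw_zero]

/-- Weighted norm `‖⟨x⟩^{-a} u‖`. -/
def nw {n : ℕ} (a : ℝ) (u : Sch n) : ℝ := ‖toL (mulS (Jw 1 (-a / 2)) u)‖

lemma nw_nonneg (a : ℝ) (u : Sch n) : 0 ≤ nw a u := norm_nonneg _

lemma nw_mono {a a' : ℝ} (h : a ≤ a') (u : Sch n) : nw a' u ≤ nw a u := by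
  have := norm_mulS_le (Jw_temp 1 (-a' / 2)) (Jw_temp 1 (-a / 2)) (C := 1) (fun x => by
    rw [abs_of_pos (Jw_pos _ _ _), abs_of_pos (Jw_pos _ _ _), one_mul]
    exact Jw_mono (by linarith) x) u
  rwa [one_mul] at this

lemma nw_add_le (a : ℝ) (u v : Sch n) : nw a (u + v) ≤ nw a u + nw a v := by
  rw [nw, map_add, map_add]; exact norm_add_le _ _

lemma nw_sub_le (a : ℝ) (u v : Sch n) : nw a (u - v) ≤ nw a u + nw a v := by
  rw [nw, map_sub, map_sub]; exact norm_sub_le _ _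

lemma nw_smul (a : ℝ) (c : ℂ) (u : Sch n) : nw a (c • u) = ‖c‖ * nw a u := by
  rw [nw, map_smul, map_smul, norm_smul]; rfl

lemma nw_sum_le (a : ℝ) (u : Fin n → Sch n) : nw a (∑ k, u k) ≤ ∑ k, nw a (u k) := by
  rw [nw, map_sum, map_sum]; exact norm_sum_le _ _

lemma inner_le_nw (a : ℝ) (u v : Sch n) : ‖inner ℂ (toL u) (toL v)‖ ≤ nw (-a) u * nw a v := by
  have : v = mulS (Jw 1 (- -a / 2)) (mulS (Jw 1 (-a / 2)) v) := by
    rw [mulS_mulS (Jw_temp _ _) (Jw_temp _ _) (χ := fun _ => 1), mulS_one]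
    exact fun x => Jw_inv (by ring) x
  conv_lhs => rw [this, ← inner_mulS (Jw_temp _ _)]
  exact norm_inner_le_norm _ _

/-- The generator of dilations `x·∇`. -/
def DS {n : ℕ} : Module.End ℂ (Sch n) := ∑ k, mulS (fun x : Euc n => x k) * dS k

lemma DS_apply (u : Sch n) : DS u = ∑ k, mulS (fun x : Euc n => x k) (dS k u) := by
  simp [DS]

lemma coord_fderiv (i k : Fin n) (x : Euc n) :
    fderiv ℝ (fun x : Euc n => x k) x (EuclideanSpace.single i 1) = if i = k then 1 else 0 := by
  have h1 : HasFDerivAt (fun x : Euc n => x k) (EuclideanSpace.proj k : Euc n →L[ℝ] ℝ) x :=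
    (EuclideanSpace.proj k : Euc n →L[ℝ] ℝ).hasFDerivAt
  rw [h1.fderiv]
  by_cases h : i = k
  · subst h; simp
  · simp [h, Ne.symm h]

lemma dS_mul_coord (i k : Fin n) (u : Sch n) : dS i (mulS (fun x : Euc n => x k) u) =
    mulS (fun x : Euc n => x k) (dS i u) + if i = k then u else 0 := by
  rw [dS_mulS (φ' := fun _ => if i = k then (1:ℝ) else 0) (coord_temp k) (by fun_prop) i
    (fun x => coord_fderiv i k x)]
  congr 1
  split_ifs
  · exact mulS_one u
  · ext x; rw [mulS_apply (by fun_prop)]; simp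

lemma dS_DS (i : Fin n) (u : Sch n) : dS i (DS u) = DS (dS i u) + dS i u := by
  rw [DS_apply, DS_apply, map_sum]
  simp only [dS_mul_coord, Finset.sum_add_distrib, Finset.sum_ite_eq, Finset.mem_univ, if_true,
    dS_comm i]

lemma HS_DS (u : Sch n) : HS (DS u) = DS (HS u) + 2 • HS u := by
  rw [HS_eq, HS_eq]
  simp only [dS_DS, map_add, Finset.sum_add_distrib, map_neg, map_sum]
  rw [smul_neg, two_smul]; abel

lemma DS_RS {z : ℂ} (hz : z.im ≠ 0) (g : Sch n) :
    DS (RS z g) = RS z (DS g) + 2 • (RS z g + z • RS z (RS z g)) := by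
  have h1 : HS (DS (RS z g)) - z • DS (RS z g) = DS g + 2 • (g + z • RS z g) := by
    have h := HS_RS hz g
    have h' : HS (RS z g) = g + z • RS z g := by rw [← sub_eq_iff_eq_add]; exact h
    rw [HS_DS, h', map_add, map_smul]; abel
  have h2 := RS_HS hz (DS (RS z g))
  rw [h1] at h2
  rw [← h2]
  simp only [map_add, map_nsmul, map_smul]

/-- The free resolvent as an element of the ring of endomorphisms of Schwartz space. -/
def RE {n : ℕ} (z : ℂ) : Module.End ℂ (Sch n) := RS z

/-- Commutator of dilations with powers of the free resolvent. Solved for `z • RE z ^ (j + 1)`, it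
expresses a higher power through lower ones, with a gain of `|z|⁻¹`. -/
lemma DS_RE {z : ℂ} (hz : z.im ≠ 0) (j : ℕ) : (DS : Module.End ℂ (Sch n)) * RE z ^ j =
    RE z ^ j * DS + (2 * j) • (RE z ^ j + z • RE z ^ (j + 1)) := by
  have h1 : (DS : Module.End ℂ (Sch n)) * RE z = RE z * DS + 2 • (RE z + z • (RE z * RE z)) :=
    LinearMap.ext fun g => DS_RS hz g
  induction j with
  | zero => simp
  | succ j ih =>
    have e1 : RE (n := n) z ^ j * (RE z * RE z) = RE z ^ (j + 1) * RE z := by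
      rw [pow_succ, mul_assoc]
    rw [pow_succ, ← mul_assoc, ih, add_mul, mul_assoc, h1, mul_add, ← mul_assoc, smul_mul_assoc,
      add_mul, mul_smul_comm, mul_add, smul_mul_assoc, mul_smul_comm, e1, ← pow_succ, ← pow_succ,
      add_assoc, ← add_smul]
    congr 2; ring

lemma inner_RE {z : ℂ} (hz : z.im ≠ 0) (j : ℕ) (f g : Sch n) :
    inner ℂ (toL ((RE z ^ j) f)) (toL g) =
      inner ℂ (toL f) (toL ((RE (starRingEnd ℂ z) ^ j) g)) := by
  induction j generalizing f g with
  | zero => simp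
  | succ j ih =>
    have e : inner ℂ (toL (RE z ((RE z ^ j) f))) (toL g) =
      inner ℂ (toL ((RE z ^ j) f)) (toL (RE (starRingEnd ℂ z) g)) := inner_RS hz _ _
    rw [pow_succ', Module.End.mul_apply, e, ih, pow_succ, Module.End.mul_apply]

lemma quad_bound {p A B F : ℝ} (hA : 0 ≤ A) (hB : 0 ≤ B) (hF : 0 ≤ F)
    (h : p ^ 2 ≤ A * F ^ 2 + B * (p * F)) : p ≤ (A + B + 1) * F := by
  by_contra! hlt
  have h1 : F ≤ p := by nlinarith [mul_nonneg hA hF, mul_nonneg hB hF]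
  have h2 : 0 ≤ p := hF.trans h1
  nlinarith [mul_nonneg hA hF, mul_nonneg hB hF, mul_nonneg (mul_nonneg hA hF) (sub_nonneg.2 h1)]

/-- Gradient bound from bounds on `u` and on `(-Δ - z) u` in a fixed weighted space. -/
lemma grad_bound {a C l0 : ℝ} (ha : 0 ≤ a) (hC : 0 < C) (hl : 0 < l0) :
    ∃ C' : ℝ, 0 < C' ∧ ∀ (l : ℝ) (z : ℂ) (i : ℕ) (u : Sch n) (F : ℝ), l0 ≤ l → z.re = l ^ 2 → 0 ≤ F →
      l ^ (i + 1) * nw a u ≤ C * F → l ^ i * nw a (HS u - z • u) ≤ C * F →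
      ∀ k, l ^ i * nw a (dS k u) ≤ C' * F := by
  refine ⟨C ^ 2 + C ^ 2 / l0 + 2 * a * n * C / l0 + 1, by positivity, ?_⟩
  intro l z i u F hl0 hzre hF h1 h2 k
  have hlp : 0 < l := hl.trans_le hl0
  obtain ⟨Q, hQ⟩ : ∃ Q, Q = nw a u := ⟨_, rfl⟩
  obtain ⟨G, hG⟩ : ∃ G, G = nw a (HS u - z • u) := ⟨_, rfl⟩
  obtain ⟨p, hp⟩ : ∃ p : Fin n → ℝ, p = fun k => nw a (dS k u) := ⟨_, rfl⟩
  have hQ0 : 0 ≤ Q := hQ ▸ nw_nonneg _ _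
  have hG0 : 0 ≤ G := hG ▸ nw_nonneg _ _
  obtain ⟨P, hP⟩ : ∃ P, P = Real.sqrt (∑ i, p i ^ 2) := ⟨_, rfl⟩
  have hP0 : 0 ≤ P := hP ▸ Real.sqrt_nonneg _
  have hP2 : P ^ 2 = ∑ i, p i ^ 2 := by
    rw [hP]; exact Real.sq_sqrt (Finset.sum_nonneg fun i _ => sq_nonneg _)
  have hPp : ∀ i, p i ≤ P := hP ▸ le_sqrt_sum_sq p
  have hS1 : ∑ i, p i ≤ n * P := by
    calc _ ≤ ∑ i : Fin n, P := Finset.sum_le_sum fun i _ => hPp i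
      _ = _ := by simp
  rw [← hQ] at h1
  rw [← hG] at h2
  have hw : P ^ 2 ≤ l ^ 2 * Q ^ 2 + 2 * a * (n * P) * Q + G * Q := by
    have h := (abs_le.1 (weight_est 1 a zero_le_one z u)).2
    have h3 : ‖inner ℂ (toL (HS u - z • u)) (toL (mulS (Jw 1 (-a)) u))‖ ≤ G * Q := by
      have := inner_mulS_le (Jw_temp 1 (-a / 2)) (Jw_temp 1 (a / 2)) (Jw_temp 1 (-a)) (C := 1)
        (fun x => Jw_inv (by ring) x)
        (fun x => by
          rw [abs_of_pos (Jw_pos _ _ _), one_mul, sq, Jw_add]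
          exact le_of_eq (by congr 1; ring)) (HS u - z • u) u
      rw [hG, hQ]
      simpa [nw] using this
    have h4 : 2 * |a| * 1 * ∑ i, ‖toL (mulS (Jw 1 (-a / 2)) (dS i u))‖ * ‖toL (mulS (Jw 1 (-a / 2)) u)‖
        ≤ 2 * a * (n * P) * Q := by
      have e : ∑ i, ‖toL (mulS (Jw 1 (-a / 2)) (dS i u))‖ * ‖toL (mulS (Jw 1 (-a / 2)) u)‖ =
        (∑ i, p i) * Q := by rw [Finset.sum_mul, hp, hQ]; rfl
      rw [e, abs_of_nonneg ha, mul_one, mul_assoc (2 * a)]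
      gcongr
    have h5 : ∑ i, ‖toL (mulS (Jw 1 (-a / 2)) (dS i u))‖ ^ 2 = P ^ 2 := by rw [hP2, hp]; rfl
    have h6 : ‖toL (mulS (Jw 1 (-a / 2)) u)‖ = Q := by rw [hQ]; rfl
    rw [h5, h6, hzre] at h
    rw [h6] at h4
    linarith
  have hli : 0 < l ^ i := pow_pos hlp i
  have hlQ : l ^ i * Q ≤ C * F / l0 := by
    rw [le_div_iff₀ hl]
    calc l ^ i * Q * l0 ≤ l ^ i * Q * l := by gcongr
      _ = l ^ (i + 1) * Q := by ring
      _ ≤ _ := h1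
  have hq : (l ^ i * P) ^ 2 ≤ (C ^ 2 + C ^ 2 / l0) * F ^ 2 + 2 * a * n * C / l0 * ((l ^ i * P) * F) := by
    calc (l ^ i * P) ^ 2 = (l ^ i) ^ 2 * P ^ 2 := by ring
      _ ≤ (l ^ i) ^ 2 * (l ^ 2 * Q ^ 2 + 2 * a * (n * P) * Q + G * Q) := by gcongr
      _ = (l ^ (i + 1) * Q) ^ 2 + 2 * a * n * (l ^ i * P) * (l ^ i * Q) + (l ^ i * G) * (l ^ i * Q) := by
          ring
      _ ≤ (C * F) ^ 2 + 2 * a * n * (l ^ i * P) * (C * F / l0) + (C * F) * (C * F / l0) := by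
          gcongr
      _ = _ := by ring
  have := quad_bound (by positivity) (by positivity) hF hq
  calc l ^ i * nw a (dS k u) ≤ l ^ i * P := by
        gcongr; have := hPp k; rw [hp] at this; exact this
    _ ≤ _ := this

lemma RE_pow_HS {z : ℂ} (hz : z.im ≠ 0) (i : ℕ) (f : Sch n) :
    HS ((RE z ^ (i + 1)) f) - z • (RE z ^ (i + 1)) f = (RE z ^ i) f := by
  rw [pow_succ', Module.End.mul_apply]; exact HS_RS hz _

lemma coord_nw {a : ℝ} (k : Fin n) (u : Sch n) :
    nw (a + 1) (mulS (fun x : Euc n => x k) u) ≤ nw a u := by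
  have hp : (fun x : Euc n => Jw 1 (-(a + 1) / 2) x * x k).HasTemperateGrowth := by fun_prop
  rw [nw, mulS_mulS (Jw_temp _ _) (coord_temp k) (χ := fun x => Jw 1 (-(a + 1) / 2) x * x k)
    fun _ => rfl]
  have := norm_mulS_le hp (Jw_temp 1 (-a / 2)) (C := 1) (fun x => by
    rw [abs_mul, abs_of_pos (Jw_pos _ _ _), abs_of_pos (Jw_pos _ _ _), one_mul]
    have h := abs_coord_le 1 k x
    rw [one_mul] at h
    calc Jw 1 (-(a + 1) / 2) x * |x k| ≤ Jw 1 (-(a + 1) / 2) x * Jw 1 (1 / 2) x := by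
          have := (Jw_pos 1 (-(a + 1) / 2) x).le
          gcongr
      _ = Jw 1 (-a / 2) x := by rw [Jw_add]; congr 1; ring) u
  rwa [one_mul] at this

lemma nw_DS_le (a : ℝ) (u : Sch n) : nw (a + 1) (DS u) ≤ ∑ k, nw a (dS k u) := by
  rw [DS_apply]
  exact (nw_sum_le _ _).trans (Finset.sum_le_sum fun k _ => coord_nw k _)

lemma inner_DS (f v : Sch n) :
    inner ℂ (toL (DS f)) (toL v) = - inner ℂ (toL f) (toL (DS v + (n : ℂ) • v)) := by
  have h : ∀ k, inner ℂ (toL (mulS (fun x : Euc n => x k) (dS k f))) (toL v) =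
      - (inner ℂ (toL f) (toL (mulS (fun x : Euc n => x k) (dS k v))) + inner ℂ (toL f) (toL v)) := by
    intro k
    rw [inner_mulS (coord_temp k), inner_dS, dS_mul_coord, if_pos rfl, map_add, inner_add_right]
  rw [DS_apply, map_sum, sum_inner, Finset.sum_congr rfl fun k _ => h k, Finset.sum_neg_distrib,
    Finset.sum_add_distrib, DS_apply, map_add, inner_add_right, map_sum, inner_sum, map_smul,
    inner_smul_right]
  simp

/-- The region of spectral parameters `z` with `Re z = l²`, close to the real axis. -/
def Reg (l0 l : ℝ) (z : ℂ) : Prop := l0 ≤ l ∧ z.re = l ^ 2 ∧ z.im ≠ 0 ∧ |z.im| ≤ 1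

/-- Weighted bounds for the powers of the free resolvent on Schwartz functions: the first bound is
the sharp one, the second concerns one power fewer and is carried along for the induction. -/
theorem free_pow {b l0 : ℝ} (hb : 1/2 < b) (hb' : b ≤ 1) (hl : 0 < l0) (j : ℕ) :
    ∃ C : ℝ, 0 < C ∧ ∀ (l : ℝ) (z : ℂ), Reg l0 l z → ∀ f : Sch n,
      l ^ (j + 1) * nw (b + j) ((RE z ^ (j + 1)) f) ≤ C * nw (-(b + j)) f ∧
      l ^ j * nw (b + j) ((RE z ^ j) f) ≤ C * nw (-(b + j)) f := by
  induction j with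
  | zero =>
    obtain ⟨C, hC, h⟩ := free_base (n := n) (ε := b - 1/2) (by linarith) (by linarith) hl
    refine ⟨C + 1, by linarith, fun l z hz f => ⟨?_, ?_⟩⟩
    · have h1 := h l z hz.1 hz.2.1 hz.2.2.2 (RE z f)
      have h2 : HS (RE z f) - z • RE z f = f := HS_RS hz.2.2.1 f
      rw [h2, show (1/2 + (b - 1/2)) = b by ring] at h1
      have e : nw (-b) f = ‖toL (mulS (Jw 1 (b / 2)) f)‖ := by rw [nw, neg_neg]
      simp only [Nat.cast_zero, add_zero, zero_add, pow_one]
      rw [e]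
      refine h1.trans ?_
      gcongr; linarith
    · simp only [Nat.cast_zero, add_zero, pow_zero, one_mul, Module.End.one_apply]
      have := nw_mono (a := -b) (a' := b) (by linarith) f
      nlinarith [nw_nonneg (-b) f]
  | succ i ih =>
    obtain ⟨C, hC, h⟩ := ih
    obtain ⟨C', hC', hg⟩ := grad_bound (n := n) (a := b + i) (by positivity) hC hl
    have ea : b + ((i + 1 : ℕ) : ℝ) = b + i + 1 := by push_cast; ring
    rw [ea]
    -- bounds for `R^{i+1} f` and for its dilation derivative
    have hF : ∀ f : Sch n, nw (-(b + i)) f ≤ nw (-(b + i + 1)) f := fun f => nw_mono (by linarith) f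
    have key1 : ∀ (l : ℝ) (z : ℂ), Reg l0 l z → ∀ f : Sch n,
        l ^ i * nw (b + i + 1) ((RE z ^ (i + 1)) f) ≤ C / l0 * nw (-(b + i + 1)) f := by
      intro l z hz f
      have hlp : 0 < l := hl.trans_le hz.1
      have h1 := (h l z hz f).1
      have h0 := nw_mono (a := b + i) (a' := b + i + 1) (by linarith) ((RE z ^ (i + 1)) f)
      rw [div_mul_eq_mul_div, le_div_iff₀ hl]
      calc _ ≤ l ^ i * nw (b + i) ((RE z ^ (i + 1)) f) * l := by
            have := nw_nonneg (b + i) ((RE z ^ (i + 1)) f)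
            gcongr; exact hz.1
        _ = l ^ (i + 1) * nw (b + i) ((RE z ^ (i + 1)) f) := by ring
        _ ≤ _ := h1.trans (by gcongr; exact hF f)
    have key2 : ∀ (l : ℝ) (z : ℂ), Reg l0 l z → ∀ f : Sch n,
        l ^ i * nw (b + i + 1) (DS ((RE z ^ (i + 1)) f)) ≤ n * C' * nw (-(b + i + 1)) f := by
      intro l z hz f
      have hlp : 0 < l := hl.trans_le hz.1
      have h1 := hg l z i ((RE z ^ (i + 1)) f) (nw (-(b + i)) f) hz.1 hz.2.1 (nw_nonneg _ _)
        (h l z hz f).1 (by rw [RE_pow_HS hz.2.2.1]; exact (h l z hz f).2)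
      calc _ ≤ l ^ i * ∑ k, nw (b + i) (dS k ((RE z ^ (i + 1)) f)) := by
            gcongr; exact nw_DS_le _ _
        _ = ∑ k, l ^ i * nw (b + i) (dS k ((RE z ^ (i + 1)) f)) := by rw [Finset.mul_sum]
        _ ≤ ∑ k : Fin n, C' * nw (-(b + i)) f := Finset.sum_le_sum fun k _ => h1 k
        _ = n * C' * nw (-(b + i)) f := by simp; ring
        _ ≤ _ := by gcongr; exact hF f
    -- the dual bound
    have key3 : ∀ (l : ℝ) (z : ℂ), Reg l0 l z → ∀ f : Sch n,
        l ^ i * nw (b + i + 1) ((RE z ^ (i + 1)) (DS f)) ≤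
          (n * C' + n * (C / l0)) * nw (-(b + i + 1)) f := by
      intro l z hz f
      have hlp : 0 < l := hl.trans_le hz.1
      have hz' : Reg l0 l (starRingEnd ℂ z) := by
        refine ⟨hz.1, ?_, ?_, ?_⟩
        · simpa using hz.2.1
        · simpa using hz.2.2.1
        · simpa using hz.2.2.2
      set a := b + i + 1 with ha
      set g := mulS (Jw 1 (-a / 2)) ((RE z ^ (i + 1)) (DS f)) with hgdef
      set v := (RE (starRingEnd ℂ z) ^ (i + 1)) (mulS (Jw 1 (-a / 2)) g) with hv
      have e1 : inner ℂ (toL g) (toL g) = - inner ℂ (toL f) (toL (DS v + (n : ℂ) • v)) := by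
        rw [← inner_DS, hv, ← inner_RE hz.2.2.1]
        exact inner_mulS (Jw_temp _ _) ((RE z ^ (i + 1)) (DS f)) g
      have e2 : nw (-a) (mulS (Jw 1 (-a / 2)) g) = ‖toL g‖ := by
        rw [nw, mulS_mulS (Jw_temp _ _) (Jw_temp _ _) (χ := fun _ => 1), mulS_one]
        exact fun x => Jw_inv (by ring) x
      have k1 := key1 l _ hz' (mulS (Jw 1 (-a / 2)) g)
      have k2 := key2 l _ hz' (mulS (Jw 1 (-a / 2)) g)
      rw [e2, ← hv] at k1 k2
      have e3 : ‖toL g‖ ^ 2 ≤ nw (-a) f * (nw a (DS v) + n * nw a v) := by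
        have : ‖inner ℂ (toL g) (toL g)‖ = ‖toL g‖ ^ 2 := by
          rw [inner_self_real, Complex.norm_real, norm_eq_abs, abs_of_nonneg (sq_nonneg _)]
        rw [← this, e1, norm_neg]
        refine (inner_le_nw a _ _).trans ?_
        have := nw_add_le a (DS v) ((n : ℂ) • v)
        rw [nw_smul, Complex.norm_natCast] at this
        gcongr; exact nw_nonneg _ _
      have e4 : l ^ i * ‖toL g‖ ^ 2 ≤ (n * C' + n * (C / l0)) * nw (-a) f * ‖toL g‖ := by
        have hF0 := nw_nonneg (-a) f
        calc _ ≤ l ^ i * (nw (-a) f * (nw a (DS v) + n * nw a v)) := by gcongr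
          _ = nw (-a) f * (l ^ i * nw a (DS v) + n * (l ^ i * nw a v)) := by ring
          _ ≤ nw (-a) f * (n * C' * ‖toL g‖ + n * (C / l0 * ‖toL g‖)) := by gcongr
          _ = _ := by ring
      change l ^ i * ‖toL g‖ ≤ _
      rcases eq_or_lt_of_le (norm_nonneg (toL g)) with h0 | h0
      · rw [← h0, mul_zero]
        have := nw_nonneg (-a) f
        positivity
      · have : l ^ i * ‖toL g‖ * ‖toL g‖ ≤ (n * C' + n * (C / l0)) * nw (-a) f * ‖toL g‖ := by
          linarith
        exact le_of_mul_le_mul_right this h0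
    refine ⟨(n * C' + (n * C' + n * (C / l0))) + C / l0 + C, by positivity, fun l z hz f => ?_⟩
    have hlp : 0 < l := hl.trans_le hz.1
    have hF0 := nw_nonneg (-(b + i + 1)) f
    constructor
    · -- `2(i+1) z R^{i+2} = D R^{i+1} - R^{i+1} D - 2(i+1) R^{i+1}`
      have h1 := LinearMap.congr_fun (DS_RE (n := n) hz.2.2.1 (i + 1)) f
      simp only [Module.End.mul_apply, LinearMap.add_apply, LinearMap.smul_apply] at h1
      have h2 : (2 * ((i : ℂ) + 1)) • (z • (RE z ^ (i + 1 + 1)) f) = DS ((RE z ^ (i + 1)) f) -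
          (RE z ^ (i + 1)) (DS f) - (2 * ((i : ℂ) + 1)) • (RE z ^ (i + 1)) f := by
        rw [h1, smul_add, ← Nat.cast_smul_eq_nsmul ℂ, ← Nat.cast_smul_eq_nsmul ℂ]
        push_cast; abel
      set a := b + i + 1 with ha
      have h3 := congrArg (nw a) h2
      have hn2 : ‖(2 * ((i : ℂ) + 1))‖ = 2 * (i + 1) := by
        rw [show (2 * ((i : ℂ) + 1)) = ((2 * (i + 1) : ℝ) : ℂ) by push_cast; ring, Complex.norm_real,
          norm_eq_abs, abs_of_nonneg (by positivity)]
      rw [nw_smul, nw_smul, hn2] at h3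
      have h4 := nw_sub_le a (DS ((RE z ^ (i + 1)) f) - (RE z ^ (i + 1)) (DS f))
        ((2 * ((i : ℂ) + 1)) • (RE z ^ (i + 1)) f)
      have h5 := nw_sub_le a (DS ((RE z ^ (i + 1)) f)) ((RE z ^ (i + 1)) (DS f))
      rw [nw_smul, hn2] at h4
      rw [← h3] at h4
      have hzl : l ^ 2 ≤ ‖z‖ := by rw [← hz.2.1]; exact Complex.re_le_norm z
      set N := nw a ((RE z ^ (i + 1 + 1)) f) with hN
      have hN0 : 0 ≤ N := nw_nonneg _ _
      have h6 : l ^ 2 * N ≤ nw a (DS ((RE z ^ (i + 1)) f)) + nw a ((RE z ^ (i + 1)) (DS f)) +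
          nw a ((RE z ^ (i + 1)) f) := by
        have hi : (1:ℝ) ≤ 2 * (i + 1) := by
          have : (0:ℝ) ≤ i := i.cast_nonneg
          linarith
        have q1 := nw_nonneg a (DS ((RE z ^ (i + 1)) f))
        have q2 := nw_nonneg a ((RE z ^ (i + 1)) (DS f))
        have : 2 * ((i:ℝ) + 1) * (‖z‖ * N) ≤ 2 * (i + 1) * (nw a (DS ((RE z ^ (i + 1)) f)) +
          nw a ((RE z ^ (i + 1)) (DS f)) + nw a ((RE z ^ (i + 1)) f)) := by nlinarith
        have := le_of_mul_le_mul_left this (by linarith)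
        exact le_trans (by gcongr) this
      calc l ^ (i + 1 + 1) * N = l ^ i * (l ^ 2 * N) := by ring
        _ ≤ l ^ i * (nw a (DS ((RE z ^ (i + 1)) f)) + nw a ((RE z ^ (i + 1)) (DS f)) +
          nw a ((RE z ^ (i + 1)) f)) := by gcongr
        _ = l ^ i * nw a (DS ((RE z ^ (i + 1)) f)) + l ^ i * nw a ((RE z ^ (i + 1)) (DS f)) +
          l ^ i * nw a ((RE z ^ (i + 1)) f) := by ring
        _ ≤ n * C' * nw (-a) f + (n * C' + n * (C / l0)) * nw (-a) f + C / l0 * nw (-a) f :=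
          add_le_add (add_le_add (key2 l z hz f) (key3 l z hz f)) (key1 l z hz f)
        _ ≤ _ := by nlinarith
    · have h1 := (h l z hz f).1
      have h0 := nw_mono (a := b + i) (a' := b + i + 1) (by linarith) ((RE z ^ (i + 1)) f)
      calc _ ≤ l ^ (i + 1) * nw (b + i) ((RE z ^ (i + 1)) f) := by gcongr
        _ ≤ C * nw (-(b + i)) f := h1
        _ ≤ C * nw (-(b + i + 1)) f := by gcongr; exact hF f
        _ ≤ _ := by
          gcongr
          have : 0 ≤ (n * C' + (n * C' + n * (C / l0))) + C / l0 := by positivity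
          linarith

/-! ### Multiplication operators and weighted norms -/

/-- The bounded operators on `L²`. -/
abbrev Op (n : ℕ) := L2 n →L[ℂ] L2 n

/-- Bounded measurable real functions. -/
def Bdd (φ : Euc n → ℝ) : Prop := Measurable φ ∧ ∃ C : ℝ, ∀ x, |φ x| ≤ C

lemma Bdd.memLp {φ : Euc n → ℝ} (hφ : Bdd φ) (f : L2 n) :
    MemLp (fun x => (φ x : ℂ) * f x) 2 volume := by
  obtain ⟨C, hC⟩ := hφ.2
  refine (Lp.memLp f).of_le_mul (c := C)
    ((Complex.measurable_ofReal.comp hφ.1).aestronglyMeasurable.mul (Lp.aestronglyMeasurable f)) ?_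
  refine Eventually.of_forall fun x => ?_
  rw [norm_mul, Complex.norm_real]
  exact mul_le_mul_of_nonneg_right (hC x) (norm_nonneg _)

lemma Bdd.mul {φ ψ : Euc n → ℝ} (hφ : Bdd φ) (hψ : Bdd ψ) : Bdd fun x => φ x * ψ x := by
  obtain ⟨C, hC⟩ := hφ.2
  obtain ⟨D, hD⟩ := hψ.2
  refine ⟨hφ.1.mul hψ.1, C * D, fun x => ?_⟩
  rw [abs_mul]
  exact mul_le_mul (hC x) (hD x) (abs_nonneg _) ((abs_nonneg _).trans (hC x))

open Classical in
/-- Multiplication by a bounded measurable real function as an operator on `L²`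
(zero when the function is not bounded and measurable). -/
def mulOp (φ : Euc n → ℝ) : Op n :=
  if h : Bdd φ then
    LinearMap.mkContinuousOfExistsBound
      { toFun := fun f => (h.memLp f).toLp
        map_add' := by
          intro f g
          rw [← MemLp.toLp_add]
          refine MemLp.toLp_congr _ _ ?_
          filter_upwards [Lp.coeFn_add f g] with x hx
          change (φ x : ℂ) * (f + g : L2 n) x = φ x * f x + φ x * g x
          rw [hx, Pi.add_apply, mul_add]
        map_smul' := by
          intro c f
          rw [RingHom.id_apply, ← MemLp.toLp_const_smul]
          refine MemLp.toLp_congr _ _ ?_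
          filter_upwards [Lp.coeFn_smul c f] with x hx
          simp [hx, mul_left_comm] }
      (by
        obtain ⟨C, hC⟩ := h.2
        refine ⟨C, fun f => Lp.norm_le_mul_norm_of_ae_le_mul ?_⟩
        filter_upwards [(h.memLp f).coeFn_toLp] with x hx
        simp only [LinearMap.coe_mk, AddHom.coe_mk]
        rw [hx, norm_mul, Complex.norm_real]
        exact mul_le_mul_of_nonneg_right (hC x) (norm_nonneg _))
  else 0

lemma mulOp_ae {φ : Euc n → ℝ} (h : Bdd φ) (f : L2 n) :
    (mulOp φ f : Euc n → ℂ) =ᵐ[volume] fun x => (φ x : ℂ) * f x := by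
  have : mulOp φ f = (h.memLp f).toLp := by rw [mulOp, dif_pos h]; rfl
  rw [this]; exact (h.memLp f).coeFn_toLp

lemma mulOp_mul {φ ψ χ : Euc n → ℝ} (hφ : Bdd φ) (hψ : Bdd ψ) (h : ∀ x, φ x * ψ x = χ x) :
    mulOp φ * mulOp ψ = mulOp χ := by
  have hχ : Bdd χ := by rw [← funext h]; exact hφ.mul hψ
  ext1 f
  apply Lp.ext
  filter_upwards [mulOp_ae hφ (mulOp ψ f), mulOp_ae hψ f, mulOp_ae hχ f] with x h1 h2 h3
  rw [mul_apply_eq_comp, h1, h2, h3, ← h]; push_cast; ring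

lemma mulOp_add {φ ψ χ : Euc n → ℝ} (hφ : Bdd φ) (hψ : Bdd ψ) (hχ : Bdd χ)
    (h : ∀ x, φ x + ψ x = χ x) : mulOp φ + mulOp ψ = mulOp χ := by
  ext1 f
  apply Lp.ext
  rw [add_apply]
  filter_upwards [mulOp_ae hφ f, mulOp_ae hψ f, mulOp_ae hχ f,
    Lp.coeFn_add (mulOp φ f) (mulOp ψ f)] with x h1 h2 h3 h4
  rw [h4, Pi.add_apply, h1, h2, h3, ← h]; push_cast; ring

lemma norm_mulOp_le {φ : Euc n → ℝ} (hφ : Measurable φ) {C : ℝ} (hC : ∀ x, |φ x| ≤ C) :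
    ‖mulOp φ‖ ≤ C := by
  have h : Bdd φ := ⟨hφ, C, hC⟩
  have hC0 : 0 ≤ C := (abs_nonneg _).trans (hC 0)
  refine ContinuousLinearMap.opNorm_le_bound _ hC0 fun f => Lp.norm_le_mul_norm_of_ae_le_mul ?_
  filter_upwards [mulOp_ae h f] with x hx
  rw [hx, norm_mul, Complex.norm_real]
  exact mul_le_mul_of_nonneg_right (hC x) (norm_nonneg _)

lemma inner_mulOp {φ : Euc n → ℝ} (hφ : Bdd φ) (f g : L2 n) :
    inner ℂ (mulOp φ f) g = inner ℂ f (mulOp φ g) := by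
  rw [L2.inner_def, L2.inner_def]
  refine integral_congr_ae ?_
  filter_upwards [mulOp_ae hφ f, mulOp_ae hφ g] with x h1 h2
  rw [h1, h2]; simp; ring

lemma mulOp_toL {φ : Euc n → ℝ} (hφ : Bdd φ) (hφ' : φ.HasTemperateGrowth) (f : Sch n) :
    mulOp φ (toL f) = toL (mulS φ f) := by
  apply Lp.ext
  filter_upwards [mulOp_ae hφ (toL f), toL_ae f, toL_ae (mulS φ f)] with x h1 h2 h3
  rw [h1, h2, h3, mulS_apply hφ']

lemma Jw_meas (r : ℝ) : Measurable (Jw 1 r : Euc n → ℝ) := by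
  unfold Jw; fun_prop

lemma Jw_bdd {r : ℝ} (h : r ≤ 0) : Bdd (Jw 1 r : Euc n → ℝ) :=
  ⟨Jw_meas r, 1, fun x => by rw [abs_of_pos (Jw_pos _ _ _)]; exact Jw_le_one h x⟩

/-- The weight operator `⟨x⟩^{-a}`. -/
def W (a : ℝ) : Op n := mulOp (Jw 1 (-a / 2))

lemma W_mul {a b : ℝ} (ha : 0 ≤ a) (hb : 0 ≤ b) : (W a * W b : Op n) = W (a + b) :=
  mulOp_mul (Jw_bdd (by linarith)) (Jw_bdd (by linarith)) fun x => by
    rw [Jw_add]; congr 1; ring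

lemma norm_W {a : ℝ} (ha : 0 ≤ a) : ‖(W a : Op n)‖ ≤ 1 :=
  norm_mulOp_le (Jw_meas _) fun x => by
    rw [abs_of_pos (Jw_pos _ _ _)]; exact Jw_le_one (by linarith) x

/-- The weighted operator norm `‖⟨x⟩^{-p} S ⟨x⟩^{-q}‖`. -/
def N (p q : ℝ) (S : Op n) : ℝ := ‖W p * S * W q‖

lemma N_nonneg (p q : ℝ) (S : Op n) : 0 ≤ N p q S := norm_nonneg _

lemma N_add (p q : ℝ) (S S' : Op n) : N p q (S + S') ≤ N p q S + N p q S' := by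
  unfold N; rw [mul_add, add_mul]; exact norm_add_le _ _

lemma N_sub (p q : ℝ) (S S' : Op n) : N p q (S - S') ≤ N p q S + N p q S' := by
  unfold N; rw [mul_sub, sub_mul]; exact norm_sub_le _ _

lemma N_mono {p q p' q' : ℝ} (hp : 0 ≤ p) (hq : 0 ≤ q) (h : p ≤ p') (h' : q ≤ q') (S : Op n) :
    N p' q' S ≤ N p q S := by
  have e1 : (W p' : Op n) = W (p' - p) * W p := by rw [W_mul (by linarith) hp]; congr 1; ring
  have e2 : (W q' : Op n) = W q * W (q' - q) := by rw [W_mul hq (by linarith)]; congr 1; ring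
  unfold N
  calc ‖W p' * S * W q'‖ = ‖W (p' - p) * (W p * S * W q) * W (q' - q)‖ := by
        rw [e1, e2]; simp only [mul_assoc]
    _ ≤ ‖(W (p' - p) : Op n)‖ * ‖W p * S * W q‖ * ‖(W (q' - q) : Op n)‖ := by
        refine (norm_mul_le _ _).trans ?_
        gcongr; exact norm_mul_le _ _
    _ ≤ 1 * ‖W p * S * W q‖ * 1 := by
        gcongr
        · exact norm_W (by linarith)
        · exact norm_W (by linarith)
    _ = _ := by ring

/-- Splitting the decay of `V` between its two neighbours. -/
lemma N_V {V : Euc n → ℝ} (hVm : Measurable V) {C₀ δ : ℝ}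
    (hV : ∀ x, |V x| ≤ C₀ * Jw 1 (-δ / 2) x) {p q : ℝ} (hp : 0 ≤ p) (hq : 0 ≤ q)
    (h : p + q ≤ δ) (r t : ℝ) (S S' : Op n) :
    N r t (S * mulOp V * S') ≤ C₀ * N r p S * N q t S' := by
  have hC : 0 ≤ C₀ := by
    have := (abs_nonneg _).trans (hV 0)
    exact nonneg_of_mul_nonneg_left this (Jw_pos _ _ _)
  have hU : ∀ x, |V x * Jw 1 ((p + q) / 2) x| ≤ C₀ := by
    intro x
    rw [abs_mul, abs_of_pos (Jw_pos 1 ((p + q) / 2) x)]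
    calc _ ≤ C₀ * Jw 1 (-δ / 2) x * Jw 1 ((p + q) / 2) x := by
          have := Jw_pos 1 ((p + q) / 2) x
          gcongr; exact hV x
      _ = C₀ * Jw 1 (-δ / 2 + (p + q) / 2) x := by rw [mul_assoc, Jw_add]
      _ ≤ C₀ * 1 := by gcongr; exact Jw_le_one (by linarith) x
      _ = _ := mul_one _
  have hUm : Measurable fun x => V x * Jw 1 ((p + q) / 2) x := hVm.mul (Jw_meas _)
  have hb : Bdd fun x => V x * Jw 1 ((p + q) / 2) x := ⟨hUm, C₀, hU⟩
  have e : mulOp V = W p * mulOp (fun x => V x * Jw 1 ((p + q) / 2) x) * W q := by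
    rw [W, W, mulOp_mul (Jw_bdd (by linarith)) hb (fun x => rfl),
      mulOp_mul ((Jw_bdd (by linarith)).mul hb) (Jw_bdd (by linarith))]
    intro x
    have : Jw 1 (-p / 2) x * Jw 1 ((p + q) / 2) x * Jw 1 (-q / 2) x = 1 := by
      rw [Jw_add, Jw_inv (by ring)]
    linear_combination V x * this
  unfold N
  rw [e]
  calc _ = ‖(W r * S * W p) * mulOp (fun x => V x * Jw 1 ((p + q) / 2) x) * (W q * S' * W t)‖ := by
        simp only [mul_assoc]
    _ ≤ ‖W r * S * W p‖ * ‖mulOp (fun x : Euc n => V x * Jw 1 ((p + q) / 2) x)‖ *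
        ‖W q * S' * W t‖ := by
        refine (norm_mul_le _ _).trans ?_
        gcongr; exact norm_mul_le _ _
    _ ≤ ‖W r * S * W p‖ * C₀ * ‖W q * S' * W t‖ := by
        gcongr; exact norm_mulOp_le hUm hU
    _ = _ := by ring

/-! ### Resolvent families on `L²` -/

/-- Resolvent families of self-adjoint operators: the resolvent identity and the norm bound. -/
structure IsRes (P : ℂ → Op n) : Prop where
  ident : ∀ z w : ℂ, z.im ≠ 0 → w.im ≠ 0 → P z - P w = (z - w) • (P z * P w)
  bound : ∀ z : ℂ, z.im ≠ 0 → ‖P z‖ ≤ |z.im|⁻¹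

lemma IsRes.continuousAt {P : ℂ → Op n} (h : IsRes P) {z : ℂ} (hz : z.im ≠ 0) :
    ContinuousAt P z := by
  have h0 : ∀ᶠ w in 𝓝 z, w.im ≠ 0 :=
    (Complex.continuous_im.continuousAt).eventually_ne hz
  rw [ContinuousAt, tendsto_iff_norm_sub_tendsto_zero]
  have h1 : Tendsto (fun w : ℂ => ‖w - z‖ * (|w.im|⁻¹ * |z.im|⁻¹)) (𝓝 z)
      (𝓝 (‖z - z‖ * (|z.im|⁻¹ * |z.im|⁻¹))) := by
    refine Tendsto.mul ?_ (Tendsto.mul ?_ tendsto_const_nhds)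
    · exact (continuous_id.sub continuous_const).norm.continuousAt
    · exact (Complex.continuous_im.abs.continuousAt).inv₀ (abs_ne_zero.2 hz)
  rw [sub_self, norm_zero, zero_mul] at h1
  refine squeeze_zero' (Eventually.of_forall fun _ => norm_nonneg _) ?_ h1
  filter_upwards [h0] with w hw
  rw [h.ident w z hw hz, norm_smul]
  gcongr
  refine (norm_mul_le _ _).trans ?_
  gcongr
  · exact h.bound w hw
  · exact h.bound z hz

lemma IsRes.hasDerivAt {P : ℂ → Op n} (h : IsRes P) {z : ℂ} (hz : z.im ≠ 0) :
    HasDerivAt P (P z * P z) z := by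
  rw [hasDerivAt_iff_tendsto_slope]
  have h0 : ∀ᶠ w in 𝓝[≠] z, w.im ≠ 0 :=
    ((Complex.continuous_im.continuousAt).eventually_ne hz).filter_mono nhdsWithin_le_nhds
  have h1 : Tendsto (fun w => P w * P z) (𝓝[≠] z) (𝓝 (P z * P z)) :=
    ((h.continuousAt hz).mul continuousAt_const).mono_left nhdsWithin_le_nhds
  refine h1.congr' ?_
  filter_upwards [h0, self_mem_nhdsWithin] with w hw hne
  have hne' : w - z ≠ 0 := sub_ne_zero.2 hne
  rw [slope_def_module, h.ident w z hw hz, smul_smul, inv_mul_cancel₀ hne', one_smul]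

lemma IsRes.hasDerivAt_pow {P : ℂ → Op n} (h : IsRes P) {z : ℂ} (hz : z.im ≠ 0) (k : ℕ) :
    HasDerivAt (fun w => P w ^ k) ((k : ℂ) • P z ^ (k + 1)) z := by
  induction k with
  | zero => simpa using hasDerivAt_const z (1 : Op n)
  | succ k ih =>
    have := ih.mul (h.hasDerivAt hz)
    have e : (fun w => P w ^ (k + 1)) = (fun w => P w ^ k) * P := by
      ext1 w; rw [Pi.mul_apply, pow_succ]
    rw [e]
    refine this.congr_deriv ?_
    rw [smul_mul_assoc, ← pow_succ, ← mul_assoc, ← pow_succ, ← pow_succ]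
    push_cast; rw [add_smul, one_smul]

/-- The free resolvent `(-Δ - z)⁻¹` on `L²`. -/
def R0 (z : ℂ) : Op n :=
  LinearMap.extendOfNorm (toL.toLinearMap ∘ₗ RS z : Sch n →ₗ[ℂ] L2 n) toL.toLinearMap

lemma R0_toL {z : ℂ} (hz : z.im ≠ 0) (f : Sch n) : R0 z (toL f) = toL (RS z f) :=
  LinearMap.extendOfNorm_eq (f := (toL.toLinearMap ∘ₗ RS z : Sch n →ₗ[ℂ] L2 n))
    (e := toL.toLinearMap) toL_dense ⟨|z.im|⁻¹, fun x => norm_RS_le hz x⟩ f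

lemma R0_pow_toL {z : ℂ} (hz : z.im ≠ 0) (k : ℕ) (f : Sch n) :
    (R0 z ^ k) (toL f) = toL ((RE z ^ k) f) := by
  induction k with
  | zero => simp
  | succ k ih =>
    rw [pow_succ', pow_succ', mul_apply_eq_comp, ih, R0_toL hz]; rfl

lemma op_ext {S S' : Op n} (h : ∀ f : Sch n, S (toL f) = S' (toL f)) : S = S' :=
  ContinuousLinearMap.ext fun u => congrFun
    (toL_dense.equalizer S.continuous S'.continuous (funext h)) u

lemma isRes_R0 : IsRes (R0 : ℂ → Op n) where
  ident z w hz hw := by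
    refine op_ext fun f => ?_
    rw [sub_apply, smul_apply, mul_apply_eq_comp, R0_toL hz, R0_toL hw, R0_toL hz,
      ← map_smul, ← map_sub]
    congr 1
    have h1 := RS_HS hz (RS w f)
    have h2 := HS_RS hw f
    have h3 : HS (RS w f) - z • RS w f = f - (z - w) • RS w f := by
      rw [sub_smul]; nth_rw 3 [← h2]; abel
    rw [h3, map_sub, map_smul] at h1
    rw [sub_eq_iff_eq_add, ← sub_eq_iff_eq_add']; exact h1
  bound z hz := by
    refine LinearMap.opNorm_extendOfNorm_le toL_dense (by positivity) fun x => norm_RS_le hz x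

lemma inner_R0 {z : ℂ} (hz : z.im ≠ 0) (u v : L2 n) :
    inner ℂ (R0 z u) v = inner ℂ u (R0 (starRingEnd ℂ z) v) := by
  have hz' : (starRingEnd ℂ z).im ≠ 0 := by simpa using hz
  have h1 : ∀ f g : Sch n, inner ℂ (R0 z (toL f)) (toL g) =
      inner ℂ (toL f) (R0 (starRingEnd ℂ z) (toL g)) := fun f g => by
    rw [R0_toL hz, R0_toL hz', inner_RS hz]
  have h2 : ∀ (f : Sch n) (v : L2 n), inner ℂ (R0 z (toL f)) v =
      inner ℂ (toL f) (R0 (starRingEnd ℂ z) v) := fun f v =>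
    toL_dense.induction_on (p := fun v => inner ℂ (R0 z (toL f)) v =
      inner ℂ (toL f) (R0 (starRingEnd ℂ z) v)) v (isClosed_eq (by fun_prop) (by fun_prop)) (h1 f)
  exact toL_dense.induction_on (p := fun u => inner ℂ (R0 z u) v =
      inner ℂ u (R0 (starRingEnd ℂ z) v)) u (isClosed_eq (by fun_prop) (by fun_prop))
      fun f => h2 f v

/-- Weighted estimates on Schwartz functions extend to `L²` by density. -/
lemma N_le_of_nw {S : Op n} {S' : Sch n → Sch n} (hS : ∀ f, S (toL f) = toL (S' f)) {a K : ℝ}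
    (ha : 0 ≤ a) (hK : 0 ≤ K) (h : ∀ f, nw a (S' f) ≤ K * nw (-a) f) : N a a S ≤ K := by
  refine ContinuousLinearMap.opNorm_le_bound _ hK fun u => ?_
  refine toL_dense.induction_on (p := fun u : L2 n => ‖(W a * S * W a : Op n) u‖ ≤ K * ‖u‖) u
    (isClosed_le (by fun_prop) (by fun_prop)) fun g => ?_
  have hb : Bdd (Jw 1 (-a / 2) : Euc n → ℝ) := Jw_bdd (by linarith)
  rw [mul_apply_eq_comp, mul_apply_eq_comp, W, mulOp_toL hb (Jw_temp _ _), hS, mulOp_toL hb (Jw_temp _ _)]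
  refine (h _).trans_eq ?_
  rw [nw, mulS_mulS (Jw_temp _ _) (Jw_temp _ _) (χ := fun _ => 1), mulS_one]
  exact fun x => Jw_inv (by ring) x

/-- The half-strip `Re z ≥ l²`, `0 < σ Im z ≤ e`. -/
def Dom (σ l e : ℝ) : Set ℂ := {z | l ^ 2 ≤ z.re ∧ 0 < σ * z.im ∧ σ * z.im ≤ e}

lemma Dom.im_ne {σ l e : ℝ} {z : ℂ} (hz : z ∈ Dom σ l e) : z.im ≠ 0 := by
  intro h; have := hz.2.1; rw [h] at this; simp at this

lemma Dom_mono {σ l l' e e' : ℝ} (hl : 0 ≤ l) (h : l ≤ l') (he : e' ≤ e) :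
    Dom σ l' e' ⊆ Dom σ l e := fun z hz =>
  ⟨le_trans (by gcongr) hz.1, hz.2.1, hz.2.2.trans he⟩

lemma Dom_convex (σ l e : ℝ) : Convex ℝ (Dom σ l e) := by
  intro z hz w hw a b ha hb hab
  obtain ⟨h1, h2, h3⟩ := hz
  obtain ⟨k1, k2, k3⟩ := hw
  refine ⟨?_, ?_, ?_⟩ <;> simp only [Complex.add_re, Complex.add_im, Complex.real_smul, Complex.mul_re, Complex.mul_im, Complex.ofReal_re, Complex.ofReal_im, zero_mul, sub_zero, add_zero]
  · nlinarith
  · rcases eq_or_lt_of_le ha with h | h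
    · have : b = 1 := by linarith
      subst this; rw [← h]; nlinarith
    · nlinarith [mul_pos h h2, mul_nonneg hb k2.le]
  · nlinarith

/-- Free limiting absorption estimates for powers of the resolvent. -/
lemma free_N {b l0 σ : ℝ} (hb : 1 / 2 < b) (hb1 : b ≤ 1) (hl : 0 < l0) (hσ : |σ| = 1) (k : ℕ) :
    ∃ C : ℝ, 0 < C ∧ ∀ l, l0 ≤ l → ∀ z ∈ Dom σ l 1,
      l ^ (k + 1) * N (b + k) (b + k) (R0 z ^ (k + 1) : Op n) ≤ C := by
  obtain ⟨C, hC, h⟩ := free_pow (n := n) hb hb1 hl k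
  refine ⟨C, hC, fun l hl' z hz => ?_⟩
  have hlp : 0 < l := hl.trans_le hl'
  have him := Dom.im_ne hz
  have hre : 0 ≤ z.re := (sq_nonneg l).trans hz.1
  have hL : l ≤ √z.re := Real.le_sqrt_of_sq_le hz.1
  have hL0 : 0 < √z.re := hlp.trans_le hL
  have hreg : Reg l0 (√z.re) z := by
    refine ⟨hl'.trans hL, (Real.sq_sqrt hre).symm, him, ?_⟩
    have : |z.im| = σ * z.im := by
      rw [← abs_of_pos hz.2.1, abs_mul, hσ, one_mul]
    rw [this]; exact hz.2.2
  have h1 : N (b + k) (b + k) (R0 z ^ (k + 1) : Op n) ≤ C / (√z.re) ^ (k + 1) := by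
    refine N_le_of_nw (S' := fun f => (RE z ^ (k + 1)) f) (R0_pow_toL him _) (by positivity)
      (by positivity) fun f => ?_
    have := (h _ z hreg f).1
    rw [div_mul_eq_mul_div, le_div_iff₀ (by positivity)]
    linarith
  calc _ ≤ (√z.re) ^ (k + 1) * (C / (√z.re) ^ (k + 1)) := by
        gcongr; exact N_nonneg _ _ _
    _ = C := by field_simp

/-! ### Interpolation and Hölder continuity of the free resolvent -/

/-- `⟨x⟩^{-1}`. -/
def rho (x : Euc n) : ℝ := Jw 1 (-1 / 2) x

lemma rho_pos (x : Euc n) : 0 < rho x := Jw_pos _ _ _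
lemma rho_le (x : Euc n) : rho x ≤ 1 := Jw_le_one (by norm_num) x
lemma rho_meas : Measurable (rho : Euc n → ℝ) := Jw_meas _

lemma rho_rpow (a : ℝ) (x : Euc n) : rho x ^ a = Jw 1 (-a / 2) x := by
  rw [rho, Jw, Jw, ← Real.rpow_mul (by linarith [Jw_base 1 x])]; congr 1; ring

/-- The indicator of `ρ > 2^{-N}`. -/
def qf (N : ℕ) (x : Euc n) : ℝ := Set.indicator {x | (1 / 2 : ℝ) ^ N < rho x} (fun _ => 1) x

/-- The indicator of the dyadic shell `2^{-i-1} < ρ ≤ 2^{-i}`. -/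
def pf (i : ℕ) (x : Euc n) : ℝ :=
  Set.indicator {x | (1 / 2 : ℝ) ^ (i + 1) < rho x ∧ rho x ≤ (1 / 2) ^ i} (fun _ => 1) x

lemma qf_meas (N : ℕ) : Measurable (qf N : Euc n → ℝ) :=
  measurable_const.indicator (measurableSet_lt measurable_const rho_meas)

lemma pf_meas (N : ℕ) : Measurable (pf N : Euc n → ℝ) :=
  measurable_const.indicator
    ((measurableSet_lt measurable_const rho_meas).inter (measurableSet_le rho_meas measurable_const))

lemma qf_bdd (N : ℕ) : Bdd (qf N : Euc n → ℝ) :=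
  ⟨qf_meas N, 1, fun x => by unfold qf Set.indicator; split_ifs <;> simp⟩

lemma pf_bdd (N : ℕ) : Bdd (pf N : Euc n → ℝ) :=
  ⟨pf_meas N, 1, fun x => by unfold pf Set.indicator; split_ifs <;> simp⟩

lemma qf_zero : mulOp (qf 0 : Euc n → ℝ) = 0 := by
  have : (mulOp (qf 0 : Euc n → ℝ)) = mulOp (qf 0) + mulOp (qf 0) := by
    refine (mulOp_add (qf_bdd 0) (qf_bdd 0) (qf_bdd 0) fun x => ?_).symm
    have : ¬ ((1 / 2 : ℝ) ^ 0 < rho x) := by simpa using rho_le x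
    simp [qf]; simpa using rho_le x
  simpa using this

lemma qf_succ (N : ℕ) : mulOp (qf (N + 1) : Euc n → ℝ) = mulOp (qf N) + mulOp (pf N) := by
  refine (mulOp_add (qf_bdd _) (pf_bdd _) (qf_bdd _) fun x => ?_).symm
  have h : (1 / 2 : ℝ) ^ (N + 1) ≤ (1 / 2) ^ N := pow_le_pow_of_le_one (by norm_num) (by norm_num) (by simp)
  unfold qf pf Set.indicator
  simp only [Set.mem_ofPred_eq]
  split_ifs with h1 h2 h3 h4 h5 <;> simp <;> grind

lemma qf_sum (N : ℕ) : mulOp (qf N : Euc n → ℝ) = ∑ i ∈ Finset.range N, mulOp (pf i) := by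
  induction N with
  | zero => simpa using qf_zero
  | succ N ih => rw [qf_succ, ih, Finset.sum_range_succ]

lemma norm_pf_W {κ : ℝ} (hκ : 0 ≤ κ) (i : ℕ) :
    ‖mulOp (pf i : Euc n → ℝ) * W κ‖ ≤ (2 : ℝ) ^ (-(i * κ)) := by
  rw [W, mulOp_mul (pf_bdd i) (Jw_bdd (by linarith)) fun x => rfl]
  refine norm_mulOp_le ((pf_meas i).mul (Jw_meas _)) fun x => ?_
  change |pf i x * Jw 1 (-κ / 2) x| ≤ _
  unfold pf Set.indicator
  split_ifs with h
  · rw [one_mul, ← rho_rpow, abs_of_pos (Real.rpow_pos_of_pos (rho_pos x) _)]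
    refine (Real.rpow_le_rpow (rho_pos x).le h.2 hκ).trans_eq ?_
    rw [one_div, inv_pow, ← Real.rpow_natCast, ← Real.rpow_neg (by norm_num), ← Real.rpow_mul (by norm_num)]
    congr 1; ring
  · simp; positivity

/-- On the `i`-th shell the weight `⟨x⟩^{-1}` can be divided out at the cost `2^{i+1}`. -/
lemma pf_factor {κ : ℝ} (hκ : 0 ≤ κ) (i : ℕ) :
    ∃ S : Op n, ‖S‖ ≤ (2 : ℝ) ^ ((i : ℝ) + 1) * (2 : ℝ) ^ (-(i * κ)) ∧
      mulOp (pf i : Euc n → ℝ) * W κ = S * W 1 ∧ mulOp (pf i : Euc n → ℝ) * W κ = W 1 * S := by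
  have hm : Measurable fun x : Euc n => pf i x * Jw 1 (-κ / 2) x * Jw 1 (1 / 2) x :=
    ((pf_meas i).mul (Jw_meas _)).mul (Jw_meas _)
  have hle : ∀ x : Euc n, |pf i x * Jw 1 (-κ / 2) x * Jw 1 (1 / 2) x| ≤
      (2 : ℝ) ^ ((i : ℝ) + 1) * (2 : ℝ) ^ (-(i * κ)) := by
    intro x
    unfold pf Set.indicator
    split_ifs with h
    · have e : Jw 1 (1 / 2) x = (rho x)⁻¹ := by
        rw [rho]
        exact eq_inv_of_mul_eq_one_left (Jw_inv (by norm_num) x)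
      rw [e, one_mul, ← rho_rpow, abs_of_pos (mul_pos (Real.rpow_pos_of_pos (rho_pos x) _) (inv_pos.2 (rho_pos x))), mul_comm]
      have h1 : (rho x)⁻¹ ≤ (2 : ℝ) ^ ((i : ℝ) + 1) := by
        rw [inv_le_comm₀ (rho_pos x) (by positivity)]
        refine le_trans (le_of_eq ?_) h.1.le
        rw [one_div, inv_pow, ← Real.rpow_natCast]; push_cast; rfl
      have h2 : rho x ^ κ ≤ (2 : ℝ) ^ (-(i * κ)) := by
        refine (Real.rpow_le_rpow (rho_pos x).le h.2 hκ).trans_eq ?_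
        rw [one_div, inv_pow, ← Real.rpow_natCast, ← Real.rpow_neg (by norm_num), ← Real.rpow_mul (by norm_num)]
        congr 1; ring
      exact mul_le_mul h1 h2 (Real.rpow_nonneg (rho_pos x).le _) (by positivity)
    · simp; positivity
  have hb : Bdd fun x : Euc n => pf i x * Jw 1 (-κ / 2) x * Jw 1 (1 / 2) x := ⟨hm, _, hle⟩
  refine ⟨mulOp fun x => pf i x * Jw 1 (-κ / 2) x * Jw 1 (1 / 2) x, norm_mulOp_le hm hle, ?_, ?_⟩
  · rw [W, W, mulOp_mul (pf_bdd i) (Jw_bdd (by linarith)) fun x => rfl,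
      mulOp_mul hb (Jw_bdd (by norm_num))]
    intro x
    have := Jw_inv (η := 1) (r := 1 / 2) (s := -1 / 2) (by norm_num) x
    linear_combination (pf i x * Jw 1 (-κ / 2) x) * this
  · rw [W, W, mulOp_mul (pf_bdd i) (Jw_bdd (by linarith)) fun x => rfl,
      mulOp_mul (Jw_bdd (by norm_num)) hb]
    intro x
    have := Jw_inv (η := 1) (r := 1 / 2) (s := -1 / 2) (by norm_num) x
    linear_combination (pf i x * Jw 1 (-κ / 2) x) * this

lemma pf_comm {κ : ℝ} (hκ : 0 ≤ κ) (i : ℕ) :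
    mulOp (pf i : Euc n → ℝ) * W κ = W κ * mulOp (pf i) := by
  rw [W, mulOp_mul (pf_bdd i) (Jw_bdd (by linarith)) fun x => rfl,
    mulOp_mul (Jw_bdd (by linarith)) (pf_bdd i) fun x => mul_comm _ _]

lemma norm_qf_W {κ : ℝ} (hκ : 0 ≤ κ) (N : ℕ) :
    ‖mulOp (qf N : Euc n → ℝ) * W κ - W κ‖ ≤ (2 : ℝ) ^ (-(N * κ)) := by
  rw [W, mulOp_mul (qf_bdd N) (Jw_bdd (by linarith)) fun x => rfl]
  have hb : Bdd fun x : Euc n => (1 - qf N x) * Jw 1 (-κ / 2) x := by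
    have h1 : Bdd fun x : Euc n => 1 - qf N x := by
      refine ⟨(measurable_const.sub (qf_meas N)), 1, fun x => ?_⟩
      change |1 - qf N x| ≤ 1
      unfold qf Set.indicator; split_ifs <;> simp
    exact h1.mul (Jw_bdd (by linarith))
  have hJ : Bdd (Jw 1 (-κ / 2) : Euc n → ℝ) := Jw_bdd (by linarith)
  have := mulOp_add ((qf_bdd N).mul hJ) hb hJ fun x => by ring
  rw [← this, sub_add_cancel_left, norm_neg]
  refine norm_mulOp_le hb.1 fun x => ?_
  unfold qf Set.indicator
  split_ifs with h
  · simp; positivity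
  · rw [sub_zero, one_mul, ← rho_rpow, abs_of_pos (Real.rpow_pos_of_pos (rho_pos x) _)]
    refine (Real.rpow_le_rpow (rho_pos x).le (not_lt.1 h) hκ).trans_eq ?_
    rw [one_div, inv_pow, ← Real.rpow_natCast, ← Real.rpow_neg (by norm_num), ← Real.rpow_mul (by norm_num)]
    congr 1; ring

/-- Elementary interpolation between a bound and a Lipschitz bound. -/
lemma min_bound {t A B ν : ℝ} (hν : 0 < ν) (hν1 : ν < 1) (hA : 0 ≤ A) (hB : 0 ≤ B)
    (h1 : t ≤ A) (h2 : t ≤ A * B) : t ≤ A * B ^ ν := by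
  rcases le_total B 1 with h | h
  · exact h2.trans (by gcongr; exact Real.self_le_rpow_of_le_one hB h hν1.le)
  · exact h1.trans (le_mul_of_one_le_right hA (Real.one_le_rpow h hν.le))

/-- Interpolation between the weights `⟨x⟩^0` and `⟨x⟩^{-1}`, with an arbitrarily small loss. -/
theorem interp {ν η : ℝ} (hν : 0 < ν) (hν1 : ν < 1) (hη : 0 < η) :
    ∃ C : ℝ, 0 < C ∧ ∀ (D : Op n) (A h : ℝ), 0 ≤ A → 0 ≤ h → ‖D‖ ≤ A → ‖W 1 * D * W 1‖ ≤ A * h →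
      ‖W (ν + η) * D * W (ν + η)‖ ≤ C * A * h ^ ν := by
  obtain ⟨r, hr⟩ : ∃ r : ℝ, r = (2 : ℝ) ^ (-η) := ⟨_, rfl⟩
  have hr0 : 0 < r := by rw [hr]; positivity
  have hr1 : r < 1 := by rw [hr]; exact Real.rpow_lt_one_of_one_lt_of_neg (by norm_num) (by linarith)
  have hκ : 0 ≤ ν + η := by linarith
  refine ⟨4 * (1 - r)⁻¹ ^ 2, by have : 0 < 1 - r := by linarith
                                positivity, fun D A h hA hh hD1 hD2 => ?_⟩
  have hterm : ∀ i l : ℕ, ‖(mulOp (pf i) * W (ν + η)) * D * (W (ν + η) * mulOp (pf l))‖ ≤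
      4 * A * h ^ ν * (r ^ i * r ^ l) := by
    intro i l
    obtain ⟨E, hE⟩ : ∃ E : ℝ, E = (2 : ℝ) ^ (-(i * (ν + η))) * (2 : ℝ) ^ (-(l * (ν + η))) := ⟨_, rfl⟩
    have hE0 : 0 ≤ E := by rw [hE]; positivity
    have b1 : ‖(mulOp (pf i) * W (ν + η)) * D * (W (ν + η) * mulOp (pf l))‖ ≤ A * E := by
      rw [← pf_comm hκ l]
      calc _ ≤ ‖mulOp (pf i) * W (ν + η)‖ * ‖D‖ * ‖mulOp (pf l) * W (ν + η)‖ := norm_mul₃_le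
        _ ≤ (2 : ℝ) ^ (-(i * (ν + η))) * A * (2 : ℝ) ^ (-(l * (ν + η))) := by
          gcongr
          · exact norm_pf_W hκ i
          · exact norm_pf_W hκ l
        _ = _ := by rw [hE]; ring
    have b2 : ‖(mulOp (pf i) * W (ν + η)) * D * (W (ν + η) * mulOp (pf l))‖ ≤
        A * E * ((2 : ℝ) ^ ((i : ℝ) + 1) * (2 : ℝ) ^ ((l : ℝ) + 1) * h) := by
      obtain ⟨S, hS, hS1, -⟩ := pf_factor (n := n) hκ i
      obtain ⟨S', hS', -, hS1'⟩ := pf_factor (n := n) hκ l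
      rw [← pf_comm hκ l, hS1, hS1']
      calc _ = ‖S * (W 1 * D * W 1) * S'‖ := by simp only [mul_assoc]
        _ ≤ ‖S‖ * ‖W 1 * D * W 1‖ * ‖S'‖ := norm_mul₃_le
        _ ≤ ((2 : ℝ) ^ ((i : ℝ) + 1) * (2 : ℝ) ^ (-(i * (ν + η)))) * (A * h) *
            ((2 : ℝ) ^ ((l : ℝ) + 1) * (2 : ℝ) ^ (-(l * (ν + η)))) := by gcongr
        _ = _ := by rw [hE]; ring
    refine (min_bound hν hν1 (by positivity) (by positivity) b1 b2).trans ?_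
    have e1 : ∀ j : ℕ, (2 : ℝ) ^ (-(j * (ν + η))) * ((2 : ℝ) ^ ((j : ℝ) + 1)) ^ ν ≤ 2 * r ^ j := by
      intro j
      have : r ^ j = (2 : ℝ) ^ (-(j * η)) := by
        rw [hr, ← Real.rpow_natCast, ← Real.rpow_mul (by norm_num)]; congr 1; ring
      rw [this, ← Real.rpow_mul (by norm_num), ← Real.rpow_add (by norm_num)]
      calc _ ≤ (2 : ℝ) ^ (1 + -(j * η)) :=
            Real.rpow_le_rpow_of_exponent_le (by norm_num) (by nlinarith)
        _ = _ := by rw [Real.rpow_add (by norm_num), Real.rpow_one]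
    rw [Real.mul_rpow (by positivity) hh, Real.mul_rpow (by positivity) (by positivity), hE]
    calc _ = A * h ^ ν * (((2 : ℝ) ^ (-(i * (ν + η))) * ((2 : ℝ) ^ ((i : ℝ) + 1)) ^ ν) *
          ((2 : ℝ) ^ (-(l * (ν + η))) * ((2 : ℝ) ^ ((l : ℝ) + 1)) ^ ν)) := by ring
      _ ≤ A * h ^ ν * ((2 * r ^ i) * (2 * r ^ l)) := by
        refine mul_le_mul_of_nonneg_left ?_ (by positivity)
        exact mul_le_mul (e1 i) (e1 l) (by positivity) (by positivity)
      _ = _ := by ring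
  have hsum : ∀ N : ℕ, ∑ i ∈ Finset.range N, r ^ i ≤ (1 - r)⁻¹ := fun N => by
    rw [← tsum_geometric_of_lt_one hr0.le hr1]
    exact (summable_geometric_of_lt_one hr0.le hr1).sum_le_tsum _ fun i _ => by positivity
  have hN : ∀ N : ℕ, ‖(mulOp (qf N) * W (ν + η)) * D * (mulOp (qf N) * W (ν + η))‖ ≤
      4 * (1 - r)⁻¹ ^ 2 * A * h ^ ν := by
    intro N
    have e : (mulOp (qf N) * W (ν + η)) * D * (mulOp (qf N) * W (ν + η)) =
        ∑ i ∈ Finset.range N, ∑ l ∈ Finset.range N,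
          (mulOp (pf i) * W (ν + η)) * D * (W (ν + η) * mulOp (pf l)) := by
      rw [qf_sum, Finset.sum_mul, Finset.sum_mul, Finset.sum_mul]
      refine Finset.sum_congr rfl fun i _ => ?_
      rw [Finset.mul_sum]
      exact Finset.sum_congr rfl fun l _ => by rw [pf_comm hκ l]
    rw [e]
    calc _ ≤ ∑ i ∈ Finset.range N, ∑ l ∈ Finset.range N, 4 * A * h ^ ν * (r ^ i * r ^ l) := by
          refine (norm_sum_le _ _).trans (Finset.sum_le_sum fun i _ => ?_)
          exact (norm_sum_le _ _).trans (Finset.sum_le_sum fun l _ => hterm i l)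
      _ = 4 * A * h ^ ν * ((∑ i ∈ Finset.range N, r ^ i) * (∑ i ∈ Finset.range N, r ^ i)) := by
          rw [Finset.sum_mul_sum, Finset.mul_sum]
          exact Finset.sum_congr rfl fun i _ => by rw [Finset.mul_sum]
      _ ≤ 4 * A * h ^ ν * ((1 - r)⁻¹ * (1 - r)⁻¹) := by
          have := hsum N
          have h0 : 0 ≤ ∑ i ∈ Finset.range N, r ^ i := Finset.sum_nonneg fun i _ => by positivity
          gcongr
      _ = _ := by ring
  have hlim : Tendsto (fun N : ℕ => mulOp (qf N : Euc n → ℝ) * W (ν + η)) atTop (𝓝 (W (ν + η))) := by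
    rw [tendsto_iff_norm_sub_tendsto_zero]
    refine squeeze_zero (fun _ => norm_nonneg _) (fun N => norm_qf_W hκ N) ?_
    have h2 : Tendsto (fun N : ℕ => ((2 : ℝ) ^ (-(ν + η))) ^ N) atTop (𝓝 0) :=
      tendsto_pow_atTop_nhds_zero_of_lt_one (by positivity)
        (Real.rpow_lt_one_of_one_lt_of_neg (by norm_num) (by linarith))
    refine h2.congr fun N => ?_
    rw [← Real.rpow_natCast, ← Real.rpow_mul (by norm_num)]; congr 1; ring
  exact le_of_tendsto ((hlim.mul_const D).mul hlim).norm (Eventually.of_forall hN)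

/-- Hölder continuity of the powers of the free resolvent. -/
theorem free_holder {b l0 σ ν η : ℝ} (hb : 1 / 2 < b) (hb1 : b ≤ 1) (hl : 0 < l0) (hσ : |σ| = 1)
    (hν : 0 < ν) (hν1 : ν < 1) (hη : 0 < η) (k : ℕ) :
    ∃ C : ℝ, 0 < C ∧ ∀ l, l0 ≤ l → ∀ z ∈ Dom σ l 1, ∀ w ∈ Dom σ l 1,
      l ^ (k + 1) * N (b + η + k + ν) (b + η + k + ν) (R0 z ^ (k + 1) - R0 w ^ (k + 1) : Op n) ≤
        C * (‖z - w‖ / l) ^ ν := by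
  obtain ⟨C1, hC1, h1⟩ := free_N (n := n) hb hb1 hl hσ k
  obtain ⟨C2, hC2, h2⟩ := free_N (n := n) hb hb1 hl hσ (k + 1)
  obtain ⟨C3, hC3, h3⟩ := interp (n := n) hν hν1 hη
  obtain ⟨K, hK⟩ : ∃ K, K = 2 * C1 + (k + 1) * C2 := ⟨_, rfl⟩
  have hK0 : 0 < K := by rw [hK]; positivity
  refine ⟨C3 * K, by positivity, fun l hl' z hz w hw => ?_⟩
  have hlp : 0 < l := hl.trans_le hl'
  have hbk : 0 ≤ b + k := by positivity
  have i1 : ‖(W (b + k) * (R0 z ^ (k + 1) - R0 w ^ (k + 1)) * W (b + k) : Op n)‖ ≤ K / l ^ (k + 1) := by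
    refine (N_sub (b + k) (b + k) _ _).trans ?_
    rw [le_div_iff₀ (by positivity)]
    have q1 := h1 l hl' z hz
    have q2 := h1 l hl' w hw
    have : 0 ≤ (k + 1) * C2 := by positivity
    rw [hK]; linarith
  have i2 : ‖(W 1 * (W (b + k) * (R0 z ^ (k + 1) - R0 w ^ (k + 1)) * W (b + k)) * W 1 : Op n)‖ ≤
      K / l ^ (k + 1) * (‖z - w‖ / l) := by
    have e : ∀ S : Op n, W 1 * (W (b + k) * S * W (b + k)) * W 1 =
        W (b + (k + 1 : ℕ)) * S * W (b + (k + 1 : ℕ)) := by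
      intro S
      have e1 : (W (b + (k + 1 : ℕ)) : Op n) = W 1 * W (b + k) := by
        rw [W_mul (by norm_num) hbk]; congr 1; push_cast; ring
      have e2 : (W (b + (k + 1 : ℕ)) : Op n) = W (b + k) * W 1 := by
        rw [W_mul hbk (by norm_num)]; congr 1; push_cast; ring
      nth_rw 1 [e1]; rw [e2]; simp only [mul_assoc]
    rw [e]
    have hd : ∀ x ∈ Dom σ l 1, HasDerivWithinAt
        (fun x => W (b + (k + 1 : ℕ)) * R0 x ^ (k + 1) * W (b + (k + 1 : ℕ)))
        (W (b + (k + 1 : ℕ)) * (((k + 1 : ℕ) : ℂ) • (R0 x ^ (k + 1 + 1) : Op n)) * W (b + (k + 1 : ℕ)))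
        (Dom σ l 1) x := fun x hx =>
      (((isRes_R0.hasDerivAt_pow (Dom.im_ne hx) (k + 1)).const_mul _).mul_const _).hasDerivWithinAt
    have hbd : ∀ x ∈ Dom σ l 1, ‖W (b + (k + 1 : ℕ)) * (((k + 1 : ℕ) : ℂ) •
        (R0 x ^ (k + 1 + 1) : Op n)) * W (b + (k + 1 : ℕ))‖ ≤ (k + 1) * (C2 / l ^ (k + 2)) := by
      intro x hx
      rw [mul_smul_comm, smul_mul_assoc, norm_smul]
      have q := h2 l hl' x hx
      have : ‖((k + 1 : ℕ) : ℂ)‖ = k + 1 := by rw [Complex.norm_natCast]; push_cast; rfl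
      rw [this]
      gcongr
      rw [le_div_iff₀ (by positivity), mul_comm]; exact q
    have := (Dom_convex σ l 1).norm_image_sub_le_of_norm_hasDerivWithin_le hd hbd hw hz
    rw [← sub_mul, ← mul_sub] at this
    refine this.trans ?_
    have e3 : K / l ^ (k + 1) * (‖z - w‖ / l) = K / l ^ (k + 2) * ‖z - w‖ := by
      rw [pow_succ l (k + 1)]; field_simp
    rw [e3, ← mul_div_assoc]
    gcongr
    rw [hK]; linarith
  have i3 := h3 _ _ _ (by positivity) (by positivity) i1 i2
  have e4 : N (b + η + k + ν) (b + η + k + ν) (R0 z ^ (k + 1) - R0 w ^ (k + 1) : Op n) =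
      ‖W (ν + η) * (W (b + k) * (R0 z ^ (k + 1) - R0 w ^ (k + 1)) * W (b + k)) *
        (W (ν + η) : Op n)‖ := by
    have e1 : (W (b + η + k + ν) : Op n) = W (ν + η) * W (b + k) := by
      rw [W_mul (by linarith) hbk]; congr 1; ring
    have e2 : (W (b + η + k + ν) : Op n) = W (b + k) * W (ν + η) := by
      rw [W_mul hbk (by linarith)]; congr 1; ring
    rw [N]; nth_rw 1 [e1]; rw [e2]; simp only [mul_assoc]
  rw [e4]
  calc _ ≤ l ^ (k + 1) * (C3 * (K / l ^ (k + 1)) * (‖z - w‖ / l) ^ ν) := by gcongr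
    _ = _ := by field_simp

/-! ### The resolvent of the Schrödinger operator -/

/-- The resolvent `(T - z)⁻¹` given by the functional calculus. -/
def Rv (fc : (ℝ → ℂ) → Op n) (z : ℂ) : Op n := fc fun x => ((x : ℂ) - z)⁻¹

section
variable {V : Euc n → ℝ} {T : L2 n →ₗ.[ℂ] L2 n} {fc : (ℝ → ℂ) → Op n}

lemma symm_T (hT : IsSchrodingerOp V T) (u v : T.domain) :
    inner ℂ (T u) (v : L2 n) = inner ℂ (u : L2 n) (T v) := by
  have h := LinearPMap.adjoint_isFormalAdjoint (hT.selfAdjoint.dense_domain)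
  have e : T.adjoint = T := hT.selfAdjoint
  rw [e] at h
  exact h u v

lemma im_le_T (hT : IsSchrodingerOp V T) (z : ℂ) (u : T.domain) :
    |z.im| * ‖(u : L2 n)‖ ≤ ‖T u - z • (u : L2 n)‖ := by
  have h1 := symm_T hT u u
  have h2 : (inner ℂ (u : L2 n) (T u)).im = 0 := by
    have h3 := inner_conj_symm (𝕜 := ℂ) (u : L2 n) (T u)
    rw [h1] at h3
    exact Complex.conj_eq_iff_im.1 h3
  have h4 : (inner ℂ (u : L2 n) (T u - z • (u : L2 n))).im = -z.im * ‖(u : L2 n)‖ ^ 2 := by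
    rw [inner_sub_right, inner_smul_right, inner_self_real, Complex.sub_im, h2, Complex.im_mul_ofReal]
    ring
  have h5 := (Complex.abs_im_le_norm _).trans
    (norm_inner_le_norm (𝕜 := ℂ) (u : L2 n) (T u - z • (u : L2 n)))
  rw [h4, abs_mul, abs_neg, abs_of_nonneg (sq_nonneg ‖(u : L2 n)‖)] at h5
  rcases eq_or_lt_of_le (norm_nonneg (u : L2 n)) with h | h
  · rw [← h, mul_zero]; exact norm_nonneg _
  · refine le_of_mul_le_mul_left ?_ h
    linarith

/-- Uniqueness in the resolvent equation, from the symmetry of `T`. -/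
lemma Rv_eq (hT : IsSchrodingerOp V T) (hfc : IsBorelFunctionalCalculus T fc) {z : ℂ}
    (hz : z.im ≠ 0) (u : L2 n) (v : T.domain) (h : T v = z • (v : L2 n) + u) :
    Rv fc z u = v := by
  obtain ⟨w, hw, hw'⟩ := hfc.resolvent z hz u
  rw [Rv, ← hw]
  have h1 := im_le_T hT z (w - v)
  have h2 : T (w - v) - z • ((w - v : T.domain) : L2 n) = 0 := by
    rw [LinearPMap.map_sub, hw', h, AddSubgroupClass.coe_sub, smul_sub]; abel
  rw [h2, norm_zero] at h1
  have h3 : ‖((w - v : T.domain) : L2 n)‖ = 0 := by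
    have := abs_pos.2 hz
    have := norm_nonneg ((w - v : T.domain) : L2 n)
    nlinarith
  rw [norm_eq_zero, AddSubgroupClass.coe_sub, sub_eq_zero] at h3
  exact h3

lemma isRes_Rv (hT : IsSchrodingerOp V T) (hfc : IsBorelFunctionalCalculus T fc) :
    IsRes (Rv fc) where
  ident z w hz hw := by
    ext1 u
    obtain ⟨v, hv, hv'⟩ := hfc.resolvent w hw u
    have h := Rv_eq hT hfc hz (u + (w - z) • (v : L2 n)) v (by rw [hv', sub_smul]; abel)
    have hv2 : Rv fc w u = v := hv.symm
    rw [sub_apply, smul_apply, mul_apply_eq_comp, hv2]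
    rw [map_add, map_smul] at h
    rw [sub_eq_iff_eq_add]
    nth_rw 2 [← h]
    rw [← neg_sub z w, neg_smul]; abel
  bound z hz := by
    refine ContinuousLinearMap.opNorm_le_bound _ (by positivity) fun u => ?_
    obtain ⟨v, hv, hv'⟩ := hfc.resolvent z hz u
    have h := im_le_T hT z v
    rw [hv', add_sub_cancel_left] at h
    change ‖fc _ u‖ ≤ _
    rw [← hv, inv_mul_eq_div, le_div_iff₀ (abs_pos.2 hz)]
    linarith

lemma inner_Rv (hT : IsSchrodingerOp V T) (hfc : IsBorelFunctionalCalculus T fc) {z : ℂ}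
    (hz : z.im ≠ 0) (f g : L2 n) :
    inner ℂ (Rv fc z f) g = inner ℂ f (Rv fc (starRingEnd ℂ z) g) := by
  have hz' : (starRingEnd ℂ z).im ≠ 0 := by simpa using hz
  obtain ⟨v, hv, hv'⟩ := hfc.resolvent z hz f
  obtain ⟨w, hw, hw'⟩ := hfc.resolvent _ hz' g
  have e1 : Rv fc z f = v := hv.symm
  have e2 : Rv fc (starRingEnd ℂ z) g = w := hw.symm
  have h := symm_T hT v w
  rw [hv', hw', inner_add_left, inner_add_right, inner_smul_left, inner_smul_right] at h
  rw [e1, e2]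
  exact (add_left_cancel h).symm

/-- The second resolvent identity, checked on Schwartz functions, which `R0 z` preserves. -/
lemma Rv_left (hVb : Bdd V) (hT : IsSchrodingerOp V T) (hfc : IsBorelFunctionalCalculus T fc) {z : ℂ}
    (hz : z.im ≠ 0) : Rv fc z = R0 z - Rv fc z * mulOp V * R0 z := by
  refine op_ext fun f => ?_
  rw [sub_apply, mul_apply_eq_comp, mul_apply_eq_comp, R0_toL hz, eq_sub_iff_add_eq, ← map_add]
  obtain ⟨u, hu, hu'⟩ := hT.eq_on_schwartz (RS z f)
  have e : (u : L2 n) = toL (RS z f) := Lp.ext (hu.trans (toL_ae _).symm)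
  rw [← e]
  refine Rv_eq hT hfc hz _ u ?_
  have e2 : T u = toL (HS (RS z f)) + mulOp V u := by
    apply Lp.ext
    filter_upwards [hu, hu', toL_ae (HS (RS z f)), mulOp_ae hVb u,
      Lp.coeFn_add (toL (HS (RS z f))) (mulOp V u)] with x h1 h2 h3 h4 h5
    rw [h5, Pi.add_apply, h2, h3, h4, h1, HS_apply]
  have e3 : HS (RS z f) = z • RS z f + f := (sub_eq_iff_eq_add'.1 (HS_RS hz f))
  rw [e2, e3, map_add, map_smul, e, add_assoc]

/-- The other form of the second resolvent identity, obtained by taking adjoints. -/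
lemma Rv_right (hVb : Bdd V) (hT : IsSchrodingerOp V T) (hfc : IsBorelFunctionalCalculus T fc) {z : ℂ}
    (hz : z.im ≠ 0) : Rv fc z = R0 z - R0 z * mulOp V * Rv fc z := by
  have hz' : (starRingEnd ℂ z).im ≠ 0 := by simpa using hz
  ext1 g
  refine ext_inner_left ℂ fun f => ?_
  have h := congrArg (fun S : Op n => inner ℂ (S f) g) (Rv_left hVb hT hfc hz')
  simp only [sub_apply, mul_apply_eq_comp, inner_sub_left] at h
  rw [inner_Rv hT hfc hz', inner_R0 hz', inner_Rv hT hfc hz', inner_mulOp hVb, inner_R0 hz',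
    Complex.conj_conj] at h
  rw [sub_apply, inner_sub_right, mul_apply_eq_comp, mul_apply_eq_comp]
  exact h

end

/-! ### Perturbation: differences and powers -/

/-- `V` is measurable and `O(⟨x⟩^{-δ})`. -/
structure Pot (V : Euc n → ℝ) (C₀ δ : ℝ) : Prop where
  meas : Measurable V
  pos : 0 < C₀
  dpos : 0 ≤ δ
  le : ∀ x, |V x| ≤ C₀ * Jw 1 (-δ / 2) x

lemma Pot.bdd {V : Euc n → ℝ} {C₀ δ : ℝ} (h : Pot V C₀ δ) : Bdd V :=
  ⟨h.meas, C₀, fun x => (h.le x).trans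
    (mul_le_of_le_one_right h.pos.le (Jw_le_one (by linarith [h.dpos]) x))⟩

/-- `Q` is the resolvent of a self-adjoint perturbation of `-Δ` by `V`. -/
structure Pert (V : Euc n → ℝ) (Q : ℂ → Op n) : Prop where
  res : IsRes Q
  left : ∀ z : ℂ, z.im ≠ 0 → Q z = R0 z - Q z * mulOp V * R0 z
  right : ∀ z : ℂ, z.im ≠ 0 → Q z = R0 z - R0 z * mulOp V * Q z

lemma N_V' {V : Euc n → ℝ} {C₀ δ : ℝ} (hV : Pot V C₀ δ) {p q r : ℝ} (hp : 0 ≤ p) (hq : 0 ≤ q)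
    (hpr : p ≤ r) (hqr : q ≤ r) (h : p + q ≤ δ) (S S' : Op n) :
    N r r (S * mulOp V * S') ≤ C₀ * N p p S * N q q S' := by
  refine (N_V hV.meas hV.le hp hq h r r S S').trans ?_
  have := hV.pos
  have h1 := N_mono hp hp hpr le_rfl S
  have h2 := N_mono hq hq le_rfl hqr S'
  have := N_nonneg q r S'
  have := N_nonneg p p S
  gcongr

/-- The difference of two resolvents factors through the difference of the free ones. -/
lemma Pert.diff {V : Euc n → ℝ} {Q : ℂ → Op n} (h : Pert V Q) {z w : ℂ} (hz : z.im ≠ 0)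
    (hw : w.im ≠ 0) :
    Q z - Q w = ((R0 z - R0 w) - (R0 z - R0 w) * mulOp V * Q w) -
      Q z * mulOp V * ((R0 z - R0 w) - (R0 z - R0 w) * mulOp V * Q w) := by
  have e : Q z * Q w = (R0 z * R0 w - R0 z * R0 w * mulOp V * Q w) -
      Q z * mulOp V * (R0 z * R0 w - R0 z * R0 w * mulOp V * Q w) := by
    conv_lhs => rw [h.left z hz, h.right w hw]
    noncomm_ring
  rw [h.res.ident z w hz hw, isRes_R0.ident z w hz hw, e]
  simp only [smul_sub, smul_mul_assoc, mul_smul_comm, mul_assoc, mul_sub]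

/-- Differences of the perturbed resolvent are controlled by those of the free one, in any weight
`r` that the decay of `V` leaves room for. -/
lemma N_diff {V : Euc n → ℝ} {C₀ δ : ℝ} (hV : Pot V C₀ δ) {Q : ℂ → Op n} (h : Pert V Q) {b r : ℝ}
    (hb : 0 ≤ b) (hbr : b ≤ r) (hδ : b + r ≤ δ) {z w : ℂ} (hz : z.im ≠ 0) (hw : w.im ≠ 0) :
    N r r (Q z - Q w) ≤ (1 + C₀ * N b b (Q z)) * (1 + C₀ * N b b (Q w)) * N r r (R0 z - R0 w : Op n) := by
  rw [h.diff hz hw]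
  obtain ⟨Y, hY⟩ : ∃ Y, Y = (R0 z - R0 w) - (R0 z - R0 w) * mulOp V * Q w := ⟨_, rfl⟩
  rw [← hY]
  have hC := hV.pos
  have h1 : N r r Y ≤ N r r (R0 z - R0 w : Op n) + C₀ * N r r (R0 z - R0 w : Op n) * N b b (Q w) := by
    rw [hY]
    refine (N_sub r r _ _).trans ?_
    gcongr
    exact N_V' hV (by linarith) hb le_rfl hbr (by linarith) _ _
  have h2 : N r r (Y - Q z * mulOp V * Y) ≤ N r r Y + C₀ * N b b (Q z) * N r r Y := by
    refine (N_sub r r _ _).trans ?_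
    gcongr
    exact N_V' hV hb (by linarith) hbr le_rfl (by linarith) _ _
  have := N_nonneg b b (Q z)
  calc _ ≤ (1 + C₀ * N b b (Q z)) * N r r Y := by linarith
    _ ≤ (1 + C₀ * N b b (Q z)) *
        (N r r (R0 z - R0 w : Op n) + C₀ * N r r (R0 z - R0 w : Op n) * N b b (Q w)) := by gcongr
    _ = _ := by ring

/-- Uniform bounds and Hölder continuity of a family of operators on the half-strips, with the
weights and powers of the energy appropriate for a product of `k + 1` resolvents. -/
def Good (σ l0 e b ν : ℝ) (k : ℕ) (F : ℂ → Op n) : Prop :=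
  ∃ C : ℝ, 0 < C ∧ ∀ l, l0 ≤ l → ∀ z ∈ Dom σ l e,
    l ^ (k + 1) * N (b + k) (b + k) (F z) ≤ C ∧
    ∀ w ∈ Dom σ l e, l ^ (k + 1) * N (b + k + ν) (b + k + ν) (F z - F w) ≤ C * (‖z - w‖ / l) ^ ν

lemma Good.congr {σ l0 e b ν : ℝ} {k : ℕ} {F G : ℂ → Op n} (h : Good σ l0 e b ν k F)
    (hFG : ∀ z : ℂ, z.im ≠ 0 → F z = G z) : Good σ l0 e b ν k G := by
  obtain ⟨C, hC, h⟩ := h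
  refine ⟨C, hC, fun l hl z hz => ?_⟩
  rw [← hFG z (Dom.im_ne hz)]
  refine ⟨(h l hl z hz).1, fun w hw => ?_⟩
  rw [← hFG w (Dom.im_ne hw)]
  exact (h l hl z hz).2 w hw

lemma Good.sub {σ l0 e b ν : ℝ} (hl0 : 0 < l0) {k : ℕ} {F G : ℂ → Op n}
    (hF : Good σ l0 e b ν k F) (hG : Good σ l0 e b ν k G) :
    Good σ l0 e b ν k fun z => F z - G z := by
  obtain ⟨C, hC, hF⟩ := hF
  obtain ⟨D, hD, hG⟩ := hG
  refine ⟨C + D, by positivity, fun l hl z hz => ?_⟩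
  have hlp : 0 < l := hl0.trans_le hl
  constructor
  · calc _ ≤ l ^ (k + 1) * (N (b + k) (b + k) (F z) + N (b + k) (b + k) (G z)) := by
          gcongr; exact N_sub _ _ _ _
      _ ≤ _ := by rw [mul_add]; exact add_le_add (hF l hl z hz).1 (hG l hl z hz).1
  · intro w hw
    have e : F z - G z - (F w - G w) = (F z - F w) - (G z - G w) := by abel
    rw [e]
    calc _ ≤ l ^ (k + 1) * (N (b + k + ν) (b + k + ν) (F z - F w) +
          N (b + k + ν) (b + k + ν) (G z - G w)) := by gcongr; exact N_sub _ _ _ _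
      _ ≤ _ := by
        rw [mul_add, add_mul]; exact add_le_add ((hF l hl z hz).2 w hw) ((hG l hl z hz).2 w hw)

lemma mul_aux {l0 l X Y c d : ℝ} (hl0 : 0 < l0) (hl : l0 ≤ l) (hX : 0 ≤ X) (hY : 0 ≤ Y) (i j : ℕ)
    (h1 : l ^ (i + 1) * X ≤ c) (h2 : l ^ (j + 1) * Y ≤ d) :
    l ^ (i + j + 1) * (X * Y) ≤ c * d / l0 := by
  have hlp : 0 < l := hl0.trans_le hl
  rw [le_div_iff₀ hl0]
  calc _ ≤ l ^ (i + j + 1) * (X * Y) * l := by gcongr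
    _ = (l ^ (i + 1) * X) * (l ^ (j + 1) * Y) := by ring
    _ ≤ _ := mul_le_mul h1 h2 (by positivity) ((by positivity : 0 ≤ l ^ (i + 1) * X).trans h1)

/-- Estimates multiply across `V`, whose decay pays for the inner weights of both factors. -/
lemma Good.mulV {V : Euc n → ℝ} {C₀ δ : ℝ} (hV : Pot V C₀ δ) {σ l0 e b ν : ℝ} (hl0 : 0 < l0)
    (hb : 0 ≤ b) (hν : 0 < ν) {i j : ℕ} (hδ : 2 * b + (i + j) + ν ≤ δ) {F G : ℂ → Op n}
    (hF : Good σ l0 e b ν i F) (hG : Good σ l0 e b ν j G) :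
    Good σ l0 e b ν (i + j) fun z => F z * mulOp V * G z := by
  obtain ⟨C, hC, hF⟩ := hF
  obtain ⟨D, hD, hG⟩ := hG
  have hC0 := hV.pos
  refine ⟨2 * (C₀ * (C * D / l0)), by positivity, fun l hl z hz => ?_⟩
  have hlp : 0 < l := hl0.trans_le hl
  have hi : (0:ℝ) ≤ i := i.cast_nonneg
  have hj : (0:ℝ) ≤ j := j.cast_nonneg
  have hij : ((i + j : ℕ) : ℝ) = i + j := by push_cast; ring
  rw [hij]
  constructor
  · calc _ ≤ l ^ (i + j + 1) * (C₀ * N (b + i) (b + i) (F z) * N (b + j) (b + j) (G z)) := by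
          gcongr
          exact N_V' hV (by linarith) (by linarith) (by linarith) (by linarith) (by linarith) _ _
      _ = C₀ * (l ^ (i + j + 1) * (N (b + i) (b + i) (F z) * N (b + j) (b + j) (G z))) := by ring
      _ ≤ C₀ * (C * D / l0) := by
          gcongr
          exact mul_aux hl0 hl (N_nonneg _ _ _) (N_nonneg _ _ _) i j (hF l hl z hz).1 (hG l hl z hz).1
      _ ≤ _ := by
        have : 0 ≤ C₀ * (C * D / l0) := by positivity
        linarith
  · intro w hw
    have e : F z * mulOp V * G z - F w * mulOp V * G w =
        (F z - F w) * mulOp V * G z + F w * mulOp V * (G z - G w) := by noncomm_ring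
    rw [e]
    have i1 : N (b + (i + j) + ν) (b + (i + j) + ν) ((F z - F w) * mulOp V * G z) ≤
        C₀ * N (b + i + ν) (b + i + ν) (F z - F w) * N (b + j) (b + j) (G z) :=
      N_V' hV (by linarith) (by linarith) (by linarith) (by linarith) (by linarith) _ _
    have i2 : N (b + (i + j) + ν) (b + (i + j) + ν) (F w * mulOp V * (G z - G w)) ≤
        C₀ * N (b + i) (b + i) (F w) * N (b + j + ν) (b + j + ν) (G z - G w) :=
      N_V' hV (by linarith) (by linarith) (by linarith) (by linarith) (by linarith) _ _
    have j1 := mul_aux hl0 hl (N_nonneg _ _ _) (N_nonneg _ _ _) i j ((hF l hl z hz).2 w hw)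
      (hG l hl z hz).1
    have j2 := mul_aux hl0 hl (N_nonneg _ _ _) (N_nonneg _ _ _) i j (hF l hl w hw).1
      ((hG l hl z hz).2 w hw)
    obtain ⟨H, hH⟩ : ∃ H, H = (‖z - w‖ / l) ^ ν := ⟨_, rfl⟩
    rw [← hH] at j1 j2 ⊢
    calc _ ≤ l ^ (i + j + 1) * (C₀ * N (b + i + ν) (b + i + ν) (F z - F w) * N (b + j) (b + j) (G z)
          + C₀ * N (b + i) (b + i) (F w) * N (b + j + ν) (b + j + ν) (G z - G w)) := by
          gcongr
          exact (N_add _ _ _ _).trans (add_le_add i1 i2)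
      _ = C₀ * (l ^ (i + j + 1) * (N (b + i + ν) (b + i + ν) (F z - F w) * N (b + j) (b + j) (G z)))
          + C₀ * (l ^ (i + j + 1) *
            (N (b + i) (b + i) (F w) * N (b + j + ν) (b + j + ν) (G z - G w))) := by ring
      _ ≤ C₀ * (C * H * D / l0) + C₀ * (C * (D * H) / l0) := by gcongr
      _ = _ := by ring

/-- Powers of the perturbed resolvent inherit the estimates from the free resolvent. -/
lemma good_pow {V : Euc n → ℝ} {C₀ δ : ℝ} (hV : Pot V C₀ δ) {Q : ℂ → Op n} (hQ : Pert V Q)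
    {σ l0 e b ν : ℝ} (hl0 : 0 < l0) (hb : 0 ≤ b) (hν : 0 < ν) {m : ℕ} (hδ : 2 * b + m + ν ≤ δ)
    (h0 : ∀ k, Good σ l0 e b ν k fun z => (R0 z ^ (k + 1) : Op n)) (h1 : Good σ l0 e b ν 0 Q) :
    ∀ k ≤ m, Good σ l0 e b ν k fun z => Q z ^ (k + 1) := by
  intro k
  induction k using Nat.strong_induction_on with
  | _ k ih =>
    intro hk
    have hcast : ∀ i j : ℕ, i + j = k → 2 * b + ((i:ℝ) + j) + ν ≤ δ := by
      intro i j hij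
      have : ((i + j : ℕ) : ℝ) ≤ m := by exact_mod_cast hij ▸ hk
      push_cast at this; linarith
    -- the mixed products `R0^{i+1} Q^j` with `i + j = k`
    have key : ∀ j i : ℕ, i + j = k → Good σ l0 e b ν k fun z => R0 z ^ (i + 1) * Q z ^ j := by
      intro j
      induction j with
      | zero =>
        intro i hi
        have : i = k := by omega
        subst this
        simpa using h0 i
      | succ j ihj =>
        intro i hi
        have g1 := ihj (i + 1) (by omega)
        have g2 := (h0 (i + 1)).mulV hV hl0 hb hν (hcast (i + 1) j (by omega)) (ih j (by omega) (by omega))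
        rw [show i + 1 + j = k by omega] at g2
        refine (g1.sub hl0 g2).congr fun z hz => ?_
        have := hQ.right z hz
        calc _ = R0 z ^ (i + 1) * (R0 z - R0 z * mulOp V * Q z) * Q z ^ j := by
              rw [pow_succ (R0 z) (i + 1), pow_succ' (Q z) j]; noncomm_ring
          _ = R0 z ^ (i + 1) * Q z ^ (j + 1) := by rw [← this, pow_succ' (Q z) j, mul_assoc]
    have g1 := key k 0 (by omega)
    have g2 := h1.mulV hV hl0 hb hν (hcast 0 k (by omega)) g1
    rw [zero_add] at g2
    refine (g1.sub hl0 g2).congr fun z hz => ?_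
    have := hQ.left z hz
    calc _ = (R0 z - Q z * mulOp V * R0 z) * Q z ^ k := by
          rw [zero_add, pow_one]; noncomm_ring
      _ = Q z ^ (k + 1) := by rw [← this, pow_succ']

/-! ### Uniform limiting absorption bounds -/

lemma free_good {σ l0 e b ν : ℝ} (hb : 1 / 2 < b) (hb1 : b ≤ 1) (hl0 : 0 < l0) (hσ : |σ| = 1)
    (he : e ≤ 1) (hν : 0 < ν) (hν1 : ν < 1) (k : ℕ) :
    Good σ l0 e b ν k fun z => (R0 z ^ (k + 1) : Op n) := by
  obtain ⟨C, hC, h1⟩ := free_N (n := n) hb hb1 hl0 hσ k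
  obtain ⟨D, hD, h2⟩ := free_holder (n := n) (b := (b + 1 / 2) / 2) (η := (b - 1 / 2) / 2)
    (by linarith) (by linarith) hl0 hσ hν hν1 (by linarith) k
  refine ⟨C + D, by positivity, fun l hl z hz => ?_⟩
  have hlp : 0 ≤ l := hl0.le.trans hl
  have hz' := Dom_mono hlp le_rfl he hz
  refine ⟨(h1 l hl z hz').trans (by linarith), fun w hw => ?_⟩
  have := h2 l hl z hz' w (Dom_mono hlp le_rfl he hw)
  rw [show (b + 1 / 2) / 2 + (b - 1 / 2) / 2 + (k:ℝ) + ν = b + k + ν by ring] at this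
  have hH : 0 ≤ (‖z - w‖ / l) ^ ν := by positivity
  refine this.trans ?_
  gcongr
  linarith

/-- At high energy the perturbed resolvent is controlled by the free one. -/
lemma high_energy {V : Euc n → ℝ} {C₀ δ : ℝ} (hV : Pot V C₀ δ) {Q : ℂ → Op n} (hQ : Pert V Q)
    {σ l0 b : ℝ} (hb : 1 / 2 < b) (hb1 : b ≤ 1) (hδ : 2 * b ≤ δ) (hl0 : 0 < l0) (hσ : |σ| = 1) :
    ∃ Λ C : ℝ, l0 ≤ Λ ∧ 0 < C ∧ ∀ l, Λ ≤ l → ∀ z ∈ Dom σ l 1, l * N b b (Q z) ≤ C := by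
  obtain ⟨C, hC, h⟩ := free_N (n := n) hb hb1 hl0 hσ 0
  have hC0 := hV.pos
  refine ⟨max l0 (2 * C₀ * C), 2 * C, le_max_left _ _, by positivity, fun l hl z hz => ?_⟩
  have hl1 : l0 ≤ l := (le_max_left _ _).trans hl
  have hl2 : 2 * C₀ * C ≤ l := (le_max_right _ _).trans hl
  have hlp : 0 < l := hl0.trans_le hl1
  have h1 := h l hl1 z hz
  simp only [zero_add, pow_one, Nat.cast_zero, add_zero] at h1
  have h2 : N b b (Q z) ≤ N b b (R0 z : Op n) + C₀ * N b b (Q z) * N b b (R0 z : Op n) := by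
    conv_lhs => rw [hQ.left z (Dom.im_ne hz)]
    refine (N_sub _ _ _ _).trans ?_
    gcongr
    exact N_V' hV (by linarith) (by linarith) le_rfl le_rfl (by linarith) _ _
  have hX := N_nonneg b b (Q z)
  have hY := N_nonneg b b (R0 z : Op n)
  obtain ⟨X, hX'⟩ : ∃ X, X = N b b (Q z) := ⟨_, rfl⟩
  obtain ⟨Y, hY'⟩ : ∃ Y, Y = N b b (R0 z : Op n) := ⟨_, rfl⟩
  rw [← hX'] at h2 hX ⊢
  rw [← hY'] at h1 h2 hY
  have h3 : C₀ * Y ≤ 1 / 2 := by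
    by_contra hh
    push Not at hh
    nlinarith
  have h4 : X ≤ 2 * Y := by nlinarith
  nlinarith

/-- A bound for the perturbed resolvent in strong weights `a` implies one in the weights `b` of the
free resolvent, by using the resolvent identity on both sides. -/
lemma N_bootstrap {V : Euc n → ℝ} {C₀ δ : ℝ} (hV : Pot V C₀ δ) {Q : ℂ → Op n} (hQ : Pert V Q)
    {a b : ℝ} (hb : 0 ≤ b) (ha : 0 ≤ a) (hab : a + b ≤ δ) {z : ℂ} (hz : z.im ≠ 0) (h2b : 2 * b ≤ δ) :
    N b b (Q z) ≤ N b b (R0 z : Op n) + C₀ * N b b (R0 z : Op n) * N b b (R0 z : Op n) +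
      C₀ * N b b (R0 z : Op n) * (C₀ * N a a (Q z) * N b b (R0 z : Op n)) := by
  have e : Q z = R0 z - R0 z * mulOp V * R0 z + R0 z * mulOp V * (Q z * mulOp V * R0 z) := by
    conv_lhs => rw [hQ.right z hz, hQ.left z hz]
    noncomm_ring
  conv_lhs => rw [e]
  have hC := hV.pos
  have := N_nonneg b b (R0 z : Op n)
  refine (N_add _ _ _ _).trans (add_le_add ((N_sub _ _ _ _).trans (add_le_add le_rfl ?_)) ?_)
  · exact N_V' hV hb hb le_rfl le_rfl (by linarith) _ _
  · refine (N_V hV.meas hV.le hb ha (by linarith) b b _ _).trans ?_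
    gcongr
    exact N_V hV.meas hV.le ha hb hab a b _ _

/-- The boundary resolvent stays bounded, in the smallest admissible weights, locally uniformly in
the energy: the bound at one energy is propagated to neighbouring ones by the Hölder continuity
of the free resolvent. -/
lemma local_bound {V : Euc n → ℝ} {C₀ δ : ℝ} (hV : Pot V C₀ δ) {Q : ℂ → Op n} (hQ : Pert V Q)
    {σ l0 a b : ℝ} (hb : 1 / 2 < b) (hb1 : b ≤ 1) (ha : 0 ≤ a) (hab : a + b ≤ δ) (h2b : 2 * b ≤ δ)
    (hl0 : 0 < l0) (hσ : |σ| = 1) {t : ℝ} (ht : l0 ^ 2 ≤ t)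
    (H : ∃ e1 : ℝ, 0 < e1 ∧ ∃ M : ℝ, ∀ z : ℂ, z.re = t → 0 < σ * z.im → σ * z.im ≤ e1 →
      N a a (Q z) ≤ M) :
    ∃ r : ℝ, 0 < r ∧ ∃ e1 : ℝ, 0 < e1 ∧ ∃ M : ℝ, ∀ z : ℂ, |z.re - t| < r → l0 ^ 2 ≤ z.re →
      0 < σ * z.im → σ * z.im ≤ e1 → N b b (Q z) ≤ M := by
  obtain ⟨e1, he1, M, H⟩ := H
  have hC0 := hV.pos
  obtain ⟨C, hC, h⟩ := free_N (n := n) hb hb1 hl0 hσ 0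
  simp only [zero_add, pow_one, Nat.cast_zero, add_zero] at h
  obtain ⟨ν, hν⟩ : ∃ ν, ν = (b - 1 / 2) / 3 := ⟨_, rfl⟩
  obtain ⟨D, hD, h'⟩ := free_holder (n := n) (b := 1 / 2 + ν) (η := ν) (ν := ν)
    (by linarith) (by linarith) hl0 hσ (by linarith) (by linarith) (by linarith) 0
  simp only [zero_add, pow_one, Nat.cast_zero, add_zero] at h'
  rw [show 1 / 2 + ν + ν + ν = b by rw [hν]; ring] at h'
  -- the bound on the line `Re z = t`
  obtain ⟨M1, hM1, hb1'⟩ : ∃ M1 : ℝ, 0 < M1 ∧ ∀ z : ℂ, z.re = t → 0 < σ * z.im →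
      σ * z.im ≤ min e1 1 → N b b (Q z) ≤ M1 := by
    refine ⟨C / l0 + C₀ * (C / l0) * (C / l0) + C₀ * (C / l0) * (C₀ * |M| * (C / l0)),
      by positivity, fun z hz hz1 hz2 => ?_⟩
    have hzD : z ∈ Dom σ l0 1 := ⟨by rw [hz]; exact ht, hz1, hz2.trans (min_le_right _ _)⟩
    have h1 : N b b (R0 z : Op n) ≤ C / l0 := by
      rw [le_div_iff₀ hl0, mul_comm]; exact h l0 le_rfl z hzD
    have h2 := (H z hz hz1 (hz2.trans (min_le_left _ _))).trans (le_abs_self M)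
    have := N_nonneg b b (R0 z : Op n)
    have := N_nonneg a a (Q z)
    refine (N_bootstrap hV hQ (by linarith) ha hab (Dom.im_ne hzD) h2b).trans ?_
    gcongr
  have hκ : 0 < 1 / (2 * C₀ * (1 + C₀ * M1)) := by positivity
  obtain ⟨r, hr, hr'⟩ : ∃ r : ℝ, 0 < r ∧ ∀ x : ℝ, 0 ≤ x → x < r →
      D * (x / l0) ^ ν / l0 < 1 / (2 * C₀ * (1 + C₀ * M1)) := by
    have hcont : Tendsto (fun x : ℝ => D * (x / l0) ^ ν / l0) (𝓝 0) (𝓝 (D * (0 / l0) ^ ν / l0)) := by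
      refine ContinuousAt.tendsto (f := fun x : ℝ => D * (x / l0) ^ ν / l0) ?_
      refine ContinuousAt.div_const (continuousAt_const.mul ?_) _
      exact (continuousAt_id.div_const l0).rpow_const (Or.inr (by linarith))
    rw [zero_div, zero_rpow (by linarith), mul_zero, zero_div] at hcont
    obtain ⟨r, hr, hr'⟩ := Metric.eventually_nhds_iff.1 (hcont.eventually (gt_mem_nhds hκ))
    exact ⟨r, hr, fun x hx hxr => hr' (by rwa [Real.dist_eq, sub_zero, abs_of_nonneg hx])⟩
  refine ⟨r, hr, min e1 1, by positivity, 2 * (M1 + 1 / (2 * C₀)), fun z hzr hzl hz1 hz2 => ?_⟩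
  obtain ⟨w, hw⟩ : ∃ w : ℂ, w = ⟨t, z.im⟩ := ⟨_, rfl⟩
  have hzD : z ∈ Dom σ l0 1 := ⟨hzl, hz1, hz2.trans (min_le_right _ _)⟩
  have hwD : w ∈ Dom σ l0 1 := by rw [hw]; exact ⟨ht, hz1, hz2.trans (min_le_right _ _)⟩
  have hY : N b b (Q w) ≤ M1 := by
    refine hb1' w (by rw [hw]) ?_ ?_ <;> rw [hw]
    exacts [hz1, hz2]
  have hzw : ‖z - w‖ = |z.re - t| := by
    have : z - w = ((z.re - t : ℝ) : ℂ) := by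
      rw [hw]; apply Complex.ext <;> simp
    rw [this, Complex.norm_real, Real.norm_eq_abs]
  have hDD : N b b (R0 z - R0 w : Op n) ≤ 1 / (2 * C₀ * (1 + C₀ * M1)) := by
    refine le_trans ?_ (hr' |z.re - t| (abs_nonneg _) hzr).le
    rw [le_div_iff₀ hl0, mul_comm, ← hzw]
    exact h' l0 le_rfl z hzD w hwD
  have hdiff := N_diff hV hQ (by linarith) le_rfl (by linarith) (Dom.im_ne hzD) (Dom.im_ne hwD)
    (b := b) (r := b)
  have hX := N_nonneg b b (Q z)
  have hXY : N b b (Q z) ≤ N b b (Q w) + N b b (Q z - Q w) := by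
    conv_lhs => rw [show Q z = Q w + (Q z - Q w) by abel]
    exact N_add _ _ _ _
  have := N_nonneg b b (Q w)
  have := N_nonneg b b (R0 z - R0 w : Op n)
  have h5 : (1 + C₀ * N b b (Q z)) * (1 + C₀ * N b b (Q w)) * N b b (R0 z - R0 w : Op n) ≤
      (1 + C₀ * N b b (Q z)) * (1 + C₀ * M1) * (1 / (2 * C₀ * (1 + C₀ * M1))) := by gcongr
  have h6 : (1 + C₀ * N b b (Q z)) * (1 + C₀ * M1) * (1 / (2 * C₀ * (1 + C₀ * M1))) =
      1 / (2 * C₀) + N b b (Q z) / 2 := by field_simp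
  linarith

/-- The limiting absorption bound at each energy implies the uniform estimate on `[l0, ∞)`. -/
lemma good_base {V : Euc n → ℝ} {C₀ δ : ℝ} (hV : Pot V C₀ δ) {Q : ℂ → Op n} (hQ : Pert V Q)
    {σ l0 a b ν : ℝ} (hb : 1 / 2 < b) (hb1 : b ≤ 1) (ha : 0 ≤ a) (hab : a + b ≤ δ)
    (h2b : 2 * b + ν ≤ δ) (hν : 0 < ν) (hν1 : ν < 1) (hl0 : 0 < l0) (hσ : |σ| = 1)
    (H : ∀ t : ℝ, 0 < t → ∃ e1 : ℝ, 0 < e1 ∧ ∃ M : ℝ, ∀ z : ℂ, z.re = t → 0 < σ * z.im →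
      σ * z.im ≤ e1 → N a a (Q z) ≤ M) :
    ∃ e : ℝ, 0 < e ∧ e ≤ 1 ∧ Good σ l0 e b ν 0 Q := by
  obtain ⟨Λ, C, hΛ, hC, hhigh⟩ := high_energy hV hQ hb hb1 (by linarith) hl0 hσ
  have hΛp : 0 < Λ := hl0.trans_le hΛ
  have hC0 := hV.pos
  obtain ⟨e, he, M, hM⟩ : ∃ e : ℝ, 0 < e ∧ ∃ M : ℝ, ∀ z : ℂ, z.re ∈ Icc (l0 ^ 2) (Λ ^ 2) →
      0 < σ * z.im → σ * z.im ≤ e → N b b (Q z) ≤ M := by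
    refine isCompact_Icc.induction_on (p := fun S : Set ℝ => ∃ e : ℝ, 0 < e ∧ ∃ M : ℝ,
      ∀ z : ℂ, z.re ∈ S → 0 < σ * z.im → σ * z.im ≤ e → N b b (Q z) ≤ M) ?_ ?_ ?_ ?_
    · exact ⟨1, one_pos, 0, fun z hz => absurd hz (Set.notMem_empty _)⟩
    · rintro S S' hSS ⟨e, he, M, h⟩
      exact ⟨e, he, M, fun z hz => h z (hSS hz)⟩
    · rintro S S' ⟨e, he, M, h⟩ ⟨e', he', M', h'⟩
      refine ⟨min e e', by positivity, max M M', fun z hz h1 h2 => ?_⟩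
      rcases hz with hz | hz
      · exact (h z hz h1 (h2.trans (min_le_left _ _))).trans (le_max_left _ _)
      · exact (h' z hz h1 (h2.trans (min_le_right _ _))).trans (le_max_right _ _)
    · intro t ht
      obtain ⟨r, hr, e, he, M, h⟩ := local_bound hV hQ hb hb1 ha hab (by linarith) hl0 hσ ht.1
        (H t (lt_of_lt_of_le (by positivity) ht.1))
      refine ⟨Icc (l0 ^ 2) (Λ ^ 2) ∩ Metric.ball t r,
        inter_mem self_mem_nhdsWithin (mem_nhdsWithin_of_mem_nhds (Metric.ball_mem_nhds t hr)),
        e, he, M, fun z hz h1 h2 => h z ?_ hz.1.1 h1 h2⟩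
      have := hz.2
      rwa [Metric.mem_ball, Real.dist_eq] at this
  have hbd : ∀ l, l0 ≤ l → ∀ z ∈ Dom σ l (min e 1), l * N b b (Q z) ≤ C + Λ * |M| := by
    intro l hl z hz
    have hlp : 0 < l := hl0.trans_le hl
    have hN := N_nonneg b b (Q z)
    rcases le_total (Λ ^ 2) z.re with hzr | hzr
    · have hz' : z ∈ Dom σ (max l Λ) 1 := by
        refine ⟨?_, hz.2.1, hz.2.2.trans (min_le_right _ _)⟩
        rcases max_choice l Λ with h | h <;> rw [h]
        exacts [hz.1, hzr]
      have h1 := hhigh _ (le_max_right l Λ) z hz'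
      have h2 : l * N b b (Q z) ≤ max l Λ * N b b (Q z) := by gcongr; exact le_max_left _ _
      have : 0 ≤ Λ * |M| := by positivity
      linarith
    · have hlΛ : l ≤ Λ := by
        have := hz.1.trans hzr
        exact (pow_le_pow_iff_left₀ hlp.le hΛp.le two_ne_zero).1 this
      have h1 := hM z ⟨(pow_le_pow_left₀ hl0.le hl 2).trans hz.1, hzr⟩ hz.2.1
        (hz.2.2.trans (min_le_left _ _))
      have h2 : l * N b b (Q z) ≤ Λ * |M| := by
        gcongr
        exact h1.trans (le_abs_self M)
      linarith
  obtain ⟨C1, hC1, hbd⟩ : ∃ C1 : ℝ, 0 < C1 ∧ ∀ l, l0 ≤ l → ∀ z ∈ Dom σ l (min e 1),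
      l * N b b (Q z) ≤ C1 := ⟨C + Λ * |M|, by positivity, hbd⟩
  obtain ⟨D, hD, hfree⟩ := free_good (n := n) hb hb1 hl0 hσ (min_le_right e 1) hν hν1 0
  simp only [zero_add, pow_one, Nat.cast_zero, add_zero] at hfree
  have hbd' : ∀ l, l0 ≤ l → ∀ z ∈ Dom σ l (min e 1), N b b (Q z) ≤ C1 / l0 := by
    intro l hl z hz
    rw [le_div_iff₀ hl0, mul_comm]
    exact le_trans (mul_le_mul_of_nonneg_right hl (N_nonneg _ _ _)) (hbd l hl z hz)
  refine ⟨min e 1, by positivity, min_le_right _ _, C1 + (1 + C₀ * (C1 / l0)) ^ 2 * D,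
    by positivity, fun l hl z hz => ?_⟩
  simp only [zero_add, pow_one, Nat.cast_zero, add_zero]
  have hlp : 0 < l := hl0.trans_le hl
  constructor
  · have : 0 ≤ (1 + C₀ * (C1 / l0)) ^ 2 * D := by positivity
    exact (hbd l hl z hz).trans (by linarith)
  · intro w hw
    have h1 := N_diff hV hQ (b := b) (r := b + ν) (by linarith) (by linarith) (by linarith)
      (Dom.im_ne hz) (Dom.im_ne hw)
    have h2 := (hfree l hl z hz).2 w hw
    have hz1 := hbd' l hl z hz
    have hw1 := hbd' l hl w hw
    have := N_nonneg b b (Q z)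
    have := N_nonneg b b (Q w)
    have := N_nonneg (b + ν) (b + ν) (R0 z - R0 w : Op n)
    have hH : 0 ≤ (‖z - w‖ / l) ^ ν := by positivity
    calc _ ≤ l * ((1 + C₀ * (C1 / l0)) * (1 + C₀ * (C1 / l0)) *
          N (b + ν) (b + ν) (R0 z - R0 w : Op n)) := by
          refine mul_le_mul_of_nonneg_left (h1.trans ?_) hlp.le
          gcongr
      _ = (1 + C₀ * (C1 / l0)) ^ 2 * (l * N (b + ν) (b + ν) (R0 z - R0 w : Op n)) := by ring
      _ ≤ (1 + C₀ * (C1 / l0)) ^ 2 * (D * (‖z - w‖ / l) ^ ν) := by gcongr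
      _ ≤ _ := by
        have : 0 ≤ C1 * (‖z - w‖ / l) ^ ν := by positivity
        linarith

/-! ### Boundary values and their regularity -/

section Limit

variable {𝓑 : Type*} [NormedAddCommGroup 𝓑] [NormedSpace ℝ 𝓑] [NormedSpace ℂ 𝓑]
  [IsScalarTower ℝ ℂ 𝓑] [CompleteSpace 𝓑]

/-- A sequence `E q` of functions on `ℂ ∖ ℝ`, each proportional to the derivative of the previous
one (like weighted powers of a resolvent), with uniform bounds and Hölder estimates up to the real
axis for `1 ≤ q ≤ m + 1`. -/
structure BV (σ ν : ℝ) (m : ℕ) (E : ℕ → ℂ → 𝓑) : Prop where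
  deriv : ∀ (q : ℕ) (z : ℂ), z.im ≠ 0 → HasDerivAt (E q) ((q : ℂ) • E (q + 1) z) z
  bound : ∀ l0 : ℝ, 0 < l0 → ∃ e : ℝ, 0 < e ∧ ∃ C : ℝ, 0 < C ∧ ∀ q, 1 ≤ q → q ≤ m + 1 →
    ∀ l, l0 ≤ l → ∀ z ∈ Dom σ l e, l ^ q * ‖E q z‖ ≤ C ∧
      ∀ w ∈ Dom σ l e, l ^ q * ‖E q z - E q w‖ ≤ C * (‖z - w‖ / l) ^ ν

/-- The point `lam² + iσe`. -/
def zt (σ lam e : ℝ) : ℂ := ⟨lam ^ 2, σ * e⟩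

lemma zt_mem {σ l lam e e' : ℝ} (hσ : |σ| = 1) (hl : 0 ≤ l) (h : l ≤ lam) (he : 0 < e)
    (he' : e ≤ e') : zt σ lam e ∈ Dom σ l e' := by
  have hs : σ * (σ * e) = e := by
    have : σ * σ = 1 := by rw [← abs_mul_abs_self, hσ]; ring
    rw [← mul_assoc, this, one_mul]
  refine ⟨pow_le_pow_left₀ hl h 2, ?_, ?_⟩ <;> simp only [zt, hs] <;> assumption

lemma zt_sub (σ lam e e' : ℝ) (hσ : |σ| = 1) : ‖zt σ lam e - zt σ lam e'‖ = |e - e'| := by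
  have : zt σ lam e - zt σ lam e' = ((σ * (e - e') : ℝ) : ℂ) * Complex.I := by
    apply Complex.ext <;> simp [zt, mul_sub]
  rw [this, norm_mul, Complex.norm_I, mul_one, Complex.norm_real, Real.norm_eq_abs, abs_mul, hσ,
    one_mul]

lemma zt_sub' (σ lam lam' e : ℝ) : ‖zt σ lam e - zt σ lam' e‖ = |lam ^ 2 - lam' ^ 2| := by
  have : zt σ lam e - zt σ lam' e = ((lam ^ 2 - lam' ^ 2 : ℝ) : ℂ) := by
    apply Complex.ext <;> simp [zt, ← Complex.ofReal_pow]
  rw [this, Complex.norm_real, Real.norm_eq_abs]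

lemma zt_hasDerivAt (σ lam e : ℝ) : HasDerivAt (fun x => zt σ x e) ((2 * lam : ℝ) : ℂ) lam := by
  have h : (fun x : ℝ => zt σ x e) = fun x : ℝ => ((x ^ 2 : ℝ) : ℂ) + ((σ * e : ℝ) : ℂ) * Complex.I := by
    funext x
    apply Complex.ext <;> simp [zt, ← Complex.ofReal_pow]
  rw [h]
  have := (hasDerivAt_pow 2 lam).ofReal_comp.add_const (((σ * e : ℝ) : ℂ) * Complex.I)
  simpa using this

/-- The boundary value of `E q` at `lam²`, meaningful where the limit exists (see `BV.tendsto`). -/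
def Lim (σ : ℝ) (E : ℕ → ℂ → 𝓑) (q : ℕ) (lam : ℝ) : 𝓑 :=
  limUnder (𝓝[>] (0 : ℝ)) fun e => E q (zt σ lam e)

variable {σ ν : ℝ} {m : ℕ} {E : ℕ → ℂ → 𝓑}

lemma rpow_small {ν c : ℝ} (hν : 0 < ν) (A : ℝ) {κ : ℝ} (hκ : 0 < κ) :
    ∃ r : ℝ, 0 < r ∧ ∀ x : ℝ, 0 ≤ x → x < r → A * (x / c) ^ ν < κ := by
  have hcont : Tendsto (fun x : ℝ => A * (x / c) ^ ν) (𝓝 0) (𝓝 (A * (0 / c) ^ ν)) := by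
    refine ContinuousAt.tendsto (f := fun x : ℝ => A * (x / c) ^ ν) ?_
    refine continuousAt_const.mul ?_
    exact (continuousAt_id.div_const c).rpow_const (Or.inr hν.le)
  rw [zero_div, zero_rpow hν.ne', mul_zero] at hcont
  obtain ⟨r, hr, hr'⟩ := Metric.eventually_nhds_iff.1 (hcont.eventually (gt_mem_nhds hκ))
  exact ⟨r, hr, fun x hx hxr => hr' (by rwa [Real.dist_eq, sub_zero, abs_of_nonneg hx])⟩

/-- The limit defining `Lim` exists, by the Cauchy criterion and the Hölder estimate. -/
lemma BV.tendsto (h : BV σ ν m E) (hσ : |σ| = 1) (hν : 0 < ν) {q : ℕ} (h1 : 1 ≤ q)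
    (h2 : q ≤ m + 1) {lam : ℝ} (hlam : 0 < lam) :
    Tendsto (fun e => E q (zt σ lam e)) (𝓝[>] (0 : ℝ)) (𝓝 (Lim σ E q lam)) := by
  obtain ⟨e, he, C, hC, H⟩ := h.bound lam hlam
  apply tendsto_nhds_limUnder
  rw [← cauchy_map_iff_exists_tendsto, Metric.cauchy_iff]
  refine ⟨inferInstance, fun κ hκ => ?_⟩
  obtain ⟨r, hr, hr'⟩ := rpow_small (c := lam) hν (C / lam ^ q) hκ
  have hmem : Ioc 0 (min e (r / 2)) ∈ 𝓝[>] (0 : ℝ) := Ioc_mem_nhdsGT (by positivity)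
  refine ⟨_, image_mem_map hmem, ?_⟩
  rintro _ ⟨x, hx, rfl⟩ _ ⟨y, hy, rfl⟩
  have hx' := (le_min_iff.1 hx.2)
  have hy' := (le_min_iff.1 hy.2)
  have h3 := (H q h1 h2 lam le_rfl _ (zt_mem hσ hlam.le le_rfl hx.1 hx'.1)).2 _
    (zt_mem hσ hlam.le le_rfl hy.1 hy'.1)
  rw [zt_sub _ _ _ _ hσ] at h3
  rw [dist_eq_norm]
  have h4 := hr' |x - y| (abs_nonneg _) (by
    rw [abs_lt]; constructor <;> linarith [hx.1, hy.1, hx'.2, hy'.2])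
  refine lt_of_le_of_lt ?_ h4
  rw [div_mul_eq_mul_div, le_div_iff₀ (by positivity), mul_comm]
  exact h3

/-- The estimates for the boundary values. -/
lemma BV.lim_bound (h : BV σ ν m E) (hσ : |σ| = 1) (hν : 0 < ν) {l0 : ℝ} (hl0 : 0 < l0) :
    ∃ e : ℝ, 0 < e ∧ ∃ C : ℝ, 0 < C ∧ ∀ q, 1 ≤ q → q ≤ m + 1 →
      ∀ l, l0 ≤ l → l ^ q * ‖Lim σ E q l‖ ≤ C ∧
        (∀ l', l ≤ l' → l ^ q * ‖Lim σ E q l' - Lim σ E q l‖ ≤ C * (|l' ^ 2 - l ^ 2| / l) ^ ν) ∧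
        ∀ x, 0 < x → x ≤ e → l ^ q * ‖E q (zt σ l x) - Lim σ E q l‖ ≤ C * (x / l) ^ ν := by
  obtain ⟨e, he, C, hC, H⟩ := h.bound l0 hl0
  have hev : ∀ᶠ x in 𝓝[>] (0:ℝ), 0 < x ∧ x ≤ e := by
    filter_upwards [Ioc_mem_nhdsGT he] with x hx using hx
  refine ⟨e, he, C, hC, fun q h1 h2 l hl => ?_⟩
  have hlp : 0 < l := hl0.trans_le hl
  have ht := h.tendsto hσ hν h1 h2 hlp
  refine ⟨?_, fun l' hl' => ?_, fun x hx hxe => ?_⟩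
  · refine le_of_tendsto (ht.norm.const_mul (l ^ q)) ?_
    filter_upwards [hev] with x hx
    exact (H q h1 h2 l hl _ (zt_mem hσ hlp.le le_rfl hx.1 hx.2)).1
  · have ht' := h.tendsto hσ hν h1 h2 (hlp.trans_le hl')
    refine le_of_tendsto ((ht'.sub ht).norm.const_mul (l ^ q)) ?_
    filter_upwards [hev] with x hx
    have := (H q h1 h2 l hl _ (zt_mem hσ hlp.le hl' hx.1 hx.2)).2 _
      (zt_mem hσ hlp.le le_rfl hx.1 hx.2)
    rwa [zt_sub'] at this
  · have hr : Tendsto (fun y : ℝ => C * (|x - y| / l) ^ ν) (𝓝[>] (0:ℝ))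
        (𝓝 (C * (|x - 0| / l) ^ ν)) := by
      refine Tendsto.mono_left ?_ nhdsWithin_le_nhds
      refine ContinuousAt.tendsto (f := fun y : ℝ => C * (|x - y| / l) ^ ν) ?_
      refine continuousAt_const.mul (ContinuousAt.rpow_const ?_ (Or.inr hν.le))
      fun_prop
    rw [sub_zero, abs_of_pos hx] at hr
    refine le_of_tendsto_of_tendsto ((tendsto_const_nhds.sub ht).norm.const_mul (l ^ q)) hr ?_
    filter_upwards [hev] with y hy
    have := (H q h1 h2 l hl _ (zt_mem hσ hlp.le le_rfl hx hxe)).2 _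
      (zt_mem hσ hlp.le le_rfl hy.1 hy.2)
    rwa [zt_sub _ _ _ _ hσ] at this

/-- Differentiation commutes with the limit `e → 0`, the convergence being locally uniform. -/
lemma BV.hasDerivAt (h : BV σ ν m E) (hσ : |σ| = 1) (hν : 0 < ν) {q : ℕ} (h1 : 1 ≤ q)
    (h2 : q ≤ m) {lam : ℝ} (hlam : 0 < lam) :
    HasDerivAt (Lim σ E q) ((2 * lam * q) • Lim σ E (q + 1) lam) lam := by
  obtain ⟨e, he, C, hC, H⟩ := h.lim_bound hσ hν (half_pos hlam)
  have hpos : ∀ x ∈ Ioo (lam / 2) (2 * lam), 0 < x := fun x hx => (half_pos hlam).trans hx.1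
  refine hasDerivAt_of_tendstoUniformlyOn (l := 𝓝[>] (0:ℝ)) (s := Ioo (lam / 2) (2 * lam))
    (f := fun e x => E q (zt σ x e)) (f' := fun e x => (2 * x * q) • E (q + 1) (zt σ x e))
    (g' := fun x => (2 * x * q) • Lim σ E (q + 1) x) isOpen_Ioo ?_ ?_ ?_
    ⟨by linarith, by linarith⟩
  · rw [Metric.tendstoUniformlyOn_iff]
    intro κ hκ
    obtain ⟨r, hr, hr'⟩ := rpow_small (c := lam / 2) hν
      (2 * (2 * lam) * q * (C / (lam / 2) ^ (q + 1))) hκ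
    have hmem : Ioo 0 (min e r) ∈ 𝓝[>] (0 : ℝ) := Ioo_mem_nhdsGT (by positivity)
    filter_upwards [hmem] with y hy x hx
    have hxp := hpos x hx
    have hy' := lt_min_iff.1 hy.2
    refine lt_of_le_of_lt ?_ (hr' y hy.1.le hy'.2)
    have h3 := (H (q + 1) (by omega) (by omega) x hx.1.le).2.2 y hy.1 hy'.1.le
    have h4 : ‖E (q + 1) (zt σ x y) - Lim σ E (q + 1) x‖ ≤
        C / (lam / 2) ^ (q + 1) * (y / (lam / 2)) ^ ν := by
      have hy0 := hy.1.le
      have hx1 := hx.1.le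
      rw [div_mul_eq_mul_div, le_div_iff₀ (by positivity), mul_comm]
      calc _ ≤ x ^ (q + 1) * ‖E (q + 1) (zt σ x y) - Lim σ E (q + 1) x‖ := by gcongr
        _ ≤ _ := h3
        _ ≤ _ := by gcongr
    rw [dist_comm, dist_eq_norm, ← smul_sub, norm_smul, Real.norm_eq_abs, abs_of_nonneg (by positivity),
      mul_assoc (2 * (2 * lam) * (q:ℝ))]
    have := hx.2.le
    gcongr
  · filter_upwards [self_mem_nhdsWithin] with y hy x hx
    have him : (zt σ x y).im ≠ 0 :=
      Dom.im_ne (zt_mem hσ (hpos x hx).le le_rfl hy le_rfl)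
    have := HasDerivAt.scomp x (h.deriv q _ him) (zt_hasDerivAt σ x y)
    have e2 : ((2 * x : ℝ) : ℂ) • ((q : ℂ) • E (q + 1) (zt σ x y)) =
        (2 * x * q) • E (q + 1) (zt σ x y) := by
      rw [smul_smul, ← Complex.ofReal_natCast, ← Complex.ofReal_mul, ← algebraMap_smul ℂ (2 * x * (q:ℝ))]
      rfl
    rw [e2] at this
    exact this
  · intro x hx
    exact h.tendsto hσ hν h1 (by omega) (hpos x hx)

/-- Linear combinations of the functions `lam ^ r • Lim σ E q lam` with `r ≤ q` and
`1 ≤ q ≤ j + 1`. -/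
inductive Nice (σ : ℝ) (E : ℕ → ℂ → 𝓑) (j : ℕ) : (ℝ → 𝓑) → Prop
  | mono (c : ℝ) (r q : ℕ) (hr : r ≤ q) (h1 : 1 ≤ q) (hq : q ≤ j + 1) :
      Nice σ E j fun x => (c * x ^ r) • Lim σ E q x
  | add (F G : ℝ → 𝓑) (hF : Nice σ E j F) (hG : Nice σ E j G) : Nice σ E j fun x => F x + G x

lemma Nice.hasDerivAt (h : BV σ ν m E) (hσ : |σ| = 1) (hν : 0 < ν) {j : ℕ} (hj : j < m)
    {G : ℝ → 𝓑} (hG : Nice σ E j G) :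
    ∃ G', Nice σ E (j + 1) G' ∧ ∀ x : ℝ, 0 < x → HasDerivAt G (G' x) x := by
  induction hG with
  | mono c r q hr h1 hq =>
    refine ⟨_, .add _ _ (.mono (c * r) (r - 1) q (by omega) h1 (by omega))
      (.mono (c * (2 * q)) (r + 1) (q + 1) (by omega) (by omega) (by omega)), fun x hx => ?_⟩
    have d1 := h.hasDerivAt hσ hν h1 (by omega) hx
    have d2 : HasDerivAt (fun x : ℝ => c * x ^ r) (c * (r * x ^ (r - 1))) x :=
      (hasDerivAt_pow r x).const_mul c
    have d3 := d2.fun_smul d1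
    convert d3 using 1
    rw [add_comm, smul_smul]
    congr 2 <;> ring
  | add F G _ _ hF hG =>
    obtain ⟨F', h1, h2⟩ := hF
    obtain ⟨G', h3, h4⟩ := hG
    exact ⟨_, .add _ _ h1 h3, fun x hx => (h2 x hx).fun_add (h4 x hx)⟩

lemma pow_ratio {l0 x X C : ℝ} {r q : ℕ} (hl0 : 0 < l0) (hx : l0 ≤ x) (hr : r ≤ q)
    (h : x ^ q * X ≤ C) (hX : 0 ≤ X) : x ^ r * X ≤ C / l0 ^ (q - r) := by
  have hxp := hl0.trans_le hx
  rw [le_div_iff₀ (by positivity)]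
  calc _ ≤ x ^ r * X * x ^ (q - r) := by gcongr
    _ = x ^ q * X := by rw [← pow_mul_pow_sub x hr]; ring
    _ ≤ C := h

/-- The powers `lam ^ r` with `r ≤ q` are compensated by the decay `O(lam ^ (-q))` of `Lim σ E q`.
Increments are taken of length at most one; longer ones are trivial by the uniform bound. -/
lemma Nice.bound (h : BV σ ν m E) (hσ : |σ| = 1) (hν : 0 < ν) (hν1 : ν ≤ 1) {j : ℕ} (hj : j ≤ m)
    {G : ℝ → 𝓑} (hG : Nice σ E j G) {l0 : ℝ} (hl0 : 0 < l0) :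
    ∃ C : ℝ, 0 < C ∧ ∀ x, l0 ≤ x → ‖G x‖ ≤ C ∧ ∀ y, x ≤ y → y ≤ x + 1 →
      ‖G y - G x‖ ≤ C * (y - x) ^ ν := by
  induction hG with
  | mono c r q hr h1 hq =>
    obtain ⟨e, he, C, hC, H⟩ := h.lim_bound hσ hν hl0
    have H := H q h1 (by omega)
    refine ⟨|c| * (C / l0 ^ (q - r)) + |c| * (C * (2 + 1 / l0) ^ ν / l0 ^ (q - r)) +
      |c| * (r * (C / l0 ^ (q - (r - 1)))) + 1, by positivity, fun x hx => ?_⟩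
    have hxp : 0 < x := hl0.trans_le hx
    have t1 : 0 ≤ |c| * (C / l0 ^ (q - r)) := by positivity
    have t2 : 0 ≤ |c| * (C * (2 + 1 / l0) ^ ν / l0 ^ (q - r)) := by positivity
    have t3 : 0 ≤ |c| * (r * (C / l0 ^ (q - (r - 1)))) := by positivity
    constructor
    · rw [norm_smul, Real.norm_eq_abs, abs_mul, abs_of_pos (pow_pos hxp r), mul_assoc]
      have := mul_le_mul_of_nonneg_left
        (pow_ratio hl0 hx hr (H x hx).1 (norm_nonneg _)) (abs_nonneg c)
      linarith
    · intro y hxy hy1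
      have hyl := hx.trans hxy
      have hyp : 0 < y := hl0.trans_le hyl
      have hh : 0 ≤ y - x := by linarith
      have e1 : (c * y ^ r) • Lim σ E q y - (c * x ^ r) • Lim σ E q x =
          (c * x ^ r) • (Lim σ E q y - Lim σ E q x) + (c * (y ^ r - x ^ r)) • Lim σ E q y := by
        rw [smul_sub, mul_sub, sub_smul]; abel
      have hsq : |y ^ 2 - x ^ 2| / x ≤ (2 + 1 / l0) * (y - x) := by
        rw [abs_of_nonneg (by nlinarith), div_le_iff₀ hxp]
        have : 1 ≤ 1 / l0 * x := by rw [div_mul_eq_mul_div, one_mul, le_div_iff₀ hl0]; linarith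
        nlinarith
      have b1 : x ^ r * ‖Lim σ E q y - Lim σ E q x‖ ≤
          C * (2 + 1 / l0) ^ ν / l0 ^ (q - r) * (y - x) ^ ν := by
        have : x ^ q * ‖Lim σ E q y - Lim σ E q x‖ ≤ C * ((2 + 1 / l0) ^ ν * (y - x) ^ ν) := by
          refine ((H x hx).2.1 y hxy).trans ?_
          rw [← mul_rpow (by positivity) hh]
          gcongr
        have := pow_ratio hl0 hx hr this (norm_nonneg _)
        refine this.trans (le_of_eq ?_)
        ring
      have hpw : y - x ≤ (y - x) ^ ν := by
        rcases eq_or_lt_of_le hh with h0 | h0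
        · rw [← h0, zero_rpow hν.ne']
        · conv_lhs => rw [← rpow_one (y - x)]
          exact rpow_le_rpow_of_exponent_ge h0 (by linarith) hν1
      have b2 : |y ^ r - x ^ r| * ‖Lim σ E q y‖ ≤ r * (C / l0 ^ (q - (r - 1))) * (y - x) ^ ν := by
        have h5 := abs_pow_sub_pow_le y x r
        rw [abs_of_nonneg hh, abs_of_pos hyp, abs_of_pos hxp, max_eq_left hxy] at h5
        have h6 := pow_ratio (r := r - 1) hl0 hyl (by omega) (H y hyl).1 (norm_nonneg _)
        calc _ ≤ (y - x) * r * y ^ (r - 1) * ‖Lim σ E q y‖ := by gcongr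
          _ = (r * (y ^ (r - 1) * ‖Lim σ E q y‖)) * (y - x) := by ring
          _ ≤ _ := by gcongr
      rw [e1]
      refine (norm_add_le _ _).trans ?_
      rw [norm_smul, norm_smul, Real.norm_eq_abs, Real.norm_eq_abs, abs_mul, abs_mul,
        abs_of_pos (pow_pos hxp r), mul_assoc, mul_assoc]
      have b1' := mul_le_mul_of_nonneg_left b1 (abs_nonneg c)
      have b2' := mul_le_mul_of_nonneg_left b2 (abs_nonneg c)
      have hH : 0 ≤ (y - x) ^ ν := by positivity
      have t1' := mul_nonneg t1 hH
      linarith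
  | add F G _ _ hF hG =>
    obtain ⟨C, hC, hF⟩ := hF
    obtain ⟨D, hD, hG⟩ := hG
    refine ⟨C + D, by positivity, fun x hx => ⟨?_, fun y h1 h2 => ?_⟩⟩
    · exact (norm_add_le _ _).trans (add_le_add (hF x hx).1 (hG x hx).1)
    · rw [add_sub_add_comm, add_mul]
      exact (norm_add_le _ _).trans (add_le_add ((hF x hx).2 y h1 h2) ((hG x hx).2 y h1 h2))

lemma Nice.continuousOn (h : BV σ ν m E) (hσ : |σ| = 1) (hν : 0 < ν) (hν1 : ν ≤ 1) {j : ℕ}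
    (hj : j ≤ m) {G : ℝ → 𝓑} (hG : Nice σ E j G) : ContinuousOn G (Ioi 0) := by
  intro t ht
  refine ContinuousAt.continuousWithinAt ?_
  have ht : 0 < t := ht
  obtain ⟨C, hC, H⟩ := hG.bound h hσ hν hν1 hj (half_pos ht)
  rw [Metric.continuousAt_iff]
  intro κ hκ
  obtain ⟨r, hr, hr'⟩ := rpow_small (c := 1) hν C hκ
  refine ⟨min r (min 1 (t / 2)), by positivity, fun {x} hx => ?_⟩
  rw [Real.dist_eq, lt_min_iff, lt_min_iff] at hx
  obtain ⟨x1, x2, x3⟩ := hx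
  have x2' := abs_lt.1 x2
  have x3' := abs_lt.1 x3
  have h5 := hr' |x - t| (abs_nonneg _) x1
  rw [div_one] at h5
  refine lt_of_le_of_lt ?_ h5
  rw [dist_eq_norm]
  rcases le_total t x with hx | hx
  · rw [abs_of_nonneg (by linarith)]
    exact (H t (by linarith)).2 x hx (by linarith)
  · rw [abs_sub_comm, abs_of_nonneg (by linarith), norm_sub_rev]
    exact (H x (by linarith)).2 t hx (by linarith)

/-- Each derivative raises the admissible power `q` by one, up to `m + 1`. -/
lemma Nice.iterated (h : BV σ ν m E) (hσ : |σ| = 1) (hν : 0 < ν) (hν1 : ν ≤ 1) (i : ℕ) :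
    ∀ (j : ℕ) (G : ℝ → 𝓑), j + i ≤ m → Nice σ E j G →
      ContDiffOn ℝ i G (Ioi 0) ∧ ∃ G', Nice σ E (j + i) G' ∧
        EqOn (iteratedDerivWithin i G (Ioi 0)) G' (Ioi 0) := by
  induction i with
  | zero =>
    intro j G hj hG
    refine ⟨?_, G, hG, fun x _ => by rw [iteratedDerivWithin_zero]⟩
    rw [Nat.cast_zero, contDiffOn_zero]
    exact hG.continuousOn h hσ hν hν1 hj
  | succ i ih =>
    intro j G hj hG
    obtain ⟨G1, hG1, hd⟩ := hG.hasDerivAt h hσ hν (by omega)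
    have hEq : EqOn (derivWithin G (Ioi 0)) G1 (Ioi 0) := fun x hx =>
      (hd x hx).hasDerivWithinAt.derivWithin (isOpen_Ioi.uniqueDiffWithinAt hx)
    obtain ⟨hc, G', hG', hE⟩ := ih (j + 1) G1 (by omega) hG1
    refine ⟨?_, G', by rwa [show j + (i + 1) = j + 1 + i by ring], fun x hx => ?_⟩
    · rw [Nat.cast_add, Nat.cast_one, contDiffOn_succ_iff_derivWithin isOpen_Ioi.uniqueDiffOn]
      refine ⟨fun x hx => (hd x hx).differentiableAt.differentiableWithinAt, fun hi => ?_,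
        hc.congr hEq⟩
      exact absurd hi (by exact_mod_cast WithTop.natCast_ne_top i)
    · rw [iteratedDerivWithin_succ', iteratedDerivWithin_congr hEq hx]
      exact hE hx

/-- Regularity of `lam • Lim σ E 1 lam`. -/
lemma BV.regularity (h : BV σ ν m E) (hσ : |σ| = 1) (hν : 0 < ν) (hν1 : ν ≤ 1) {μ : ℝ}
    (hμ : 0 ≤ μ) (hμν : μ ≤ ν) {F : ℝ → 𝓑} (hF : ∀ x : ℝ, 0 < x → F x = x • Lim σ E 1 x) :
    ContDiffOn ℝ m F (Ioi 0) ∧ ∀ l0 : ℝ, 0 < l0 → ∃ C : ℝ, 0 < C ∧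
      (∀ j : ℕ, j ≤ m → ∀ x : ℝ, l0 ≤ x → ‖iteratedDerivWithin j F (Ioi 0) x‖ ≤ C) ∧
      (∀ x y : ℝ, l0 ≤ x → x < y →
        ‖iteratedDerivWithin m F (Ioi 0) y - iteratedDerivWithin m F (Ioi 0) x‖ ≤
          C * (y - x) ^ μ) := by
  have hN : Nice σ E 0 fun x => (1 * x ^ 1) • Lim σ E 1 x := .mono 1 1 1 le_rfl le_rfl le_rfl
  have hE : EqOn F (fun x => (1 * x ^ 1) • Lim σ E 1 x) (Ioi 0) := fun x hx => by
    simp only [hF x hx, pow_one, one_mul]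
  have hit := fun i (hi : i ≤ m) => Nice.iterated h hσ hν hν1 i 0 _ (by omega) hN
  refine ⟨(hit m le_rfl).1.congr hE, fun l0 hl0 => ?_⟩
  have hb : ∀ i, i ≤ m → ∃ C : ℝ, 0 < C ∧ ∀ x, l0 ≤ x → ‖iteratedDerivWithin i F (Ioi 0) x‖ ≤ C ∧
      ∀ y, x ≤ y → y ≤ x + 1 →
        ‖iteratedDerivWithin i F (Ioi 0) y - iteratedDerivWithin i F (Ioi 0) x‖ ≤
          C * (y - x) ^ ν := by
    intro i hi
    obtain ⟨-, G, hG, hEG⟩ := hit i hi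
    obtain ⟨C, hC, H⟩ := hG.bound h hσ hν hν1 (by omega) hl0
    have hEq : ∀ x, l0 ≤ x → iteratedDerivWithin i F (Ioi 0) x = G x := fun x hx => by
      have hx0 : x ∈ Ioi (0:ℝ) := hl0.trans_le hx
      rw [iteratedDerivWithin_congr hE hx0, hEG hx0]
    refine ⟨C, hC, fun x hx => ⟨by rw [hEq x hx]; exact (H x hx).1, fun y h1 h2 => ?_⟩⟩
    rw [hEq x hx, hEq y (hx.trans h1)]
    exact (H x hx).2 y h1 h2
  choose! C hC H using hb
  obtain ⟨D, hD⟩ : ∃ D, D = ∑ i ∈ Finset.range (m + 1), C i := ⟨_, rfl⟩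
  have hCD : ∀ i ≤ m, C i ≤ D := fun i hi => by
    rw [hD]
    exact Finset.single_le_sum (f := C)
      (fun j hj => (hC j (by have := Finset.mem_range.1 hj; omega)).le)
      (Finset.mem_range.2 (by omega))
  have hDp : 0 < D := (hC m le_rfl).trans_le (hCD m le_rfl)
  refine ⟨2 * D, by positivity, fun j hj x hx => ?_, fun x y hx hxy => ?_⟩
  · linarith [(H j hj x hx).1, hCD j hj]
  · have hh : 0 < y - x := by linarith
    rcases le_total (y - x) 1 with h1 | h1
    · refine ((H m le_rfl x hx).2 y hxy.le (by linarith)).trans ?_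
      have : (y - x) ^ ν ≤ (y - x) ^ μ := rpow_le_rpow_of_exponent_ge hh h1 hμν
      have := hCD m le_rfl
      gcongr
      linarith
    · have h2 : 1 ≤ (y - x) ^ μ := one_le_rpow h1 hμ
      have h3 := (H m le_rfl x hx).1
      have h4 := (H m le_rfl y (hx.trans hxy.le)).1
      have := hCD m le_rfl
      calc _ ≤ _ := norm_sub_le _ _
        _ ≤ 2 * D * 1 := by linarith
        _ ≤ _ := by gcongr

end Limit

/-! ### Application to the Schrödinger resolvent -/

lemma jb_rpow (x : Euc n) (r : ℝ) : jb x ^ r = Jw 1 (r / 2) x := by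
  unfold jb Jw
  rw [Real.sqrt_eq_rpow, ← Real.rpow_mul (by positivity), one_pow, one_mul]
  congr 1; ring

lemma IsRes.hasDerivAt_weighted {Q : ℂ → Op n} (h : IsRes Q) (A : Op n) (q : ℕ) {z : ℂ}
    (hz : z.im ≠ 0) :
    HasDerivAt (fun w => A * Q w ^ q * A) ((q : ℂ) • (A * Q z ^ (q + 1) * A)) z := by
  have := ((h.hasDerivAt_pow hz q).const_mul A).mul_const A
  simpa only [mul_smul_comm, smul_mul_assoc] using this

/-- The weighted powers of the perturbed resolvent have boundary values. -/
lemma bv_resolvent {V : Euc n → ℝ} {C₀ δ : ℝ} (hV : Pot V C₀ δ) {Q : ℂ → Op n} (hQ : Pert V Q)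
    {σ a b ν : ℝ} {m : ℕ} (hb : 1 / 2 < b) (hb1 : b ≤ 1) (hν : 0 < ν) (hν1 : ν < 1)
    (ha : b + m + ν ≤ a) (hab : a + b ≤ δ) (hσ : |σ| = 1)
    (H : ∀ t : ℝ, 0 < t → ∃ e1 : ℝ, 0 < e1 ∧ ∃ M : ℝ, ∀ z : ℂ, z.re = t → 0 < σ * z.im →
      σ * z.im ≤ e1 → N a a (Q z) ≤ M) :
    BV σ ν m fun q z => W a * Q z ^ q * W a := by
  have hm : (0:ℝ) ≤ m := m.cast_nonneg
  refine ⟨fun q z hz => hQ.res.hasDerivAt_weighted (W a) q hz, fun l0 hl0 => ?_⟩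
  obtain ⟨e, he, he1, hG⟩ := good_base hV hQ hb hb1 (by linarith) hab (by linarith) hν hν1 hl0 hσ H
  have hgood := good_pow hV hQ hl0 (by linarith) hν (m := m) (by linarith)
    (fun k => free_good hb hb1 hl0 hσ he1 hν hν1 k) hG
  choose! C hC hgood using hgood
  obtain ⟨D, hD⟩ : ∃ D, D = ∑ i ∈ Finset.range (m + 1), C i := ⟨_, rfl⟩
  have hCD : ∀ i ≤ m, C i ≤ D := fun i hi => by
    rw [hD]
    exact Finset.single_le_sum (f := C)
      (fun j hj => (hC j (by have := Finset.mem_range.1 hj; omega)).le)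
      (Finset.mem_range.2 (by omega))
  refine ⟨e, he, D, (hC m le_rfl).trans_le (hCD m le_rfl), fun q h1 h2 l hl z hz => ?_⟩
  obtain ⟨k, rfl⟩ : ∃ k, q = k + 1 := ⟨q - 1, by omega⟩
  have hk : k ≤ m := by omega
  have hk' : (k:ℝ) ≤ m := by exact_mod_cast hk
  have hk0 : (0:ℝ) ≤ k := k.cast_nonneg
  have hlp : 0 < l := hl0.trans_le hl
  obtain ⟨g1, g2⟩ := hgood k hk l hl z hz
  refine ⟨?_, fun w hw => ?_⟩
  · refine le_trans ?_ (g1.trans (hCD k hk))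
    have := N_mono (p := b + k) (q := b + k) (p' := a) (q' := a) (by linarith) (by linarith)
      (by linarith) (by linarith) (Q z ^ (k + 1))
    exact mul_le_mul_of_nonneg_left this (by positivity)
  · have hH : 0 ≤ (‖z - w‖ / l) ^ ν := by positivity
    refine le_trans ?_ ((g2 w hw).trans (mul_le_mul_of_nonneg_right (hCD k hk) hH))
    have := N_mono (p := b + k + ν) (q := b + k + ν) (p' := a) (q' := a) (by linarith)
      (by linarith) (by linarith) (by linarith) (Q z ^ (k + 1) - Q w ^ (k + 1))
    refine mul_le_mul_of_nonneg_left (le_trans (le_of_eq ?_) this) (by positivity)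
    unfold N
    rw [mul_sub, sub_mul]

lemma weight_unique {a : ℝ} (ha : 0 ≤ a) {A : Op n}
    (hA : ∀ f : L2 n, (A f : Euc n → ℂ) =ᵐ[volume] fun x => ((jb x ^ (-a) : ℝ) : ℂ) * f x) :
    A = W a := by
  ext1 f
  apply Lp.ext
  filter_upwards [hA f, mulOp_ae (Jw_bdd (r := -a / 2) (by linarith)) f] with x h1 h2
  rw [h1, jb_rpow]
  exact h2.symm

/-- The regularity statement with the roles of the exponents separated: `a` is the weight of the
conclusion, `b` that of the free estimate, `ν` the Hölder exponent before lowering it to `μ`. -/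
lemma resolvent_regularity_aux {V : Euc n → ℝ} {C₀ δ : ℝ} (hV : Pot V C₀ δ) {Q : ℂ → Op n}
    (hQ : Pert V Q) {a b ν μ σ : ℝ} {m : ℕ} (hb : 1 / 2 < b) (hb1 : b ≤ 1) (hν : 0 < ν)
    (hν1 : ν < 1) (ha : b + m + ν ≤ a) (hab : a + b ≤ δ) (hσ : |σ| = 1) (hμ : 0 ≤ μ) (hμν : μ ≤ ν)
    {R : ℝ → Op n} (hR : ∀ lam : ℝ, 0 < lam →
      Tendsto (fun e => W a * Q (zt σ lam e) * W a) (𝓝[>] (0:ℝ)) (𝓝 (R lam))) :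
    ContDiffOn ℝ (m : ℕ∞) (fun lam : ℝ => (lam : ℂ) • R lam) (Set.Ioi (0 : ℝ)) ∧
      ∀ lam₀ : ℝ, 0 < lam₀ → ∃ C : ℝ, 0 < C ∧
        (∀ j : ℕ, j ≤ m → ∀ lam : ℝ, lam₀ ≤ lam →
          ‖iteratedDerivWithin j (fun lam : ℝ => (lam : ℂ) • R lam)
              (Set.Ioi (0 : ℝ)) lam‖ ≤ C) ∧
        (∀ lam₁ lam₂ : ℝ, lam₀ ≤ lam₁ → lam₁ < lam₂ →
          ‖iteratedDerivWithin m (fun lam : ℝ => (lam : ℂ) • R lam)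
              (Set.Ioi (0 : ℝ)) lam₂ -
            iteratedDerivWithin m (fun lam : ℝ => (lam : ℂ) • R lam)
              (Set.Ioi (0 : ℝ)) lam₁‖ ≤ C * (lam₂ - lam₁) ^ μ) := by
  have hσσ : σ * σ = 1 := by rw [← abs_mul_abs_self, hσ]; ring
  have H : ∀ t : ℝ, 0 < t → ∃ e1 : ℝ, 0 < e1 ∧ ∃ M : ℝ, ∀ z : ℂ, z.re = t → 0 < σ * z.im →
      σ * z.im ≤ e1 → N a a (Q z) ≤ M := by
    intro t ht
    have h1 := (hR (√t) (Real.sqrt_pos.2 ht)).norm.eventually (gt_mem_nhds (lt_add_one ‖R (√t)‖))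
    obtain ⟨e1, he1, h2⟩ := (mem_nhdsGT_iff_exists_Ioc_subset).1 h1
    refine ⟨e1, he1, ‖R (√t)‖ + 1, fun z hz h3 h4 => ?_⟩
    have hzz : z = zt σ (√t) (σ * z.im) := by
      apply Complex.ext
      · simp only [zt]; rw [Real.sq_sqrt ht.le, hz]
      · simp only [zt]; rw [← mul_assoc, hσσ, one_mul]
    have h5 := h2 ⟨h3, h4⟩
    simp only [Set.mem_ofPred_eq, ← hzz] at h5
    exact h5.le
  have hBV := bv_resolvent hV hQ hb hb1 hν hν1 ha hab hσ H
  have hF : ∀ x : ℝ, 0 < x → (x : ℂ) • R x =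
      x • Lim σ (fun q z => W a * Q z ^ q * W a) 1 x := by
    intro x hx
    have h1 := hBV.tendsto hσ hν le_rfl (by omega) hx
    simp only [pow_one] at h1
    rw [tendsto_nhds_unique h1 (hR x hx)]
    rfl
  have := hBV.regularity hσ hν hν1.le hμ hμν hF
  exact_mod_cast this

end Proof

/-- **Lemma 3.5.** For `0 ≤ s ≤ n/2`, sufficiently small `ε > 0`,
`m = ⌊s⌋` and `μ = s − m`, the weighted boundary values of the resolvent
`ℛ_s^±(λ) = λ ⟨x⟩^{-1/2-s-ε} R^±(λ) ⟨x⟩^{-1/2-s-ε}` (obtained by the limiting absorption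
principle as the norm limits of `λ ⟨x⟩^{-1/2-s-ε} (G − λ² ± iε₀)⁻¹ ⟨x⟩^{-1/2-s-ε}`)
form a `C^m` operator-valued function on `(0,∞)` whose `j`-th derivatives (`j ≤ m`) are
bounded on `[λ₀,∞)` and whose `m`-th derivative is Hölder continuous of order `μ`. -/
theorem resolvent_regularity
    (n : ℕ) (hn : 4 ≤ n) (V : Euc n → ℝ) (hVmeas : Measurable V)
    (C₀ δ : ℝ) (hC₀ : 0 < C₀) (hδ : ((n : ℝ) + 2) / 2 < δ)
    (hV : ∀ x, |V x| ≤ C₀ * jb x ^ (-δ))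
    (T : L2 n →ₗ.[ℂ] L2 n) (hT : IsSchrodingerOp V T)
    (fc : (ℝ → ℂ) → (L2 n →L[ℂ] L2 n)) (hfc : IsBorelFunctionalCalculus T fc)
    (s : ℝ) (hs0 : 0 ≤ s) (hs1 : s ≤ (n : ℝ) / 2) :
    ∃ ε₀ : ℝ, 0 < ε₀ ∧ ∀ ε : ℝ, 0 < ε → ε < ε₀ →
      ∀ (m : ℕ) (μ : ℝ), m = Nat.floor s → μ = s - m →
      ∀ sg : ℝ, (sg = 1 ∨ sg = -1) →
      ∀ W : L2 n →L[ℂ] L2 n,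
        (∀ f : L2 n, (W f : Euc n → ℂ) =ᵐ[volume]
          fun x => ((jb x ^ (-(1 / 2 : ℝ) - s - ε) : ℝ) : ℂ) * f x) →
      ∀ R : ℝ → (L2 n →L[ℂ] L2 n),
        (∀ lam : ℝ, 0 < lam →
          Tendsto (fun e : ℝ =>
              W.comp ((fc (fun x : ℝ =>
                ((x : ℂ) - ((lam ^ 2 : ℝ) : ℂ) + sg * e * Complex.I)⁻¹)).comp W))
            (𝓝[>] (0 : ℝ)) (𝓝 (R lam))) →
      (ContDiffOn ℝ (m : ℕ∞) (fun lam : ℝ => (lam : ℂ) • R lam) (Set.Ioi (0 : ℝ)) ∧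
        ∀ lam₀ : ℝ, 0 < lam₀ → ∃ C : ℝ, 0 < C ∧
          (∀ j : ℕ, j ≤ m → ∀ lam : ℝ, lam₀ ≤ lam →
            ‖iteratedDerivWithin j (fun lam : ℝ => (lam : ℂ) • R lam)
                (Set.Ioi (0 : ℝ)) lam‖ ≤ C) ∧
          (∀ lam₁ lam₂ : ℝ, lam₀ ≤ lam₁ → lam₁ < lam₂ →
            ‖iteratedDerivWithin m (fun lam : ℝ => (lam : ℂ) • R lam)
                (Set.Ioi (0 : ℝ)) lam₂ -
              iteratedDerivWithin m (fun lam : ℝ => (lam : ℂ) • R lam)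
                (Set.Ioi (0 : ℝ)) lam₁‖ ≤ C * (lam₂ - lam₁) ^ μ)) := by
  have hεδ : 0 < δ - 1 - (n : ℝ) / 2 := by linarith
  have hfl : 0 < 1 - (s - (Nat.floor s : ℝ)) := by linarith [Nat.lt_floor_add_one s]
  -- The three bounds on `ε` give `b = 1/2 + ε/4 ≤ 1`, `ν = μ + ε/2 < 1` and `a + b ≤ δ`,
  -- where `a = 1/2 + s + ε` is the given weight.
  refine ⟨min 1 (min (1 - (s - (Nat.floor s : ℝ))) ((δ - 1 - (n : ℝ) / 2) / 2)), by positivity, ?_⟩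
  intro ε hε hεε m μ hm hμ sg hsg A hA R hR
  rw [lt_min_iff, lt_min_iff] at hεε
  obtain ⟨e1, e2, e3⟩ := hεε
  rw [← hm, ← hμ] at e2
  have hμ0 : 0 ≤ μ := by rw [hμ, hm]; linarith [Nat.floor_le hs0]
  have hn0 : (0:ℝ) ≤ n := n.cast_nonneg
  have hPot : Pot V C₀ δ := ⟨hVmeas, hC₀, by linarith, fun x => by rw [← jb_rpow]; exact hV x⟩
  have hQ : Pert V (Rv fc) :=
    ⟨isRes_Rv hT hfc, fun z hz => Rv_left hPot.bdd hT hfc hz, fun z hz => Rv_right hPot.bdd hT hfc hz⟩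
  have hAW : A = W (1 / 2 + s + ε) := by
    refine weight_unique (by linarith) fun f => ?_
    rw [show -(1 / 2 + s + ε) = -(1 / 2 : ℝ) - s - ε by ring]
    exact hA f
  refine resolvent_regularity_aux hPot hQ (a := 1 / 2 + s + ε) (b := 1 / 2 + ε / 4)
    (ν := μ + ε / 2) (σ := -sg) (by linarith) (by linarith) (by linarith) (by linarith)
    (by linarith) (by linarith) ?_ hμ0 (by linarith) fun lam hlam => ?_
  · rcases hsg with h | h <;> simp [h]
  · refine (hR lam hlam).congr fun e => ?_
    have hz : (fun x : ℝ => ((x : ℂ) - ((lam ^ 2 : ℝ) : ℂ) + sg * e * Complex.I)⁻¹) =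
        fun x : ℝ => ((x : ℂ) - zt (-sg) lam e)⁻¹ := by
      funext x
      congr 1
      apply Complex.ext <;> simp [zt, ← Complex.ofReal_pow]
    rw [hz, ← hAW]
    rfl
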